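/- Let s ∈ ℂ with −1 < Re(s) < 2 and s ∉ {−1/2, 0, 1/2, 1, 3/2}. Then the series below converges and ∑_{n=1}^∞ [σ_{2s−1}(n)/n^{s−1/2}] ( 1/√n + (π/√2)·((−1)^n/sin(πs/2))·Y_{s−1/2}(πn) + (s(1−s)/(2πn^{3/2}))·cot(πs/2) ) = (2Γ(s)cos(πs/2)/(2π)^s) · { (1/2)ζ(s)² + (1/2)ζ(2s) − s ζ(s−1)ζ(s+1) + Γ(1−s)Γ(2s−1)ζ(2s−1)/Γ(s) }. -/

import Mathlib

/-!
The identity comes from evaluating one absolutely convergent double series in two ways. Let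
`p(τ) = (1 + iτ)^{-s} - 1 + isτ` be the second-order Taylor remainder and, for `l, m ≥ 1`,
`g(l, m) = l^{-s} ∫₀^∞ e^{-2πmt} t^{-s} (e^{iπs/2} p(-t/l) - e^{-iπs/2} p(t/l)) dt`.
Since `p(τ) = O(τ²)`, the series `∑ g(l, m)` converges absolutely, locally uniformly in the strip
`-1 < Re s < 2`, and defines a holomorphic function there.

*Summation by rows.* Lipschitz' formula (Poisson summation for `x^{-s} e^{-yx}`) and the functional
equation of `ζ` give `∑_m ∫₀^∞ e^{-2πmt} t^{-s} (e^{iπs/2} e₂(-yt) - e^{-iπs/2} e₂(yt)) dt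
= i (∑_n n^{-s} e^{-ny} - Γ(1-s) y^{s-1} - ζ(s) + y ζ(s-1))` with `e₂(τ) = e^{-iτ} - 1 + iτ`, first
for `Re s < 0`, then in the strip (`tsum_plana`). For `1 < Re s < 2` integrate this against
`e^{-ly} y^{s-1}` and sum over `l`: the sum `∑_{l, n} n^{-s} (n+l)^{-s}` equals
`(ζ(s)² - ζ(2s))/2`, and the total is `-i` times the expression in braces. Analytic continuation
extends this to the whole strip (`tsum_gTerm`).

*Summation along `l m = n`.* Rescaling `t`, the integral depends only on `l m`, and the powers
of `l` and `m` add up to `σ_{2s-1}(n) n^{-s}` (`gTerm_eq_wInt`, `csigma_mul`). On the other hand,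
Poisson's integral for `J_{s-1/2}`, with the segment `[0, 1]` deformed to two vertical rays,
expresses `J_{s-1/2}(x)` through `Γ(1-s)⁻¹ ∫₀^∞ e^{-t} t^{-s} (1 ± it/(2x))^{-s} dt`, continued to
the strip (`bq`, `besselJ_eq`). This function is invariant under `s ↦ 1 - s` (`bq_symm`), so
`Y_{s-1/2}(πn)` is a combination of the same two integrals. The two elementary terms in each summand
of the Bessel series remove the Taylor polynomial of `(1 ± it/(2πn))^{-s}`, which leaves exactly the
integrals `g` (`bracket_eq`). Comparing the two evaluations proves the theorem.
-/

noncomputable section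

/-- The Bessel function of the first kind
`J_ν(x) = ∑_{m=0}^∞ (−1)^m (x/2)^{2m+ν}/(m! Γ(m+1+ν))`, with
`(x/2)^{2m+ν} := exp((2m+ν) log(x/2))`. -/
def besselJ (ν : ℂ) (x : ℝ) : ℂ :=
  ∑' m : ℕ, (-1) ^ m * ((x / 2 : ℝ) : ℂ) ^ (2 * (m : ℂ) + ν) /
    ((Nat.factorial m : ℂ) * Complex.Gamma ((m : ℂ) + 1 + ν))

/-- The Bessel function of the second kind `Y_ν(x)` for `ν ∉ ℤ`. -/
def besselY (ν : ℂ) (x : ℝ) : ℂ :=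
  (besselJ ν x * Complex.cos ((Real.pi : ℂ) * ν) - besselJ (-ν) x) /
    Complex.sin ((Real.pi : ℂ) * ν)

/-- The generalized divisor function `σ_a(n) = ∑_{d ∣ n} d^a`. -/
def csigma (a : ℂ) (n : ℕ) : ℂ := ∑ d ∈ n.divisors, (d : ℂ) ^ a

namespace AtkinsonAux

open Complex Set Filter Topology MeasureTheory

/-! ### Holomorphic parameter integrals, Taylor bounds, and an identity theorem -/

/-- An integral of functions holomorphic in `s` and dominated by one integrable function is
holomorphic. Cauchy's estimate supplies the bound on the derivative needed to differentiate under
the integral sign. -/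
theorem differentiableOn_integral_of_dominated {α : Type*} [MeasurableSpace α] {μ : Measure α}
    {U : Set ℂ} (hU : IsOpen U) {F : ℂ → α → ℂ} {b : α → ℝ}
    (hmeas : ∀ s ∈ U, AEStronglyMeasurable (F s) μ)
    (hb : Integrable b μ)
    (hbound : ∀ᵐ a ∂μ, ∀ s ∈ U, ‖F s a‖ ≤ b a)
    (hdiff : ∀ᵐ a ∂μ, DifferentiableOn ℂ (fun s => F s a) U) :
    DifferentiableOn ℂ (fun s => ∫ a, F s a ∂μ) U := by
  intro s₀ hs₀
  obtain ⟨r, hr, hrU⟩ := Metric.isOpen_iff.1 hU s₀ hs₀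
  have hr2 : 0 < r / 2 := by positivity
  have hsub : ∀ x ∈ Metric.ball s₀ (r / 2), Metric.closedBall x (r / 4) ⊆ U := by
    intro x hx y hy
    apply hrU
    have h1 := Metric.mem_ball.1 hx
    have h2 := Metric.mem_closedBall.1 hy
    have := dist_triangle y x s₀
    exact Metric.mem_ball.2 (by linarith)
  have hinteg : Integrable (F s₀) μ :=
    hb.mono' (hmeas s₀ hs₀) (hbound.mono fun a ha => ha s₀ hs₀)
  have hderiv : ∀ᵐ a ∂μ, ∀ x ∈ Metric.ball s₀ (r / 2),
      HasDerivAt (fun s => F s a) (deriv (fun s => F s a) x) x := by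
    filter_upwards [hdiff] with a ha x hx
    have hxU : x ∈ U := hsub x hx (Metric.mem_closedBall_self (by positivity))
    exact (ha.differentiableAt (hU.mem_nhds hxU)).hasDerivAt
  have hmeas' : AEStronglyMeasurable (fun a => deriv (fun s => F s a) s₀) μ := by
    -- the derivative is the limit of difference quotients along `s₀ + (r/2)/(n+2)`
    have hlim : Tendsto (fun n : ℕ => ((r / 2 / ((n : ℝ) + 2) : ℝ) : ℂ)) atTop (𝓝[≠] 0) := by
      rw [tendsto_nhdsWithin_iff]
      refine ⟨?_, Eventually.of_forall fun n => ?_⟩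
      · have : Tendsto (fun n : ℕ => (r / 2 / ((n : ℝ) + 2) : ℝ)) atTop (𝓝 0) :=
          Tendsto.div_atTop tendsto_const_nhds
            (tendsto_atTop_add_const_right _ _ tendsto_natCast_atTop_atTop)
        exact_mod_cast (continuous_ofReal.tendsto 0).comp this
      · have : (r / 2 / ((n : ℝ) + 2) : ℝ) ≠ 0 := by positivity
        exact ofReal_ne_zero.2 this
    refine aestronglyMeasurable_of_tendsto_ae atTop
      (f := fun (n : ℕ) a => (((r / 2 / ((n : ℝ) + 2) : ℝ) : ℂ))⁻¹ •
        (F (s₀ + ((r / 2 / ((n : ℝ) + 2) : ℝ) : ℂ)) a - F s₀ a)) (fun n => ?_) ?_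
    · refine ((hmeas _ ?_).sub (hmeas s₀ hs₀)).const_smul (((r / 2 / ((n : ℝ) + 2) : ℝ) : ℂ))⁻¹
      apply hrU
      rw [Metric.mem_ball, dist_eq_norm, add_sub_cancel_left, norm_real, Real.norm_eq_abs,
        abs_of_pos (by positivity), div_lt_iff₀ (by positivity)]
      nlinarith [(Nat.cast_nonneg n : (0:ℝ) ≤ n)]
    · filter_upwards [hderiv] with a ha
      exact ((ha s₀ (Metric.mem_ball_self hr2)).tendsto_slope_zero).comp hlim
  refine ((hasDerivAt_integral_of_dominated_loc_of_deriv_le (Metric.ball_mem_nhds s₀ hr2)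
    (bound := fun a => b a / (r / 4)) (F' := fun x a => deriv (fun s => F s a) x)
    ?_ hinteg hmeas' ?_ (hb.div_const _) hderiv).2).differentiableAt.differentiableWithinAt
  · filter_upwards [hU.mem_nhds hs₀] with x hx using hmeas x hx
  · filter_upwards [hbound, hdiff] with a ha hd x hx
    refine norm_deriv_le_of_forall_mem_sphere_norm_le (by positivity) ?_ fun z hz =>
      ha z (hsub x hx (Metric.sphere_subset_closedBall hz))
    exact (hd.mono (hsub x hx)).diffContOnCl_ball (subset_refl _)

theorem norm_le_sq_of_second_deriv {f f' f'' : ℝ → ℂ} {B : ℝ}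
    (h0 : f 0 = 0) (h0' : f' 0 = 0)
    (hf : ∀ x, HasDerivAt f (f' x) x) (hf' : ∀ x, HasDerivAt f' (f'' x) x)
    (hB : ∀ x, ‖f'' x‖ ≤ B) (x : ℝ) : ‖f x‖ ≤ B * x ^ 2 := by
  have h1 : ∀ y, ‖f' y‖ ≤ B * |y| := fun y => by
    have := Convex.norm_image_sub_le_of_norm_hasDerivWithin_le (s := univ) (f := f') (f' := f'')
      (x := 0) (y := y) (C := B)
      (fun z _ => (hf' z).hasDerivWithinAt) (fun z _ => hB z) convex_univ (mem_univ _) (mem_univ _)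
    simpa [h0'] using this
  have hBn : 0 ≤ B := (norm_nonneg _).trans (hB 0)
  have := Convex.norm_image_sub_le_of_norm_hasDerivWithin_le (s := Icc (-|x|) |x|) (f := f)
    (f' := f') (x := 0) (y := x) (C := B * |x|)
    (fun z _ => (hf z).hasDerivWithinAt)
    (fun z hz => (h1 z).trans (mul_le_mul_of_nonneg_left (abs_le.2 hz) hBn)) (convex_Icc _ _)
    (by simp) ⟨neg_abs_le x, le_abs_self x⟩
  rw [h0, sub_zero, sub_zero, Real.norm_eq_abs, mul_assoc, ← sq, sq_abs] at this
  exact this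

/-- Identity theorem in the strip `-1 < Re s < 2` with a set `E` of real points removed: agreement
on a substrip `c < Re s < d` propagates. The two open halves `Im s ≷ 0` are convex, so no topology
of the punctured strip is needed; real points are reached by continuity. -/
theorem eq_on_strip {f g : ℂ → ℂ} {E : Set ℂ} (hE : ∀ z ∈ E, z.im = 0) {c d : ℝ}
    (hc : -1 ≤ c) (hcd : c < d) (hd : d ≤ 2)
    (hf : ∀ s : ℂ, -1 < s.re → s.re < 2 → s ∉ E → DifferentiableAt ℂ f s)
    (hg : ∀ s : ℂ, -1 < s.re → s.re < 2 → s ∉ E → DifferentiableAt ℂ g s)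
    (h : ∀ s : ℂ, c < s.re → s.re < d → s ∉ E → f s = g s)
    (s : ℂ) (h1 : -1 < s.re) (h2 : s.re < 2) (hs : s ∉ E) : f s = g s := by
  have hre : Continuous re := continuous_re
  have him : Continuous im := continuous_im
  have key : ∀ e : ℝ, e ≠ 0 → ∀ z : ℂ, -1 < z.re → z.re < 2 → 0 < e * z.im → f z = g z := by
    intro e he z hz1 hz2 hz3
    set V : Set ℂ := {z | -1 < z.re ∧ z.re < 2 ∧ 0 < e * z.im} with hV
    have hVo : IsOpen V := (isOpen_lt continuous_const hre).inter
      ((isOpen_lt hre continuous_const).inter (isOpen_lt continuous_const (continuous_const.mul him)))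
    have hVE : ∀ w ∈ V, w ∉ E := fun w hw hwE => by
      have := hw.2.2
      rw [hE w hwE, mul_zero] at this
      exact lt_irrefl _ this
    have hVc : Convex ℝ V := by
      have h1 : Convex ℝ {z : ℂ | -1 < z.re} := convex_halfSpace_gt (f := re) ⟨by simp, by simp⟩ _
      have h2 : Convex ℝ {z : ℂ | z.re < 2} := convex_halfSpace_lt (f := re) ⟨by simp, by simp⟩ _
      have h3 : Convex ℝ {z : ℂ | 0 < e * z.im} :=
        convex_halfSpace_gt (f := fun z : ℂ => e * z.im)
          ⟨by intros; simp [mul_add], by intros; simp [mul_left_comm]⟩ _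
      exact h1.inter (h2.inter h3)
    have hfa : AnalyticOnNhd ℂ f V := DifferentiableOn.analyticOnNhd
      (fun w hw => (hf w hw.1 hw.2.1 (hVE w hw)).differentiableWithinAt) hVo
    have hga : AnalyticOnNhd ℂ g V := DifferentiableOn.analyticOnNhd
      (fun w hw => (hg w hw.1 hw.2.1 (hVE w hw)).differentiableWithinAt) hVo
    set z₀ : ℂ := ⟨(c + d) / 2, e⟩
    have hz₀ : z₀ ∈ V := ⟨by simp [z₀]; linarith, by simp [z₀]; linarith,
      mul_self_pos.2 he⟩
    refine hfa.eqOn_of_preconnected_of_eventuallyEq hga hVc.isPreconnected hz₀ ?_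
      (⟨hz1, hz2, hz3⟩ : z ∈ V)
    have hW : IsOpen {z : ℂ | c < z.re ∧ z.re < d} :=
      (isOpen_lt continuous_const hre).inter (isOpen_lt hre continuous_const)
    filter_upwards [hVo.mem_nhds hz₀, hW.mem_nhds (x := z₀)
      ⟨by simp [z₀]; linarith, by simp [z₀]; linarith⟩] with w hw hw'
    exact h w hw'.1 hw'.2 (hVE w hw)
  rcases eq_or_ne s.im 0 with him0 | him0
  · have hlim : Tendsto (fun n : ℕ => s + ((1 / ((n : ℝ) + 1) : ℝ) : ℂ) * I) atTop (𝓝 s) := by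
      have : Tendsto (fun n : ℕ => (1 / ((n : ℝ) + 1) : ℝ)) atTop (𝓝 0) :=
        tendsto_one_div_add_atTop_nhds_zero_nat
      have h3 := (((continuous_ofReal.tendsto 0).comp this).mul_const I).const_add s
      simpa using h3
    have hfl := (hf s h1 h2 hs).continuousAt.tendsto.comp hlim
    have hgl := (hg s h1 h2 hs).continuousAt.tendsto.comp hlim
    refine tendsto_nhds_unique hfl (hgl.congr fun n => ?_)
    refine (key 1 one_ne_zero _ ?_ ?_ ?_).symm
    · simpa using h1
    · simpa using h2
    · simp only [add_im, him0, mul_im, ofReal_re, ofReal_im, I_im, I_re]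
      have : 0 < 1 / ((n : ℝ) + 1) := by positivity
      linarith
  · exact key s.im him0 s h1 h2 (mul_self_pos.2 him0)

/-! ### The two Taylor remainders -/

/-- Second-order Taylor remainder of `(1 + iτ)^{-s}` at `τ = 0`. -/
def powTay (s : ℂ) (τ : ℝ) : ℂ := (1 + τ * I) ^ (-s) - 1 + s * (τ * I)

/-- Second-order Taylor remainder of `e^{-iτ}` at `τ = 0`. -/
def expTay (τ : ℝ) : ℂ := cexp (-(τ * I)) - 1 + τ * I

theorem one_add_mul_I_mem_slitPlane (τ : ℝ) : (1 + τ * I : ℂ) ∈ slitPlane := by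
  left; simp

theorem one_le_norm_one_add (τ : ℝ) : 1 ≤ ‖(1 + τ * I : ℂ)‖ := by
  have := abs_re_le_norm (1 + τ * I : ℂ)
  simpa using this

theorem norm_one_add_cpow_le {w : ℂ} (hw : w.re ≤ 0) (τ : ℝ) :
    ‖(1 + τ * I : ℂ) ^ w‖ ≤ Real.exp (Real.pi * |w.im|) := by
  rw [norm_cpow_of_ne_zero (slitPlane_ne_zero (one_add_mul_I_mem_slitPlane τ)),
    div_eq_mul_inv, ← Real.exp_neg]
  have h1 : ‖(1 + τ * I : ℂ)‖ ^ w.re ≤ 1 :=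
    Real.rpow_le_one_of_one_le_of_nonpos (one_le_norm_one_add τ) hw
  have h2 : -(arg (1 + τ * I) * w.im) ≤ Real.pi * |w.im| := by
    refine (neg_le_abs _).trans ?_
    rw [abs_mul]
    exact mul_le_mul_of_nonneg_right (abs_arg_le_pi _) (abs_nonneg _)
  calc _ ≤ 1 * Real.exp (Real.pi * |w.im|) :=
        mul_le_mul h1 (Real.exp_le_exp.2 h2) (Real.exp_pos _).le zero_le_one
    _ = _ := one_mul _

theorem hasDerivAt_one_add (τ : ℝ) : HasDerivAt (fun τ : ℝ => (1 + τ * I : ℂ)) I τ := by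
  have := ((hasDerivAt_id τ).ofReal_comp.mul_const I).const_add 1
  simpa using this

theorem hasDerivAt_one_add_cpow (w : ℂ) (τ : ℝ) :
    HasDerivAt (fun τ : ℝ => (1 + τ * I : ℂ) ^ w) (w * (1 + τ * I) ^ (w - 1) * I) τ := by
  have h := (hasStrictDerivAt_cpow_const (c := w)
    (one_add_mul_I_mem_slitPlane τ)).hasDerivAt
  exact h.comp τ (hasDerivAt_one_add τ)

theorem norm_powTay_le {s : ℂ} (hs : -2 ≤ s.re) (τ : ℝ) :
    ‖powTay s τ‖ ≤ ‖s * (s + 1)‖ * Real.exp (Real.pi * |s.im|) * τ ^ 2 := by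
  refine norm_le_sq_of_second_deriv (f := powTay s)
    (f' := fun τ => -s * (1 + τ * I) ^ (-s - 1) * I + s * I)
    (f'' := fun τ => -s * ((-s - 1) * (1 + τ * I) ^ (-s - 1 - 1) * I) * I) ?_ ?_ ?_ ?_ ?_ τ
  · simp [powTay]
  · simp
  · intro x
    have h1 := hasDerivAt_one_add_cpow (-s) x
    have h2 := (((hasDerivAt_id x).ofReal_comp.mul_const I).const_mul s)
    have := (h1.sub_const 1).add h2
    simp only [id, ofReal_one, one_mul] at this
    exact this
  · intro x
    have h1 := hasDerivAt_one_add_cpow (-s - 1) x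
    exact ((h1.const_mul (-s)).mul_const I).add_const (s * I)
  · intro x
    have h := norm_one_add_cpow_le (w := -s - 1 - 1) (by simp; linarith) x
    simp only [sub_im, neg_im, one_im, sub_zero, abs_neg] at h
    calc _ = ‖s * (s + 1)‖ * ‖(1 + x * I : ℂ) ^ (-s - 1 - 1)‖ := by
          have : -s - 1 = -(s + 1) := by ring
          simp only [norm_mul, norm_I, mul_one, norm_neg, mul_assoc]
          rw [this, norm_neg]
      _ ≤ _ := mul_le_mul_of_nonneg_left h (norm_nonneg _)

theorem norm_expTay_le (τ : ℝ) : ‖expTay τ‖ ≤ τ ^ 2 := by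
  have h0 : ∀ x : ℝ, HasDerivAt (fun τ : ℝ => cexp (-(τ * I))) (-I * cexp (-(x * I))) x := by
    intro x
    have := (((hasDerivAt_id x).ofReal_comp.mul_const I).neg).cexp
    simp only [id, ofReal_one, one_mul] at this
    rw [mul_comm]; exact this
  have := norm_le_sq_of_second_deriv (f := expTay) (B := 1)
    (f' := fun τ => -I * cexp (-(τ * I)) + I)
    (f'' := fun τ => -I * (-I * cexp (-(τ * I)))) ?_ ?_ ?_ ?_ ?_ τ
  · simpa using this
  · simp [expTay]
  · simp
  · intro x
    have h2 := (((hasDerivAt_id x).ofReal_comp.mul_const I))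
    have := ((h0 x).sub_const 1).add h2
    simp only [id, ofReal_one, one_mul] at this
    exact this
  · intro x
    exact ((h0 x).const_mul (-I)).add_const I
  · intro x
    simp [norm_exp]

theorem continuous_powTay (s : ℂ) : Continuous (powTay s) := by
  have : Continuous fun τ : ℝ => (1 + τ * I : ℂ) ^ (-s) :=
    continuous_iff_continuousAt.2 fun τ => (hasDerivAt_one_add_cpow (-s) τ).continuousAt
  unfold powTay
  fun_prop

theorem continuous_expTay : Continuous expTay := by
  unfold expTay; fun_prop

theorem differentiable_powTay (τ : ℝ) : Differentiable ℂ (fun s => powTay s τ) := by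
  have : (1 + τ * I : ℂ) ≠ 0 := slitPlane_ne_zero (one_add_mul_I_mem_slitPlane τ)
  unfold powTay
  have h : Differentiable ℂ fun s : ℂ => (1 + τ * I : ℂ) ^ (-s) := fun s =>
    (differentiableAt_id.neg).const_cpow (Or.inl this)
  fun_prop

/-! ### Laplace-type integrals with a kernel vanishing to second order -/

theorem integrableOn_rpow_mul_exp {a c : ℝ} (ha : -1 < a) (hc : 0 < c) :
    IntegrableOn (fun t : ℝ => t ^ a * Real.exp (-(c * t))) (Ioi 0) := by
  have := integrableOn_rpow_mul_exp_neg_mul_rpow (p := 1) (s := a) (b := c) ha zero_lt_one hc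
  simpa using this

/-- The value of `∫₀^∞ (t^{2-α} + t^{2-β}) e^{-ct} dt`, which bounds `∫₀^∞ t^{2-σ} e^{-ct} dt`
for all `α ≤ σ ≤ β`. -/
def kerBound (α β c : ℝ) : ℝ :=
  (1 / c) ^ (3 - α) * Real.Gamma (3 - α) + (1 / c) ^ (3 - β) * Real.Gamma (3 - β)

theorem integrableOn_kerMajorant {α β c : ℝ} (hα : α < 3) (hβ : β < 3) (hc : 0 < c) (C : ℝ) :
    IntegrableOn (fun t : ℝ => C * ((t ^ (2 - α) + t ^ (2 - β)) * Real.exp (-(c * t)))) (Ioi 0) := by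
  have h1 := integrableOn_rpow_mul_exp (a := 2 - α) (by linarith) hc
  have h2 := integrableOn_rpow_mul_exp (a := 2 - β) (by linarith) hc
  have := (h1.add h2).const_mul C
  refine this.congr (ae_of_all _ fun t => ?_)
  simp only [Pi.add_apply]; ring

theorem integral_kerMajorant {α β c : ℝ} (hα : α < 3) (hβ : β < 3) (hc : 0 < c) (C : ℝ) :
    ∫ t in Ioi (0 : ℝ), C * ((t ^ (2 - α) + t ^ (2 - β)) * Real.exp (-(c * t)))
      = C * kerBound α β c := by
  have h1 := integrableOn_rpow_mul_exp (a := 2 - α) (by linarith) hc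
  have h2 := integrableOn_rpow_mul_exp (a := 2 - β) (by linarith) hc
  rw [integral_const_mul]
  simp only [add_mul]
  rw [integral_add h1 h2]
  have e1 := Real.integral_rpow_mul_exp_neg_mul_Ioi (a := 3 - α) (by linarith) hc
  have e2 := Real.integral_rpow_mul_exp_neg_mul_Ioi (a := 3 - β) (by linarith) hc
  rw [show 3 - α - 1 = 2 - α by ring] at e1
  rw [show 3 - β - 1 = 2 - β by ring] at e2
  rw [e1, e2, kerBound]

theorem rpow_le_add_rpow {t a x b : ℝ} (ht : 0 < t) (h1 : a ≤ x) (h2 : x ≤ b) :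
    t ^ x ≤ t ^ a + t ^ b := by
  rcases le_total t 1 with h | h
  · have := Real.rpow_le_rpow_of_exponent_ge ht h h1
    have := Real.rpow_nonneg ht.le b
    linarith
  · have := Real.rpow_le_rpow_of_exponent_le h h2
    have := Real.rpow_nonneg ht.le a
    linarith

/-- Pointwise majorant of the kernel `e^{-ct} t^{-s} φ` for `φ = O(t²)`, uniform in
`α ≤ Re s ≤ β`. -/
theorem norm_ker_le {α β c C t : ℝ} {s φ : ℂ} (ht : 0 < t) (h1 : α ≤ s.re) (h2 : s.re ≤ β)
    (hφ : ‖φ‖ ≤ C * t ^ 2) :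
    ‖cexp (-(c * t)) * (t : ℂ) ^ (-s) * φ‖
      ≤ C * ((t ^ (2 - α) + t ^ (2 - β)) * Real.exp (-(c * t))) := by
  have hC : 0 ≤ C := by
    have := (norm_nonneg _).trans hφ
    exact nonneg_of_mul_nonneg_left this (by positivity)
  rw [norm_mul, norm_mul, norm_cpow_eq_rpow_re_of_pos ht, norm_exp]
  have e : (-((c : ℂ) * t)).re = -(c * t) := by simp
  rw [e, neg_re]
  have h3 : t ^ (-s.re) * t ^ 2 ≤ t ^ (2 - α) + t ^ (2 - β) := by
    have : t ^ (-s.re) * t ^ 2 = t ^ (2 - s.re) := by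
      rw [← Real.rpow_natCast, ← Real.rpow_add ht]; congr 1; push_cast; ring
    rw [this, add_comm]
    exact rpow_le_add_rpow ht (by linarith) (by linarith)
  calc _ ≤ Real.exp (-(c * t)) * t ^ (-s.re) * (C * t ^ 2) := by gcongr
    _ = C * ((t ^ (-s.re) * t ^ 2) * Real.exp (-(c * t))) := by ring
    _ ≤ _ := by gcongr

theorem aestronglyMeasurable_ker (c : ℝ) (s : ℂ) {φ : ℝ → ℂ} (hφ : Continuous φ) :
    AEStronglyMeasurable (fun t : ℝ => cexp (-(c * t)) * (t : ℂ) ^ (-s) * φ t)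
      (volume.restrict (Ioi 0)) := by
  refine ContinuousOn.aestronglyMeasurable (fun t ht => ?_) measurableSet_Ioi
  have h : ContinuousAt (fun t : ℝ => (t : ℂ) ^ (-s)) t :=
    continuousAt_ofReal_cpow_const _ _ (Or.inr (ne_of_gt ht))
  have h2 : Continuous (fun t : ℝ => cexp (-(c * t))) := by fun_prop
  exact ((h2.continuousAt.mul h).mul hφ.continuousAt).continuousWithinAt

theorem integrableOn_ker {c C : ℝ} {s : ℂ} {φ : ℝ → ℂ} (hc : 0 < c) (hs : s.re < 3)
    (hφc : Continuous φ) (hφ : ∀ t, 0 < t → ‖φ t‖ ≤ C * t ^ 2) :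
    IntegrableOn (fun t : ℝ => cexp (-(c * t)) * (t : ℂ) ^ (-s) * φ t) (Ioi 0) := by
  refine (integrableOn_kerMajorant hs hs hc C).mono' (aestronglyMeasurable_ker c s hφc) ?_
  filter_upwards [ae_restrict_mem measurableSet_Ioi] with t ht
  exact norm_ker_le ht le_rfl le_rfl (hφ t ht)

theorem integral_norm_ker_le {α β c C : ℝ} {s : ℂ} {φ : ℝ → ℂ} (hc : 0 < c)
    (h1 : α ≤ s.re) (h2 : s.re ≤ β) (hβ : β < 3)
    (hφc : Continuous φ) (hφ : ∀ t, 0 < t → ‖φ t‖ ≤ C * t ^ 2) :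
    ∫ t in Ioi (0 : ℝ), ‖cexp (-(c * t)) * (t : ℂ) ^ (-s) * φ t‖ ≤ C * kerBound α β c := by
  rw [← integral_kerMajorant (by linarith) hβ hc C]
  refine setIntegral_mono_on (integrableOn_ker hc (by linarith) hφc hφ).norm
    (integrableOn_kerMajorant (by linarith) hβ hc C) measurableSet_Ioi fun t ht => ?_
  exact norm_ker_le ht h1 h2 (hφ t ht)

theorem norm_integral_ker_le {α β c C : ℝ} {s : ℂ} {φ : ℝ → ℂ} (hc : 0 < c)
    (h1 : α ≤ s.re) (h2 : s.re ≤ β) (hβ : β < 3)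
    (hφc : Continuous φ) (hφ : ∀ t, 0 < t → ‖φ t‖ ≤ C * t ^ 2) :
    ‖∫ t in Ioi (0 : ℝ), cexp (-(c * t)) * (t : ℂ) ^ (-s) * φ t‖ ≤ C * kerBound α β c :=
  (norm_integral_le_integral_norm _).trans (integral_norm_ker_le hc h1 h2 hβ hφc hφ)

theorem differentiableOn_integral_ker {α β c C : ℝ} {U : Set ℂ} (hU : IsOpen U) (hc : 0 < c)
    (hUα : ∀ s ∈ U, α ≤ s.re) (hUβ : ∀ s ∈ U, s.re ≤ β) (hα : α < 3) (hβ : β < 3) {φ : ℂ → ℝ → ℂ}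
    (hφc : ∀ s, Continuous (φ s)) (hφ : ∀ s ∈ U, ∀ t, 0 < t → ‖φ s t‖ ≤ C * t ^ 2)
    (hφd : ∀ t, Differentiable ℂ (fun s => φ s t)) :
    DifferentiableOn ℂ
      (fun s => ∫ t in Ioi (0 : ℝ), cexp (-(c * t)) * (t : ℂ) ^ (-s) * φ s t) U := by
  refine differentiableOn_integral_of_dominated hU
    (fun s _ => aestronglyMeasurable_ker c s (hφc s)) (integrableOn_kerMajorant hα hβ hc C) ?_ ?_
  · filter_upwards [ae_restrict_mem measurableSet_Ioi] with t ht s hs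
    exact norm_ker_le ht (hUα s hs) (hUβ s hs) (hφ s hs t ht)
  · filter_upwards [ae_restrict_mem measurableSet_Ioi] with t ht
    have ht0 : (t : ℂ) ≠ 0 := ofReal_ne_zero.2 (ne_of_gt ht)
    have h : Differentiable ℂ fun s : ℂ => (t : ℂ) ^ (-s) := fun s =>
      (differentiableAt_id.neg).const_cpow (Or.inl ht0)
    exact ((h.const_mul _).mul (hφd t)).differentiableOn

/-! ### Euler's integral with a complex rate -/

theorem integrableOn_cpow_mul_cexp {a r : ℂ} (ha : 0 < a.re) (hr : 0 < r.re) :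
    IntegrableOn (fun t : ℝ => (t : ℂ) ^ (a - 1) * cexp (-(r * t))) (Ioi 0) := by
  refine (integrableOn_rpow_mul_exp (a := a.re - 1) (by linarith) hr).mono'
    (ContinuousOn.aestronglyMeasurable (fun t ht => ?_) measurableSet_Ioi) ?_
  · have h : ContinuousAt (fun t : ℝ => (t : ℂ) ^ (a - 1)) t :=
      continuousAt_ofReal_cpow_const _ _ (Or.inr (ne_of_gt ht))
    have h2 : Continuous (fun t : ℝ => cexp (-(r * t))) := by fun_prop
    exact (h.mul h2.continuousAt).continuousWithinAt
  · filter_upwards [ae_restrict_mem measurableSet_Ioi] with t ht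
    rw [norm_mul, norm_cpow_eq_rpow_re_of_pos ht, norm_exp]
    simp

/-- Euler's integral `∫₀^∞ t^{a-1} e^{-rt} dt = r^{-a} Γ(a)` with a complex rate. -/
theorem integral_cpow_mul_cexp {a r : ℂ} (ha : 0 < a.re) (hr : 0 < r.re) :
    ∫ t in Ioi (0 : ℝ), (t : ℂ) ^ (a - 1) * cexp (-(r * t)) = r ^ (-a) * Gamma a := by
  have hV : IsOpen {r : ℂ | 0 < r.re} := isOpen_lt continuous_const continuous_re
  have hVc : Convex ℝ {r : ℂ | 0 < r.re} := convex_halfSpace_gt (f := re) ⟨by simp, by simp⟩ _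
  have hL : DifferentiableOn ℂ
      (fun r : ℂ => ∫ t in Ioi (0 : ℝ), (t : ℂ) ^ (a - 1) * cexp (-(r * t))) {r | 0 < r.re} := by
    intro r₀ hr₀
    have hr₀' : 0 < r₀.re := hr₀
    have hV2 : IsOpen {r : ℂ | r₀.re / 2 < r.re} := isOpen_lt continuous_const continuous_re
    have hmem : r₀ ∈ {r : ℂ | r₀.re / 2 < r.re} := show r₀.re / 2 < r₀.re by linarith
    refine ((differentiableOn_integral_of_dominated hV2
      (b := fun t : ℝ => t ^ (a.re - 1) * Real.exp (-(r₀.re / 2 * t)))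
      (fun s hs => (integrableOn_cpow_mul_cexp ha ?_).aestronglyMeasurable)
      (integrableOn_rpow_mul_exp (by linarith) (by positivity)) ?_ ?_).differentiableAt
        (hV2.mem_nhds hmem)).differentiableWithinAt
    · exact lt_trans (by positivity) hs
    · filter_upwards [ae_restrict_mem measurableSet_Ioi] with t ht s hs
      rw [norm_mul, norm_cpow_eq_rpow_re_of_pos ht, norm_exp]
      have : (-(s * t)).re = -(s.re * t) := by simp
      rw [this, sub_re, one_re]
      have hs' : r₀.re / 2 < s.re := hs
      have ht' : (0 : ℝ) < t := ht
      gcongr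
    · exact ae_of_all _ fun t => by fun_prop
  have hR : DifferentiableOn ℂ (fun r : ℂ => r ^ (-a) * Gamma a) {r | 0 < r.re} := by
    intro r₀ hr₀
    exact ((differentiableAt_id.cpow_const (Or.inl hr₀)).mul_const _).differentiableWithinAt
  refine (hL.analyticOnNhd hV).eqOn_of_preconnected_of_frequently_eq (hR.analyticOnNhd hV)
    hVc.isPreconnected (z₀ := 1) (by simp) ?_ hr
  have hlim : Tendsto (fun n : ℕ => ((1 + 1 / ((n : ℝ) + 1) : ℝ) : ℂ)) atTop (𝓝[≠] 1) := by
    rw [tendsto_nhdsWithin_iff]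
    refine ⟨?_, Eventually.of_forall fun n => ?_⟩
    · have h3 := (tendsto_one_div_add_atTop_nhds_zero_nat (𝕜 := ℝ)).const_add 1
      rw [add_zero] at h3
      exact_mod_cast (continuous_ofReal.tendsto 1).comp h3
    · have : (1 + 1 / ((n : ℝ) + 1) : ℝ) ≠ 1 := by
        have : 0 < 1 / ((n : ℝ) + 1) := by positivity
        linarith
      exact fun h => this (ofReal_eq_one.1 h)
  refine hlim.frequently (Frequently.of_forall fun n => ?_)
  have hpos : (0 : ℝ) < 1 + 1 / ((n : ℝ) + 1) := by positivity
  rw [integral_cpow_mul_exp_neg_mul_Ioi ha hpos, one_div, inv_cpow, cpow_neg]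
  rw [arg_ofReal_of_nonneg hpos.le]; exact Real.pi_pos.ne

/-! ### Lipschitz' summation formula -/

theorem norm_cpow_le_rpow_mul_exp {z : ℂ} (hz : z ≠ 0) (w : ℂ) :
    ‖z ^ w‖ ≤ ‖z‖ ^ w.re * Real.exp (Real.pi * |w.im|) := by
  rw [norm_cpow_of_ne_zero hz, div_eq_mul_inv, ← Real.exp_neg]
  have h2 : -(arg z * w.im) ≤ Real.pi * |w.im| := by
    refine (neg_le_abs _).trans ?_
    rw [abs_mul]
    exact mul_le_mul_of_nonneg_right (abs_arg_le_pi _) (abs_nonneg _)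
  gcongr

theorem integral_ker_expTay {c : ℝ} {s : ℂ} (hc : 0 < c) (hs : s.re < 1) (τ : ℝ) :
    ∫ t in Ioi (0 : ℝ), cexp (-(c * t)) * (t : ℂ) ^ (-s) * expTay (τ * t)
      = Gamma (1 - s) * ((c + τ * I) ^ (s - 1) - (c : ℂ) ^ (s - 1)
          + (1 - s) * (τ * I) * (c : ℂ) ^ (s - 2)) := by
  have ha : 0 < (1 - s).re := by simp; linarith
  have ha2 : 0 < (2 - s).re := by simp; linarith
  have hr1 : 0 < ((c : ℂ) + τ * I).re := by simpa using hc
  have hr2 : 0 < (c : ℂ).re := by simpa using hc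
  have i1 := integrableOn_cpow_mul_cexp ha hr1
  have i2 := integrableOn_cpow_mul_cexp ha hr2
  have i3 := (integrableOn_cpow_mul_cexp ha2 hr2).const_mul (τ * I)
  have e1 := integral_cpow_mul_cexp ha hr1
  have e2 := integral_cpow_mul_cexp ha hr2
  have e3 := integral_cpow_mul_cexp ha2 hr2
  have hG : Gamma (2 - s) = (1 - s) * Gamma (1 - s) := by
    rw [← Gamma_add_one]
    · congr 1; ring
    · intro h; rw [h] at ha; simp at ha
  calc _ = ∫ t in Ioi (0 : ℝ), ((t : ℂ) ^ (1 - s - 1) * cexp (-((c + τ * I) * t))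
          - (t : ℂ) ^ (1 - s - 1) * cexp (-(c * t))
          + τ * I * ((t : ℂ) ^ (2 - s - 1) * cexp (-(c * t)))) := by
        refine setIntegral_congr_fun measurableSet_Ioi fun t ht => ?_
        have ht0 : (t : ℂ) ≠ 0 := ofReal_ne_zero.2 (ne_of_gt ht)
        have h1 : (t : ℂ) ^ (2 - s - 1) = t * (t : ℂ) ^ (-s) := by
          rw [show 2 - s - 1 = 1 + -s by ring, cpow_add _ _ ht0, cpow_one]
        have h2 : cexp (-((c + τ * I) * t)) = cexp (-(c * t)) * cexp (-(τ * t * I)) := by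
          rw [← Complex.exp_add]; congr 1; ring
        simp only [expTay]
        rw [h1, h2, show 1 - s - 1 = -s by ring]
        push_cast
        ring
    _ = _ := by
        have i12 : IntegrableOn (fun t : ℝ => (t : ℂ) ^ (1 - s - 1) * cexp (-((c + τ * I) * t))
          - (t : ℂ) ^ (1 - s - 1) * cexp (-(c * t))) (Ioi 0) := i1.sub i2
        rw [integral_add i12 i3, integral_sub i1 i2, integral_const_mul, e1, e2, e3, hG]
        rw [show -(1 - s) = s - 1 by ring, show -(2 - s) = s - 2 by ring]
        ring

/-- The function `x ↦ x^{-s} e^{-yx}` on `x > 0`; for `s ≠ 0` it is `0` on `x ≤ 0`, through the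
convention `0 ^ (-s) = 0`. -/
def lipFun (s : ℂ) (y x : ℝ) : ℂ := ((max x 0 : ℝ) : ℂ) ^ (-s) * cexp (-(y * x))

/-- At `x ≤ 0` the base is `0`, so the factor `0 ^ (-s)` vanishes since `s ≠ 0`. -/
theorem lipFun_of_nonpos {s : ℂ} (hs : s.re < 0) (y : ℝ) {x : ℝ} (hx : x ≤ 0) :
    lipFun s y x = 0 := by
  have hs0 : -s ≠ 0 := by
    intro h; rw [neg_eq_zero] at h; rw [h] at hs; simp at hs
  simp [lipFun, max_eq_right hx, zero_cpow hs0]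

theorem lipFun_of_pos (s : ℂ) (y : ℝ) {x : ℝ} (hx : 0 < x) :
    lipFun s y x = (x : ℂ) ^ (-s) * cexp (-(y * x)) := by
  simp [lipFun, max_eq_left hx.le]

theorem continuous_lipFun {s : ℂ} (hs : s.re < 0) (y : ℝ) : Continuous (lipFun s y) := by
  have h := continuous_ofReal_cpow_const (y := -s) (by simpa using hs)
  have h2 : Continuous fun x : ℝ => max x 0 := by fun_prop
  have h3 : Continuous fun x : ℝ => cexp (-(y * x)) := by fun_prop
  exact (h.comp h2).mul h3

theorem fourier_lipFun {s : ℂ} (hs : s.re < 0) {y : ℝ} (hy : 0 < y) (w : ℝ) :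
    FourierTransform.fourier (lipFun s y) w = Gamma (1 - s) * (y + 2 * Real.pi * w * I) ^ (s - 1) := by
  rw [Real.fourier_real_eq_integral_exp_smul]
  have ha : 0 < (1 - s).re := by simp; linarith
  have hr1 : 0 < ((y : ℂ) + 2 * Real.pi * w * I).re := by simpa using hy
  have e1 := integral_cpow_mul_cexp ha hr1
  rw [show -(1 - s) = s - 1 by ring] at e1
  rw [mul_comm (Gamma _), ← e1]
  rw [← setIntegral_eq_integral_of_forall_compl_eq_zero (s := Ioi 0)]
  · refine setIntegral_congr_fun measurableSet_Ioi fun t ht => ?_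
    rw [lipFun_of_pos s y ht, show 1 - s - 1 = -s by ring, smul_eq_mul, mul_left_comm,
      ← Complex.exp_add]
    congr 2
    push_cast; ring
  · intro x hx
    rw [lipFun_of_nonpos hs y (not_lt.1 hx), smul_zero]

theorem isBigO_lipFun {s : ℂ} (hs : s.re < 0) {y : ℝ} (hy : 0 < y) (b : ℝ) :
    lipFun s y =O[cocompact ℝ] (fun x : ℝ => |x| ^ (-b)) := by
  rw [cocompact_eq_atBot_atTop, Asymptotics.isBigO_sup]
  constructor
  · refine Filter.EventuallyEq.trans_isBigO (f₂ := fun _ => (0 : ℂ)) ?_ (Asymptotics.isBigO_zero _ _)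
    filter_upwards [eventually_le_atBot 0] with x hx
    exact lipFun_of_nonpos hs y hx
  · have h1 := (isLittleO_exp_neg_mul_rpow_atTop hy (-b + s.re)).isBigO
    have h2 : lipFun s y =O[atTop] fun x : ℝ => x ^ (-s.re) * Real.exp (-y * x) := by
      refine Asymptotics.IsBigO.of_norm_eventuallyLE ?_
      filter_upwards [eventually_gt_atTop 0] with x hx
      rw [lipFun_of_pos s y hx, norm_mul, norm_cpow_eq_rpow_re_of_pos hx, norm_exp]
      simp
    refine h2.trans ?_
    refine ((Asymptotics.isBigO_refl (fun x : ℝ => x ^ (-s.re)) atTop).mul h1).trans ?_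
    refine Asymptotics.IsBigO.of_norm_eventuallyLE ?_
    filter_upwards [eventually_gt_atTop 0] with x hx
    rw [← Real.rpow_add hx, abs_of_pos hx, Real.norm_of_nonneg (by positivity)]
    apply le_of_eq; congr 1; ring

theorem norm_lip_le {s : ℂ} (hs : s.re < 0) {y : ℝ} (hy : 0 < y) {w : ℝ} (hw : w ≠ 0) :
    ‖(y + 2 * Real.pi * w * I : ℂ) ^ (s - 1)‖ ≤ |w| ^ (s.re - 1) * Real.exp (Real.pi * |s.im|) := by
  have hne : (y + 2 * Real.pi * w * I : ℂ) ≠ 0 := by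
    intro h
    have := congrArg re h
    simp at this; linarith
  refine (norm_cpow_le_rpow_mul_exp hne _).trans ?_
  simp only [sub_re, one_re, sub_im, one_im, sub_zero]
  gcongr ?_ * _
  refine Real.rpow_le_rpow_of_nonpos (abs_pos.2 hw) ?_ (by linarith)
  have := abs_im_le_norm (y + 2 * Real.pi * w * I : ℂ)
  simp only [add_im, ofReal_im, mul_im, mul_re, re_ofNat, ofReal_re, im_ofNat, I_im, I_re] at this
  refine le_trans ?_ this
  have := abs_nonneg w
  have h3 : |w| ≤ |2 * Real.pi * w| := by
    rw [abs_mul, abs_of_pos (by positivity : 0 < 2 * Real.pi)]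
    nlinarith [Real.pi_gt_three]
  refine h3.trans (le_of_eq ?_)
  congr 1
  ring

theorem isBigO_fourier_lipFun {s : ℂ} (hs : s.re < 0) {y : ℝ} (hy : 0 < y) :
    FourierTransform.fourier (lipFun s y) =O[cocompact ℝ] (fun x : ℝ => |x| ^ (-(1 - s.re))) := by
  refine Asymptotics.IsBigO.of_bound (‖Gamma (1 - s)‖ * Real.exp (Real.pi * |s.im|)) ?_
  have : ∀ᶠ x : ℝ in cocompact ℝ, x ≠ 0 :=
    (finite_singleton (0 : ℝ)).isCompact.compl_mem_cocompact
  filter_upwards [this] with w hw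
  rw [fourier_lipFun hs hy, norm_mul, mul_assoc ‖Gamma (1 - s)‖]
  refine mul_le_mul_of_nonneg_left ?_ (norm_nonneg (Gamma (1 - s)))
  rw [Real.norm_of_nonneg (by positivity), mul_comm (Real.exp _), neg_sub]
  exact norm_lip_le hs hy hw

/-- Lipschitz' formula: Poisson summation applied to `x^{-s} e^{-yx}`. -/
theorem lipschitz {s : ℂ} (hs : s.re < 0) {y : ℝ} (hy : 0 < y) :
    ∑' n : ℕ+, ((n : ℕ) : ℂ) ^ (-s) * cexp (-(y * (n : ℕ)))
      = Gamma (1 - s) * ((y : ℂ) ^ (s - 1)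
          + ∑' m : ℕ+, (y + 2 * Real.pi * (m : ℕ) * I) ^ (s - 1)
          + ∑' m : ℕ+, (y - 2 * Real.pi * (m : ℕ) * I) ^ (s - 1)) := by
  have hb : 1 < 1 - s.re := by linarith
  have hP := Real.tsum_eq_tsum_fourier_of_rpow_decay (continuous_lipFun hs y) hb
    (isBigO_lipFun hs hy _) (isBigO_fourier_lipFun hs hy) 0
  have hs1 : Summable fun n : ℤ => lipFun s y n :=
    summable_of_isBigO (Real.summable_abs_int_rpow hb)
      ((isBigO_lipFun hs hy _).comp_tendsto Int.tendsto_coe_cofinite)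
  have hs2 : Summable fun n : ℤ => FourierTransform.fourier (lipFun s y) (n : ℝ) :=
    summable_of_isBigO (Real.summable_abs_int_rpow hb)
      ((isBigO_fourier_lipFun hs hy).comp_tendsto Int.tendsto_coe_cofinite)
  simp only [zero_add, QuotientAddGroup.mk_zero, fourier_eval_zero, mul_one] at hP
  rw [tsum_int_eq_zero_add_tsum_pnat hs1, tsum_int_eq_zero_add_tsum_pnat hs2] at hP
  have h0 : lipFun s y ((0 : ℤ) : ℝ) = 0 := lipFun_of_nonpos hs y (by simp)
  have h1 : ∀ n : ℕ+, lipFun s y ((-(n : ℤ) : ℤ) : ℝ) = 0 := fun n =>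
    lipFun_of_nonpos hs y (by simp)
  have h2 : ∀ n : ℕ+, lipFun s y (((n : ℕ) : ℤ) : ℝ) =
      ((n : ℕ) : ℂ) ^ (-s) * cexp (-(y * (n : ℕ))) := fun n => by
    rw [lipFun_of_pos s y (by simp)]; push_cast; rfl
  simp only [h0, h1, h2, tsum_zero, zero_add, add_zero, fourier_lipFun hs hy, tsum_mul_left] at hP
  rw [hP, ← mul_add, ← mul_add]
  congr 2
  · push_cast; simp
  · refine tsum_congr fun m => ?_
    push_cast; congr 1; ring

/-! ### The antisymmetrised kernel and sums of Laplace-type integrals -/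

theorem I_mul_cpow {z : ℂ} (hz : 0 < z.re) (w : ℂ) :
    (I * z) ^ w = cexp (Real.pi / 2 * I * w) * z ^ w := by
  have hz0 : z ≠ 0 := fun h => by simp [h] at hz
  have harg := abs_lt.1 (abs_arg_lt_pi_div_two_iff.2 (Or.inl hz))
  have h := (log_mul_eq_add_log_iff I_ne_zero hz0).2
    (by rw [arg_I]; exact ⟨by linarith [harg.1, Real.pi_pos], by linarith [harg.2]⟩)
  rw [cpow_def_of_ne_zero (mul_ne_zero I_ne_zero hz0), cpow_def_of_ne_zero hz0, h, log_I,
    ← Complex.exp_add]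
  congr 1; ring

theorem neg_I_mul_cpow {z : ℂ} (hz : 0 < z.re) (w : ℂ) :
    (-I * z) ^ w = cexp (-(Real.pi / 2 * I * w)) * z ^ w := by
  have hz0 : z ≠ 0 := fun h => by simp [h] at hz
  have harg := abs_lt.1 (abs_arg_lt_pi_div_two_iff.2 (Or.inl hz))
  have hI : -I ≠ 0 := neg_ne_zero.2 I_ne_zero
  have h := (log_mul_eq_add_log_iff hI hz0).2
    (by rw [arg_neg_I]; exact ⟨by linarith [harg.1], by linarith [harg.2, Real.pi_pos]⟩)
  rw [cpow_def_of_ne_zero (mul_ne_zero hI hz0), cpow_def_of_ne_zero hz0, h, log_neg_I,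
    ← Complex.exp_add]
  congr 1; ring

/-- The combination `e^{iπs/2} ψ(-τ) - e^{-iπs/2} ψ(τ)`. -/
def twist (s : ℂ) (ψ : ℝ → ℂ) (τ : ℝ) : ℂ :=
  cexp (Real.pi * s / 2 * I) * ψ (-τ) - cexp (-(Real.pi * s / 2 * I)) * ψ τ

theorem norm_exp_half_le (s : ℂ) : ‖cexp (Real.pi * s / 2 * I)‖ ≤ Real.exp (Real.pi * |s.im|) := by
  rw [norm_exp]
  refine Real.exp_le_exp.2 ?_
  have : ((Real.pi : ℂ) * s / 2 * I).re = -(Real.pi * s.im / 2) := by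
    simp [mul_re]
  rw [this]
  have := neg_le_abs s.im
  have := abs_nonneg s.im
  nlinarith [Real.pi_pos]

theorem norm_exp_neg_half_le (s : ℂ) :
    ‖cexp (-(Real.pi * s / 2 * I))‖ ≤ Real.exp (Real.pi * |s.im|) := by
  have := norm_exp_half_le (-s)
  simpa [neg_div] using this

theorem norm_twist_le {s : ℂ} {ψ : ℝ → ℂ} {B : ℝ} (hψ : ∀ τ, ‖ψ τ‖ ≤ B * τ ^ 2) (τ : ℝ) :
    ‖twist s ψ τ‖ ≤ 2 * Real.exp (Real.pi * |s.im|) * B * τ ^ 2 := by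
  have h1 := mul_le_mul (norm_exp_half_le s) (hψ (-τ)) (norm_nonneg _) (Real.exp_pos _).le
  have h2 := mul_le_mul (norm_exp_neg_half_le s) (hψ τ) (norm_nonneg _) (Real.exp_pos _).le
  rw [neg_sq] at h1
  unfold twist
  refine (norm_sub_le _ _).trans ?_
  rw [norm_mul, norm_mul]
  linarith

theorem continuous_twist (s : ℂ) {ψ : ℝ → ℂ} (hψ : Continuous ψ) : Continuous (twist s ψ) := by
  unfold twist; fun_prop

theorem kerBound_nonneg {α β c : ℝ} (hα : α < 3) (hβ : β < 3) (hc : 0 < c) :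
    0 ≤ kerBound α β c := by
  have h1 := Real.Gamma_pos_of_pos (s := 3 - α) (by linarith)
  have h2 := Real.Gamma_pos_of_pos (s := 3 - β) (by linarith)
  unfold kerBound; positivity

theorem two_pi_mul_pos (m : ℕ+) : 0 < 2 * Real.pi * (m : ℕ) := by
  have : (0 : ℝ) < (m : ℕ) := by exact_mod_cast m.pos
  positivity

theorem summable_pnat_rpow {p : ℝ} (hp : p < -1) : Summable fun m : ℕ+ => ((m : ℕ) : ℝ) ^ p :=
  (Real.summable_nat_rpow.2 hp).comp_injective PNat.coe_injective

theorem summable_kerBound {α β : ℝ} (hα : α < 2) (hβ : β < 2) :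
    Summable fun m : ℕ+ => kerBound α β (2 * Real.pi * (m : ℕ)) := by
  have key : ∀ a : ℝ, a < 2 → Summable fun m : ℕ+ =>
      (1 / (2 * Real.pi * ((m : ℕ) : ℝ))) ^ (3 - a) * Real.Gamma (3 - a) := by
    intro a ha
    have := (summable_pnat_rpow (p := -(3 - a)) (by linarith)).mul_left
      ((1 / (2 * Real.pi)) ^ (3 - a) * Real.Gamma (3 - a))
    refine this.congr fun m => ?_
    have hm : (0 : ℝ) < (m : ℕ) := by exact_mod_cast m.pos
    rw [show 1 / (2 * Real.pi * ((m : ℕ) : ℝ)) = 1 / (2 * Real.pi) * ((m : ℕ) : ℝ)⁻¹ by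
        rw [one_div, one_div, mul_inv],
      Real.mul_rpow (by positivity) (by positivity),
      Real.inv_rpow hm.le, Real.rpow_neg hm.le]
    ring
  exact (key α hα).add (key β hβ)

theorem differentiableOn_tsum_ker {ι : Type*} {α β : ℝ} {c C : ι → ℝ} {U : Set ℂ} (hU : IsOpen U)
    (hc : ∀ i, 0 < c i) (hUα : ∀ s ∈ U, α ≤ s.re) (hUβ : ∀ s ∈ U, s.re ≤ β)
    (hα : α < 3) (hβ : β < 3) {φ : ι → ℂ → ℝ → ℂ}
    (hφc : ∀ i s, Continuous (φ i s)) (hφ : ∀ i, ∀ s ∈ U, ∀ t, 0 < t → ‖φ i s t‖ ≤ C i * t ^ 2)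
    (hφd : ∀ i t, Differentiable ℂ (fun s => φ i s t))
    (hsum : Summable fun i => C i * kerBound α β (c i)) :
    DifferentiableOn ℂ
      (fun s => ∑' i, ∫ t in Ioi (0 : ℝ), cexp (-(c i * t)) * (t : ℂ) ^ (-s) * φ i s t) U :=
  differentiableOn_tsum_of_summable_norm hsum
    (fun i => differentiableOn_integral_ker hU (hc i) hUα hUβ hα hβ (hφc i) (hφ i) (hφd i)) hU
    (fun i s hs => norm_integral_ker_le (hc i) (hUα s hs) (hUβ s hs) hβ (hφc i s) (hφ i s hs))

/-- A bounded open box of the complex plane. -/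
def box (α β R : ℝ) : Set ℂ := {s | α < s.re ∧ s.re < β ∧ ‖s‖ < R}

theorem isOpen_box (α β R : ℝ) : IsOpen (box α β R) :=
  (isOpen_lt continuous_const continuous_re).inter
    ((isOpen_lt continuous_re continuous_const).inter (isOpen_lt continuous_norm continuous_const))

theorem exists_box {s : ℂ} (h1 : -1 < s.re) (h2 : s.re < 2) :
    ∃ α β R : ℝ, -1 < α ∧ α < β ∧ β < 2 ∧ s ∈ box α β R :=
  ⟨(s.re - 1) / 2, (s.re + 2) / 2, ‖s‖ + 1, by linarith, by linarith, by linarith,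
    by constructor <;> [linarith; constructor <;> linarith]⟩

theorem exp_im_le_of_mem_box {α β R : ℝ} {s : ℂ} (hs : s ∈ box α β R) :
    Real.exp (Real.pi * |s.im|) ≤ Real.exp (Real.pi * R) := by
  have := abs_im_le_norm s
  have := hs.2.2
  have : |s.im| ≤ R := by linarith
  have := Real.pi_pos
  gcongr

theorem differentiable_exp_half : Differentiable ℂ fun s : ℂ => cexp (Real.pi * s / 2 * I) := by
  fun_prop

theorem differentiable_twist {ψ : ℂ → ℝ → ℂ} (hψ : ∀ τ, Differentiable ℂ (fun s => ψ s τ)) (τ : ℝ) :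
    Differentiable ℂ fun s => twist s (ψ s) τ := by
  have h1 := hψ τ
  have h2 := hψ (-τ)
  unfold twist
  fun_prop

/-! ### An Abel–Plana type formula for `∑ n^{-s} e^{-ny}` -/

/-- The terms `∫₀^∞ e^{-2πmt} t^{-s} (e^{iπs/2} e₂(-yt) - e^{-iπs/2} e₂(yt)) dt` of the Abel–Plana
type expansion of `∑ n^{-s} e^{-ny}`, with `e₂` the Taylor remainder `expTay`. -/
def plana (s : ℂ) (y : ℝ) (m : ℕ+) : ℂ :=
  ∫ t in Ioi (0 : ℝ), cexp (-((2 * Real.pi * (m : ℕ) : ℝ) * t)) * (t : ℂ) ^ (-s) *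
    twist s expTay (y * t)

theorem norm_twist_expTay_le (s : ℂ) (y t : ℝ) :
    ‖twist s expTay (y * t)‖ ≤ 2 * Real.exp (Real.pi * |s.im|) * y ^ 2 * t ^ 2 := by
  have := norm_twist_le (s := s) (ψ := expTay) (B := 1) (by simpa using norm_expTay_le) (y * t)
  calc _ ≤ _ := this
    _ = _ := by ring

theorem differentiableAt_tsum_plana (y : ℝ) {s : ℂ} (h1 : -1 < s.re) (h2 : s.re < 2) :
    DifferentiableAt ℂ (fun s => ∑' m, plana s y m) s := by
  obtain ⟨α, β, R, hα, hαβ, hβ, hs⟩ := exists_box h1 h2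
  refine (differentiableOn_tsum_ker (isOpen_box α β R) two_pi_mul_pos
    (fun s hs => hs.1.le) (fun s hs => hs.2.1.le) (by linarith) (by linarith)
    (φ := fun _ s t => twist s expTay (y * t))
    (C := fun _ => 2 * Real.exp (Real.pi * R) * y ^ 2) (fun i s => ?_) (fun i s hs t ht => ?_)
    (fun i t => ?_) ?_).differentiableAt ((isOpen_box α β R).mem_nhds hs)
  · exact (continuous_twist s continuous_expTay).comp (continuous_const.mul continuous_id)
  · refine (norm_twist_expTay_le s y t).trans ?_
    have := exp_im_le_of_mem_box hs
    gcongr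
  · exact differentiable_twist (ψ := fun _ => expTay) (fun _ => differentiable_const _) _
  · exact (summable_kerBound (by linarith) hβ).mul_left _

theorem summable_norm_plana {s : ℂ} (h2 : s.re < 2) (y : ℝ) : Summable fun m => ‖plana s y m‖ := by
  refine Summable.of_nonneg_of_le (fun _ => norm_nonneg _) (fun m => ?_)
    ((summable_kerBound h2 h2).mul_left (2 * Real.exp (Real.pi * |s.im|) * y ^ 2))
  exact norm_integral_ker_le (two_pi_mul_pos m) le_rfl le_rfl (by linarith)
    ((continuous_twist s continuous_expTay).comp (continuous_const.mul continuous_id))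
    fun t _ => norm_twist_expTay_le s y t

/-- Evaluation of `plana` in the range `Re s < 1`, where each of the three pieces of the Taylor
remainder can be integrated separately by Euler's integral. -/
theorem plana_eq {s : ℂ} (hs : s.re < 1) (y : ℝ) (m : ℕ+) :
    plana s y m = Gamma (1 - s) * I * ((y + 2 * Real.pi * (m : ℕ) * I) ^ (s - 1)
      + (y - 2 * Real.pi * (m : ℕ) * I) ^ (s - 1)
      - 2 * sin (Real.pi * s / 2) * ((2 * Real.pi : ℝ) : ℂ) ^ (s - 1) * ((m : ℕ) : ℂ) ^ (s - 1)
      - y * (1 - s) * (2 * cos (Real.pi * s / 2)) * ((2 * Real.pi : ℝ) : ℂ) ^ (s - 2)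
        * ((m : ℕ) : ℂ) ^ (s - 2)) := by
  have hc := two_pi_mul_pos m
  set c : ℝ := 2 * Real.pi * (m : ℕ) with hcdef
  have hI : ∀ τ : ℝ, IntegrableOn (fun t : ℝ => cexp (-(c * t)) * (t : ℂ) ^ (-s) * expTay (τ * t))
      (Ioi 0) := fun τ => by
    refine integrableOn_ker hc (by linarith)
      (continuous_expTay.comp (continuous_const.mul continuous_id)) (C := τ ^ 2) fun t _ => ?_
    have := norm_expTay_le (τ * t)
    rwa [mul_pow] at this
  have e1 := integral_ker_expTay hc hs (-y)
  have e2 := integral_ker_expTay hc hs y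
  have hsplit : plana s y m =
      cexp (Real.pi * s / 2 * I) *
        (∫ t in Ioi (0 : ℝ), cexp (-(c * t)) * (t : ℂ) ^ (-s) * expTay (-y * t))
      - cexp (-(Real.pi * s / 2 * I)) *
        (∫ t in Ioi (0 : ℝ), cexp (-(c * t)) * (t : ℂ) ^ (-s) * expTay (y * t)) := by
    rw [← integral_const_mul, ← integral_const_mul,
      ← integral_sub ((hI (-y)).const_mul _) ((hI y).const_mul _)]
    refine setIntegral_congr_fun measurableSet_Ioi fun t ht => ?_
    simp only [twist, neg_mul]
    ring
  have hre1 : 0 < ((c : ℂ) + ((-y : ℝ) : ℂ) * I).re := by simpa using hc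
  have hre2 : 0 < ((c : ℂ) + (y : ℂ) * I).re := by simpa using hc
  have p1 := I_mul_cpow hre1 (s - 1)
  have p2 := neg_I_mul_cpow hre2 (s - 1)
  have q1 : I * ((c : ℂ) + ((-y : ℝ) : ℂ) * I) = y + 2 * Real.pi * (m : ℕ) * I := by
    rw [hcdef]; push_cast; linear_combination (-(y : ℂ)) * I_mul_I
  have q2 : -I * ((c : ℂ) + (y : ℂ) * I) = y - 2 * Real.pi * (m : ℕ) * I := by
    rw [hcdef]; push_cast; linear_combination (-(y : ℂ)) * I_mul_I
  have r1 : cexp (Real.pi / 2 * I * (s - 1)) = -I * cexp (Real.pi * s / 2 * I) := by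
    rw [show (Real.pi / 2 * I * (s - 1) : ℂ) = Real.pi * s / 2 * I + -(Real.pi / 2 * I) by ring,
      Complex.exp_add, Complex.exp_neg, Complex.exp_pi_div_two_mul_I, inv_I]; ring
  have r2 : cexp (-(Real.pi / 2 * I * (s - 1))) = I * cexp (-(Real.pi * s / 2 * I)) := by
    rw [show (-(Real.pi / 2 * I * (s - 1)) : ℂ) = -(Real.pi * s / 2 * I) + (Real.pi / 2 * I)
      by ring, Complex.exp_add, Complex.exp_pi_div_two_mul_I]; ring
  rw [q1, r1] at p1
  rw [q2, r2] at p2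
  have hcp : ∀ w : ℂ, (c : ℂ) ^ w = ((2 * Real.pi : ℝ) : ℂ) ^ w * ((m : ℕ) : ℂ) ^ w := fun w => by
    rw [hcdef, ofReal_mul, mul_cpow_ofReal_nonneg (by positivity) (by positivity)]
    simp
  have hsin := Complex.two_sin (Real.pi * s / 2)
  have hcos := Complex.two_cos (Real.pi * s / 2)
  rw [neg_mul] at hsin hcos
  rw [hsplit, e1, e2, hcp, hcp, p1, p2, hsin, hcos]
  push_cast
  linear_combination (Gamma (1 - s)) * ((cexp (Real.pi * s / 2 * I) * (c + (-y) * I) ^ (s - 1)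
    - cexp (-(Real.pi * s / 2 * I)) * (c + y * I) ^ (s - 1)) + (cexp (-(Real.pi * s / 2 * I)) - cexp (Real.pi * s / 2 * I))
    * (2 * Real.pi) ^ (s - 1) * ((m : ℕ) : ℂ) ^ (s - 1)) * I_mul_I

theorem pnat_ne_zero (m : ℕ+) : ((m : ℕ) : ℂ) ≠ 0 := Nat.cast_ne_zero.2 m.ne_zero

theorem pnat_pos (m : ℕ+) : (0 : ℝ) < (m : ℕ) := by exact_mod_cast m.pos

theorem norm_pnat_cpow (m : ℕ+) (w : ℂ) : ‖((m : ℕ) : ℂ) ^ w‖ = ((m : ℕ) : ℝ) ^ w.re := by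
  rw [norm_natCast_cpow_of_pos m.pos]

theorem summable_norm_pnat_cpow {w : ℂ} (hw : w.re < -1) :
    Summable fun m : ℕ+ => ‖((m : ℕ) : ℂ) ^ w‖ := by
  simp only [norm_pnat_cpow]
  exact summable_pnat_rpow hw

theorem hasSum_zeta {w : ℂ} (hw : 1 < w.re) :
    HasSum (fun m : ℕ+ => ((m : ℕ) : ℂ) ^ (-w)) (riemannZeta w) := by
  have h := (summable_norm_pnat_cpow (w := -w) (by simp; linarith)).of_norm.hasSum
  have e : riemannZeta w = ∑' m : ℕ+, ((m : ℕ) : ℂ) ^ (-w) := by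
    rw [zeta_eq_tsum_one_div_nat_add_one_cpow hw,
      tsum_pnat_eq_tsum_succ (f := fun n : ℕ => (n : ℂ) ^ (-w))]
    refine tsum_congr fun n => ?_
    rw [cpow_neg, one_div]; push_cast; rfl
  rw [e]; exact h

/-- For `Re s < 0` the expansion is Lipschitz' formula combined with the functional equation of
`ζ` at `s` and at `s - 1`. -/
theorem tsum_plana_of_re_neg {s : ℂ} (hs : s.re < 0) {y : ℝ} (hy : 0 < y) :
    ∑' m, plana s y m = I * (∑' n : ℕ+, ((n : ℕ) : ℂ) ^ (-s) * cexp (-(y * (n : ℕ)))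
      - Gamma (1 - s) * (y : ℂ) ^ (s - 1) - riemannZeta s + y * riemannZeta (s - 1)) := by
  have hz1 := hasSum_zeta (w := 1 - s) (by simp; linarith)
  have hz2 := hasSum_zeta (w := 2 - s) (by simp; linarith)
  rw [show -(1 - s) = s - 1 by ring] at hz1
  rw [show -(2 - s) = s - 2 by ring] at hz2
  have hb := (summable_pnat_rpow (p := s.re - 1) (by linarith)).mul_right
    (Real.exp (Real.pi * |s.im|))
  have hA : Summable fun m : ℕ+ => (y + 2 * Real.pi * (m : ℕ) * I : ℂ) ^ (s - 1) := by
    refine Summable.of_norm_bounded hb fun m => ?_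
    have := norm_lip_le hs hy (w := (m : ℕ)) (pnat_pos m).ne'
    rw [abs_of_pos (pnat_pos m)] at this
    exact_mod_cast this
  have hB : Summable fun m : ℕ+ => (y - 2 * Real.pi * (m : ℕ) * I : ℂ) ^ (s - 1) := by
    refine Summable.of_norm_bounded hb fun m => ?_
    have := norm_lip_le hs hy (w := -(m : ℕ)) (neg_ne_zero.2 (pnat_pos m).ne')
    rw [abs_neg, abs_of_pos (pnat_pos m)] at this
    have e : (y + 2 * Real.pi * ((-(m : ℕ) : ℝ) : ℂ) * I : ℂ) = y - 2 * Real.pi * (m : ℕ) * I := by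
      push_cast; ring
    rwa [e] at this
  have hsum := (((hA.hasSum.add hB.hasSum).sub (hz1.mul_left
    (2 * sin (Real.pi * s / 2) * ((2 * Real.pi : ℝ) : ℂ) ^ (s - 1)))).sub (hz2.mul_left
    (y * (1 - s) * (2 * cos (Real.pi * s / 2)) * ((2 * Real.pi : ℝ) : ℂ) ^ (s - 2)))).mul_left
    (Gamma (1 - s) * I)
  have e : ∑' m, plana s y m = _ := (tsum_congr fun m => plana_eq (by linarith) y m).trans
    hsum.tsum_eq
  have hne : ∀ (z : ℂ), 0 < z.re → ∀ n : ℕ, z ≠ -n := fun z hz n h => by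
    rw [h] at hz; simp at hz
    have : (0 : ℝ) ≤ n := n.cast_nonneg
    linarith
  have h1ne : s ≠ 0 := fun h => by simp [h] at hs
  have f1 := riemannZeta_one_sub (s := 1 - s) (hne _ (by simp; linarith))
    (fun h => h1ne (by linear_combination -h))
  have f2 := riemannZeta_one_sub (s := 2 - s) (hne _ (by simp; linarith))
    (fun h => by
      have := congrArg re h
      simp at this; linarith)
  have hG : Gamma (2 - s) = (1 - s) * Gamma (1 - s) := by
    rw [← Gamma_add_one]
    · congr 1; ring
    · intro h
      have := congrArg re h
      simp at this; linarith
  rw [show 1 - (1 - s) = s by ring, show -(1 - s) = s - 1 by ring,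
    show (Real.pi : ℂ) * (1 - s) / 2 = Real.pi / 2 - Real.pi * s / 2 by ring,
    cos_pi_div_two_sub] at f1
  rw [show 1 - (2 - s) = s - 1 by ring, show -(2 - s) = s - 2 by ring,
    show (Real.pi : ℂ) * (2 - s) / 2 = Real.pi - Real.pi * s / 2 by ring,
    cos_pi_sub, hG] at f2
  rw [e, lipschitz hs hy, f1, f2]
  push_cast
  ring

theorem differentiableAt_tsum_exp {y : ℝ} (hy : 0 < y) {s : ℂ} (hs : -1 < s.re) :
    DifferentiableAt ℂ
      (fun s => ∑' n : ℕ+, ((n : ℕ) : ℂ) ^ (-s) * cexp (-(y * (n : ℕ)))) s := by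
  have hU : IsOpen {s : ℂ | -1 < s.re} := isOpen_lt continuous_const continuous_re
  have hsum : Summable fun n : ℕ+ => ((n : ℕ) : ℝ) * Real.exp (-y * (n : ℕ)) := by
    have := (Real.summable_pow_mul_exp_neg_nat_mul 1 hy).comp_injective PNat.coe_injective
    simpa [Function.comp_def] using this
  refine (differentiableOn_tsum_of_summable_norm hsum (fun n => ?_) hU
    (fun n s hs => ?_)).differentiableAt (hU.mem_nhds hs)
  · have h : Differentiable ℂ fun s : ℂ => ((n : ℕ) : ℂ) ^ (-s) := fun s =>
      (differentiableAt_id.neg).const_cpow (Or.inl (pnat_ne_zero n))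
    exact (h.mul_const _).differentiableOn
  · have hs' : -1 < s.re := hs
    rw [norm_mul, norm_pnat_cpow, norm_exp]
    have h1 : (1 : ℝ) ≤ (n : ℕ) := by exact_mod_cast n.pos
    have h2 : ((n : ℕ) : ℝ) ^ (-s).re ≤ (n : ℕ) := by
      calc _ ≤ ((n : ℕ) : ℝ) ^ (1 : ℝ) :=
            Real.rpow_le_rpow_of_exponent_le h1 (by simp; linarith)
        _ = _ := Real.rpow_one _
    have h3 : (-((y : ℂ) * (n : ℕ))).re = -y * (n : ℕ) := by simp
    rw [h3]
    gcongr

theorem differentiableAt_Gamma_of_re {z : ℂ} (hz : -1 < z.re) (h0 : z ≠ 0) :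
    DifferentiableAt ℂ Gamma z := by
  refine differentiableAt_Gamma z fun m h => ?_
  rcases m with _ | m
  · exact h0 (by simpa using h)
  · rw [h] at hz
    simp at hz
    have : (0 : ℝ) ≤ m := m.cast_nonneg
    linarith

/-- The sum over `m` of `plana s y m` is `i` times the remainder of `∑ n^{-s} e^{-ny}` after its
first terms `Γ(1-s) y^{s-1} + ζ(s) - y ζ(s-1)` as `y → 0`; both sides continue from `Re s < 0`. -/
theorem tsum_plana {s : ℂ} (h1 : -1 < s.re) (h2 : s.re < 2) (hs : s ≠ 1) {y : ℝ} (hy : 0 < y) :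
    ∑' m, plana s y m = I * (∑' n : ℕ+, ((n : ℕ) : ℂ) ^ (-s) * cexp (-(y * (n : ℕ)))
      - Gamma (1 - s) * (y : ℂ) ^ (s - 1) - riemannZeta s + y * riemannZeta (s - 1)) := by
  refine eq_on_strip (f := fun s => ∑' m, plana s y m) (g := fun s =>
    I * (∑' n : ℕ+, ((n : ℕ) : ℂ) ^ (-s) * cexp (-(y * (n : ℕ)))
      - Gamma (1 - s) * (y : ℂ) ^ (s - 1) - riemannZeta s + y * riemannZeta (s - 1)))
    (E := {1}) (c := -1) (d := 0) ?_ le_rfl (by norm_num) (by norm_num)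
    (fun s h1 h2 _ => differentiableAt_tsum_plana y h1 h2) (fun s h1 h2 hs => ?_)
    (fun s h1 h2 _ => tsum_plana_of_re_neg h2 hy) s h1 h2 hs
  · rintro z rfl; simp
  · have hs1 : s ≠ 1 := hs
    have d1 := differentiableAt_tsum_exp hy h1
    have hy0 : (y : ℂ) ≠ 0 := ofReal_ne_zero.2 hy.ne'
    have d2 : DifferentiableAt ℂ (fun s => Gamma (1 - s)) s := by
      have := differentiableAt_Gamma_of_re (z := 1 - s) (by simp; linarith) (sub_ne_zero.2 hs1.symm)
      exact this.comp s (by fun_prop)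
    have d3 : DifferentiableAt ℂ (fun s => (y : ℂ) ^ (s - 1)) s :=
      (differentiableAt_id.sub_const 1).const_cpow (Or.inl hy0)
    have d4 := differentiableAt_riemannZeta hs1
    have d5 : DifferentiableAt ℂ (fun s => riemannZeta (s - 1)) s := by
      have := differentiableAt_riemannZeta (s := s - 1) (fun h => by
        have := congrArg re h
        simp at this; linarith)
      exact this.comp s (by fun_prop)
    fun_prop

/-! ### The double series `G(s)` -/

/-- The summand `g(l, m) = l^{-s} ∫₀^∞ e^{-2πmt} t^{-s} (e^{iπs/2} p(-t/l) - e^{-iπs/2} p(t/l)) dt`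
of the double series, where `p(τ)` is the Taylor remainder `powTay s τ`. Summed over `m` and then
`l` it gives the right-hand side of the identity, summed over `l m = n` the `n`-th Bessel term. -/
def gTerm (s : ℂ) (p : ℕ+ × ℕ+) : ℂ :=
  ∫ t in Ioi (0 : ℝ), cexp (-((2 * Real.pi * (p.2 : ℕ) : ℝ) * t)) * (t : ℂ) ^ (-s) *
    (((p.1 : ℕ) : ℂ) ^ (-s) * twist s (powTay s) ((1 / (p.1 : ℕ)) * t))

theorem norm_gKer_le {α β R : ℝ} (hα : -1 < α) {s : ℂ} (hs : s ∈ box α β R) (l : ℕ+) (t : ℝ) :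
    ‖((l : ℕ) : ℂ) ^ (-s) * twist s (powTay s) ((1 / (l : ℕ)) * t)‖
      ≤ 2 * Real.exp (Real.pi * R) * (R * (R + 1) * Real.exp (Real.pi * R))
        * ((l : ℕ) : ℝ) ^ (-α - 2) * t ^ 2 := by
  have hE := exp_im_le_of_mem_box hs
  have hl := pnat_pos l
  have hl1 : (1 : ℝ) ≤ (l : ℕ) := by exact_mod_cast l.pos
  have hR : 0 ≤ R := (norm_nonneg s).trans hs.2.2.le
  have hss : ‖s * (s + 1)‖ ≤ R * (R + 1) := by
    rw [norm_mul]
    have h1 := hs.2.2.le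
    have h2 : ‖s + 1‖ ≤ R + 1 := (norm_add_le _ _).trans (by simpa using h1)
    gcongr
  have hψ : ∀ τ, ‖powTay s τ‖ ≤ R * (R + 1) * Real.exp (Real.pi * R) * τ ^ 2 := fun τ => by
    refine (norm_powTay_le (by linarith [hs.1]) τ).trans ?_
    gcongr
  have h1 := norm_twist_le (s := s) hψ ((1 / (l : ℕ)) * t)
  have h2 : ‖((l : ℕ) : ℂ) ^ (-s)‖ ≤ ((l : ℕ) : ℝ) ^ (-α) := by
    rw [norm_pnat_cpow]
    exact Real.rpow_le_rpow_of_exponent_le hl1 (by simp; linarith [hs.1])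
  have h3 : ((l : ℕ) : ℝ) ^ (-α - 2) = ((l : ℕ) : ℝ) ^ (-α) * (1 / (l : ℕ)) ^ 2 := by
    rw [Real.rpow_sub hl, div_pow, one_pow, div_eq_mul_one_div]; norm_cast
  rw [norm_mul, h3]
  calc _ ≤ ((l : ℕ) : ℝ) ^ (-α) * (2 * Real.exp (Real.pi * R) *
        (R * (R + 1) * Real.exp (Real.pi * R)) * ((1 / (l : ℕ)) * t) ^ 2) := by
        refine mul_le_mul h2 (h1.trans ?_) (norm_nonneg _) (by positivity)
        gcongr
    _ = _ := by ring

theorem continuous_gKer (s : ℂ) (l : ℕ+) :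
    Continuous fun t : ℝ => ((l : ℕ) : ℂ) ^ (-s) * twist s (powTay s) ((1 / (l : ℕ)) * t) :=
  continuous_const.mul ((continuous_twist s (continuous_powTay s)).comp
    (continuous_const.mul continuous_id))

theorem summable_gBound {α β : ℝ} (C : ℝ) (hα : -1 < α) (hα2 : α < 2) (hβ : β < 2) :
    Summable fun p : ℕ+ × ℕ+ =>
      C * ((p.1 : ℕ) : ℝ) ^ (-α - 2) * kerBound α β (2 * Real.pi * (p.2 : ℕ)) := by
  have h1 := (summable_pnat_rpow (p := -α - 2) (by linarith)).mul_left C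
  have h2 := summable_kerBound hα2 hβ
  have h3 := h1.norm.mul_of_nonneg h2.norm (fun _ => norm_nonneg _) (fun _ => norm_nonneg _)
  refine Summable.of_norm (h3.congr fun p => ?_)
  simp only [norm_mul]

theorem summable_norm_gTerm {s : ℂ} (h1 : -1 < s.re) (h2 : s.re < 2) :
    Summable fun p => ‖gTerm s p‖ := by
  obtain ⟨α, β, R, hα, hαβ, hβ, hs⟩ := exists_box h1 h2
  refine Summable.of_nonneg_of_le (fun _ => norm_nonneg _) (fun p => ?_)
    (summable_gBound (2 * Real.exp (Real.pi * R) * (R * (R + 1) * Real.exp (Real.pi * R))) hα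
      (by linarith) hβ)
  exact norm_integral_ker_le (two_pi_mul_pos p.2) hs.1.le hs.2.1.le (by linarith)
    (continuous_gKer s p.1) fun t _ => norm_gKer_le hα hs p.1 t

theorem differentiableAt_tsum_gTerm {s : ℂ} (h1 : -1 < s.re) (h2 : s.re < 2) :
    DifferentiableAt ℂ (fun s => ∑' p, gTerm s p) s := by
  obtain ⟨α, β, R, hα, hαβ, hβ, hs⟩ := exists_box h1 h2
  refine (differentiableOn_tsum_ker (isOpen_box α β R)
    (c := fun p : ℕ+ × ℕ+ => 2 * Real.pi * (p.2 : ℕ)) (fun p => two_pi_mul_pos p.2)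
    (fun s hs => hs.1.le) (fun s hs => hs.2.1.le) (by linarith) (by linarith)
    (φ := fun p s t => ((p.1 : ℕ) : ℂ) ^ (-s) * twist s (powTay s) ((1 / (p.1 : ℕ)) * t))
    (fun p s => continuous_gKer s p.1) (fun p s hs t _ => norm_gKer_le hα hs p.1 t)
    (fun p t => ?_) ?_).differentiableAt ((isOpen_box α β R).mem_nhds hs)
  · have h : Differentiable ℂ fun s : ℂ => ((p.1 : ℕ) : ℂ) ^ (-s) := fun s =>
      (differentiableAt_id.neg).const_cpow (Or.inl (pnat_ne_zero p.1))
    exact h.mul (differentiable_twist differentiable_powTay _)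
  · exact summable_gBound _ hα (by linarith) hβ

/-! ### Evaluation of `G(s)` for `1 < Re s < 2` -/

theorem ofReal_mul_cpow {r : ℝ} (hr : 0 < r) {z : ℂ} (hz : z ≠ 0) (w : ℂ) :
    (r * z) ^ w = (r : ℂ) ^ w * z ^ w := by
  have hr0 : (r : ℂ) ≠ 0 := ofReal_ne_zero.2 hr.ne'
  rw [cpow_def_of_ne_zero (mul_ne_zero hr0 hz), cpow_def_of_ne_zero hr0, cpow_def_of_ne_zero hz,
    log_ofReal_mul hr hz, ← Complex.exp_add, ofReal_log hr.le]
  congr 1; ring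

/-- `l^{-s}` times the Taylor remainder of `(1 + iτ/l)^{-s}` is a Laplace transform of the Taylor
remainder of `e^{-iyτ}`. -/
theorem cpow_mul_powTay {c : ℝ} (hc : 0 < c) {s : ℂ} (hs : 0 < s.re) (τ : ℝ) :
    Gamma s * ((c : ℂ) ^ (-s) * powTay s (1 / c * τ))
      = ∫ y in Ioi (0 : ℝ), cexp (-(c * y)) * (y : ℂ) ^ (s - 1) * expTay (τ * y) := by
  have h := integral_ker_expTay hc (s := 1 - s) (by simpa using hs) τ
  simp only [neg_sub] at h
  rw [h, show 1 - (1 - s) = s by ring, show 1 - s - 1 = -s by ring,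
    show 1 - s - 2 = -s - 1 by ring]
  have hc0 : (c : ℂ) ≠ 0 := ofReal_ne_zero.2 hc.ne'
  have e : (c : ℂ) + τ * I = c * (1 + ((1 / c * τ : ℝ) : ℂ) * I) := by
    push_cast; field_simp
  rw [e, ofReal_mul_cpow hc (slitPlane_ne_zero (one_add_mul_I_mem_slitPlane _)), powTay,
    cpow_sub _ _ hc0, cpow_one]
  push_cast
  field_simp

theorem cpow_mul_twist_powTay {c : ℝ} (hc : 0 < c) {s : ℂ} (hs : 0 < s.re) (t : ℝ) :
    Gamma s * ((c : ℂ) ^ (-s) * twist s (powTay s) (1 / c * t))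
      = ∫ y in Ioi (0 : ℝ), cexp (-(c * y)) * (y : ℂ) ^ (s - 1) * twist s expTay (y * t) := by
  have hI : ∀ τ : ℝ, IntegrableOn (fun y : ℝ => cexp (-(c * y)) * (y : ℂ) ^ (s - 1)
      * expTay (τ * y)) (Ioi 0) := fun τ => by
    have := integrableOn_ker (s := 1 - s) hc (by simp; linarith)
      (continuous_expTay.comp (continuous_const.mul continuous_id)) (C := τ ^ 2) fun t _ => by
        have := norm_expTay_le (τ * t)
        rwa [mul_pow] at this
    rw [neg_sub] at this
    exact this
  have e1 := cpow_mul_powTay hc hs t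
  have e2 := cpow_mul_powTay hc hs (-t)
  have : (∫ y in Ioi (0 : ℝ), cexp (-(c * y)) * (y : ℂ) ^ (s - 1) * twist s expTay (y * t)) =
      cexp (Real.pi * s / 2 * I) *
        (∫ y in Ioi (0 : ℝ), cexp (-(c * y)) * (y : ℂ) ^ (s - 1) * expTay (-t * y))
      - cexp (-(Real.pi * s / 2 * I)) *
        (∫ y in Ioi (0 : ℝ), cexp (-(c * y)) * (y : ℂ) ^ (s - 1) * expTay (t * y)) := by
    rw [← integral_const_mul, ← integral_const_mul,
      ← integral_sub ((hI (-t)).const_mul _) ((hI t).const_mul _)]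
    refine setIntegral_congr_fun measurableSet_Ioi fun y _ => ?_
    simp only [twist, neg_mul, mul_comm y t]
    ring
  rw [this, ← e1, ← e2, twist, mul_neg]
  ring

/-- The integrand of the double integral behind `gTerm`. -/
def gInt (s : ℂ) (l m : ℕ+) (t y : ℝ) : ℂ :=
  cexp (-((2 * Real.pi * (m : ℕ) : ℝ) * t)) * (t : ℂ) ^ (-s) *
    (cexp (-((l : ℕ) * y)) * (y : ℂ) ^ (s - 1) * twist s expTay (y * t))

theorem norm_gInt_le (s : ℂ) (l m : ℕ+) {t y : ℝ} (ht : 0 < t) (hy : 0 < y) :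
    ‖gInt s l m t y‖ ≤ (2 * Real.exp (Real.pi * |s.im|) *
        (t ^ (2 - s.re) * Real.exp (-(2 * Real.pi * (m : ℕ) * t)))) *
        (y ^ (s.re + 1) * Real.exp (-((l : ℕ) * y))) := by
  have h := norm_twist_expTay_le s y t
  have e1 : t ^ (2 - s.re) = t ^ (-s.re) * t ^ 2 := by
    rw [← Real.rpow_natCast t 2, ← Real.rpow_add ht]; congr 1; push_cast; ring
  have e2 : y ^ (s.re + 1) = y ^ (s.re - 1) * y ^ 2 := by
    rw [← Real.rpow_natCast y 2, ← Real.rpow_add hy]; congr 1; push_cast; ring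
  simp only [gInt, norm_mul, norm_cpow_eq_rpow_re_of_pos ht, norm_cpow_eq_rpow_re_of_pos hy,
    norm_exp]
  have e3 : (-(((2 * Real.pi * (m : ℕ) : ℝ) : ℂ) * t)).re = -(2 * Real.pi * (m : ℕ) * t) := by
    rw [← ofReal_mul, ← ofReal_neg, ofReal_re]
  have e4 : (-(((l : ℕ) : ℂ) * y)).re = -((l : ℕ) * y) := by simp
  rw [e3, e4, e1, e2, neg_re, sub_re, one_re]
  calc _ ≤ Real.exp (-(2 * Real.pi * (m : ℕ) * t)) * t ^ (-s.re) *
        (Real.exp (-((l : ℕ) * y)) * y ^ (s.re - 1) *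
          (2 * Real.exp (Real.pi * |s.im|) * y ^ 2 * t ^ 2)) := by gcongr
    _ = _ := by ring

theorem integrable_gInt {s : ℂ} (h1 : -2 < s.re) (h2 : s.re < 3) (l m : ℕ+) :
    Integrable (Function.uncurry (gInt s l m))
      ((volume.restrict (Ioi (0 : ℝ))).prod (volume.restrict (Ioi 0))) := by
  have i1 := (integrableOn_rpow_mul_exp (a := 2 - s.re) (by linarith) (two_pi_mul_pos m)).const_mul
    (2 * Real.exp (Real.pi * |s.im|))
  have i2 := integrableOn_rpow_mul_exp (a := s.re + 1) (by linarith) (pnat_pos l)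
  refine (i1.mul_prod i2).mono' ?_ ?_
  · rw [Measure.prod_restrict]
    refine ContinuousOn.aestronglyMeasurable (fun p hp => ?_) (measurableSet_Ioi.prod measurableSet_Ioi)
    have c1 : ContinuousAt (fun p : ℝ × ℝ => (p.1 : ℂ) ^ (-s)) p :=
      ContinuousAt.comp (f := fun p : ℝ × ℝ => p.1)
        (continuousAt_ofReal_cpow_const _ _ (Or.inr (ne_of_gt hp.1))) continuousAt_fst
    have c2 : ContinuousAt (fun p : ℝ × ℝ => (p.2 : ℂ) ^ (s - 1)) p :=
      ContinuousAt.comp (f := fun p : ℝ × ℝ => p.2)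
        (continuousAt_ofReal_cpow_const _ _ (Or.inr (ne_of_gt hp.2))) continuousAt_snd
    have c3 : Continuous (fun p : ℝ × ℝ => twist s expTay (p.2 * p.1)) :=
      (continuous_twist s continuous_expTay).comp (continuous_snd.mul continuous_fst)
    have c4 : Continuous (fun p : ℝ × ℝ => cexp (-((2 * Real.pi * (m : ℕ) : ℝ) * p.1))) := by
      fun_prop
    have c5 : Continuous (fun p : ℝ × ℝ => cexp (-((l : ℕ) * p.2))) := by fun_prop
    exact ((c4.continuousAt.mul c1).mul ((c5.continuousAt.mul c2).mul
      c3.continuousAt)).continuousWithinAt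
  · rw [Measure.prod_restrict]
    filter_upwards [ae_restrict_mem (measurableSet_Ioi.prod measurableSet_Ioi)] with p hp
    exact norm_gInt_le s l m hp.1 hp.2

theorem integral_gInt_left (s : ℂ) (l m : ℕ+) (y : ℝ) :
    ∫ t in Ioi (0 : ℝ), gInt s l m t y
      = cexp (-((l : ℕ) * y)) * (y : ℂ) ^ (s - 1) * plana s y m := by
  rw [plana, ← integral_const_mul]
  refine integral_congr_ae (ae_of_all _ fun t => ?_)
  simp only [gInt]; ring

/-- Fubini turns `Γ(s) g(l, m)` into the Mellin–Laplace transform of `plana s y m` in `y`. -/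
theorem gTerm_eq {s : ℂ} (h1 : 0 < s.re) (h2 : s.re < 3) (l m : ℕ+) :
    Gamma s * gTerm s (l, m) = ∫ y in Ioi (0 : ℝ),
      cexp (-((l : ℕ) * y)) * (y : ℂ) ^ (s - 1) * plana s y m := by
  have h := integral_integral_swap (integrable_gInt (s := s) (by linarith) h2 l m)
  simp only [integral_gInt_left] at h
  rw [← h, gTerm, ← integral_const_mul]
  refine integral_congr_ae (ae_of_all _ fun t => ?_)
  have := cpow_mul_twist_powTay (pnat_pos l) h1 t
  simp only [gInt, integral_const_mul]
  push_cast at this ⊢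
  rw [← this]
  ring

/-! ### Summation over `m`: the shifted sums `∑ n^{-s} (n+l)^{-s}` -/

theorem norm_plana_le {s : ℂ} (h2 : s.re < 3) (y : ℝ) (m : ℕ+) :
    ‖plana s y m‖ ≤ 2 * Real.exp (Real.pi * |s.im|) * y ^ 2 *
      kerBound s.re s.re (2 * Real.pi * (m : ℕ)) :=
  norm_integral_ker_le (two_pi_mul_pos m) le_rfl le_rfl h2
    ((continuous_twist s continuous_expTay).comp (continuous_const.mul continuous_id))
    fun t _ => norm_twist_expTay_le s y t

theorem hasSum_gTerm_right {s : ℂ} (h1 : 0 < s.re) (h2 : s.re < 2) (l : ℕ+) :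
    HasSum (fun m => Gamma s * gTerm s (l, m)) (∫ y in Ioi (0 : ℝ),
      cexp (-((l : ℕ) * y)) * (y : ℂ) ^ (s - 1) * ∑' m, plana s y m) := by
  have hinteg : ∀ m, IntegrableOn (fun y : ℝ => cexp (-((l : ℕ) * y)) * (y : ℂ) ^ (s - 1)
      * plana s y m) (Ioi 0) := fun m => by
    have := (integrable_gInt (s := s) (by linarith) (by linarith) l m).integral_prod_right
    simp only [Function.uncurry, integral_gInt_left] at this
    exact this
  have i2 := integrableOn_rpow_mul_exp (a := s.re + 1) (by linarith) (pnat_pos l)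
  have hb : ∀ m, ∀ y ∈ Ioi (0 : ℝ),
      ‖cexp (-((l : ℕ) * y)) * (y : ℂ) ^ (s - 1) * plana s y m‖ ≤
        2 * Real.exp (Real.pi * |s.im|) * kerBound s.re s.re (2 * Real.pi * (m : ℕ)) *
        (y ^ (s.re + 1) * Real.exp (-((l : ℕ) * y))) := fun m y hy => by
    have hy : 0 < y := hy
    have h := norm_plana_le (s := s) (by linarith) y m
    have e2 : y ^ (s.re + 1) = y ^ (s.re - 1) * y ^ 2 := by
      rw [← Real.rpow_natCast y 2, ← Real.rpow_add hy]; congr 1; push_cast; ring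
    have e4 : (-(((l : ℕ) : ℂ) * y)).re = -((l : ℕ) * y) := by simp
    rw [norm_mul, norm_mul, norm_exp, norm_cpow_eq_rpow_re_of_pos hy, e4, e2, sub_re, one_re]
    calc _ ≤ Real.exp (-((l : ℕ) * y)) * y ^ (s.re - 1) * (2 * Real.exp (Real.pi * |s.im|) * y ^ 2 *
          kerBound s.re s.re (2 * Real.pi * (m : ℕ))) := by gcongr
      _ = _ := by ring
  have hsum : Summable fun m => ∫ y in Ioi (0 : ℝ),
      ‖cexp (-((l : ℕ) * y)) * (y : ℂ) ^ (s - 1) * plana s y m‖ := by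
    refine Summable.of_nonneg_of_le (fun m => integral_nonneg fun _ => norm_nonneg _) (fun m => ?_)
      (((summable_kerBound h2 h2).mul_left (2 * Real.exp (Real.pi * |s.im|))).mul_right
        (∫ y in Ioi (0 : ℝ), y ^ (s.re + 1) * Real.exp (-((l : ℕ) * y))))
    rw [← integral_const_mul]
    exact setIntegral_mono_on (hinteg m).norm (i2.const_mul _) measurableSet_Ioi (hb m)
  have := hasSum_integral_of_summable_integral_norm hinteg hsum
  simp only [tsum_mul_left] at this
  rw [show (fun m => Gamma s * gTerm s (l, m)) = _ from
    funext fun m => gTerm_eq h1 (by linarith) l m]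
  exact this

/-- The shifted sum `∑_n n^{-s} (n+l)^{-s}`. -/
def shiftSum (s : ℂ) (l : ℕ+) : ℂ := ∑' n : ℕ+, ((n : ℕ) : ℂ) ^ (-s) * ((n + l : ℕ) : ℂ) ^ (-s)

theorem hasSum_shift_integral {s : ℂ} (h1 : 1 < s.re) (l : ℕ+) :
    HasSum (fun n : ℕ+ => ((n : ℕ) : ℂ) ^ (-s) * (((n + l : ℕ) : ℂ) ^ (-s) * Gamma s))
      (∫ y in Ioi (0 : ℝ), ∑' n : ℕ+, ((n : ℕ) : ℂ) ^ (-s) *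
        ((y : ℂ) ^ (s - 1) * cexp (-(((n + l : ℕ) : ℂ) * y)))) := by
  have hpos : ∀ n : ℕ+, 0 < (((n + l : ℕ) : ℂ)).re := fun n => by
    have := pnat_pos n; have := pnat_pos l
    simp only [natCast_re]; push_cast; positivity
  have hinteg : ∀ n : ℕ+, IntegrableOn (fun y : ℝ => ((n : ℕ) : ℂ) ^ (-s) *
        ((y : ℂ) ^ (s - 1) * cexp (-(((n + l : ℕ) : ℂ) * y)))) (Ioi 0) := fun n =>
    (integrableOn_cpow_mul_cexp (by linarith) (hpos n)).const_mul _
  have i2 := integrableOn_rpow_mul_exp (a := s.re - 1) (by linarith) zero_lt_one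
  have hb : ∀ n : ℕ+, ∀ y ∈ Ioi (0 : ℝ), ‖((n : ℕ) : ℂ) ^ (-s) *
        ((y : ℂ) ^ (s - 1) * cexp (-(((n + l : ℕ) : ℂ) * y)))‖ ≤
        ‖((n : ℕ) : ℂ) ^ (-s)‖ * (y ^ (s.re - 1) * Real.exp (-(1 * y))) := fun n y hy => by
    have hy : 0 < y := hy
    rw [norm_mul, norm_mul, norm_exp, norm_cpow_eq_rpow_re_of_pos hy]
    have e4 : (-(((n + l : ℕ) : ℂ) * y)).re = -((n + l : ℕ) * y) := by
      rw [← ofReal_natCast, ← ofReal_mul, ← ofReal_neg, ofReal_re]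
    have h1 : (1 : ℝ) ≤ (n + l : ℕ) := by have := n.pos; exact_mod_cast (by omega : 1 ≤ (n : ℕ) + l)
    rw [e4, sub_re, one_re]
    gcongr
  have hsum : Summable fun n : ℕ+ => ∫ y in Ioi (0 : ℝ), ‖((n : ℕ) : ℂ) ^ (-s) *
        ((y : ℂ) ^ (s - 1) * cexp (-(((n + l : ℕ) : ℂ) * y)))‖ := by
    refine Summable.of_nonneg_of_le (fun m => integral_nonneg fun _ => norm_nonneg _) (fun m => ?_)
      ((summable_norm_pnat_cpow (w := -s) (by simp; linarith)).mul_right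
        (∫ y in Ioi (0 : ℝ), y ^ (s.re - 1) * Real.exp (-(1 * y))))
    rw [← integral_const_mul]
    exact setIntegral_mono_on (hinteg m).norm (i2.const_mul _) measurableSet_Ioi (hb m)
  have := hasSum_integral_of_summable_integral_norm hinteg hsum
  simp only [integral_const_mul, integral_cpow_mul_cexp (by linarith : 0 < s.re) (hpos _)] at this
  exact this

/-- The exponential sum `∑_n n^{-s} e^{-ny}`. -/
def expSum (s : ℂ) (y : ℝ) : ℂ := ∑' n : ℕ+, ((n : ℕ) : ℂ) ^ (-s) * cexp (-(y * (n : ℕ)))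

theorem norm_expSum_term_le (s : ℂ) {y : ℝ} (hy : 0 < y) (n : ℕ+) :
    ‖((n : ℕ) : ℂ) ^ (-s) * cexp (-(y * (n : ℕ)))‖ ≤ ‖((n : ℕ) : ℂ) ^ (-s)‖ := by
  rw [norm_mul, norm_exp]
  have e4 : (-((y : ℂ) * (n : ℕ))).re = -(y * (n : ℕ)) := by simp
  have := pnat_pos n
  rw [e4]
  refine mul_le_of_le_one_right (norm_nonneg _) (Real.exp_le_one_iff.2 ?_)
  have : 0 < y * (n : ℕ) := by positivity
  linarith

theorem integrable_mul_expSum {s : ℂ} (h1 : 1 < s.re) (l : ℕ+) :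
    IntegrableOn (fun y : ℝ => (y : ℂ) ^ (s - 1) * cexp (-((l : ℕ) * y)) * expSum s y) (Ioi 0) := by
  have hs := summable_norm_pnat_cpow (w := -s) (by simp; linarith)
  have i1 := integrableOn_cpow_mul_cexp (a := s) (r := (l : ℕ)) (by linarith) (by simp)
  refine Integrable.mul_bdd (c := ∑' n : ℕ+, ‖((n : ℕ) : ℂ) ^ (-s)‖) i1 ?_ ?_
  · refine ContinuousOn.aestronglyMeasurable ?_ measurableSet_Ioi
    exact continuousOn_tsum (fun n => by fun_prop) hs fun n y hy => norm_expSum_term_le s hy n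
  · filter_upwards [ae_restrict_mem measurableSet_Ioi] with y hy
    exact tsum_of_norm_bounded hs.hasSum fun n => norm_expSum_term_le s hy n

theorem integral_mul_expSum {s : ℂ} (h1 : 1 < s.re) (l : ℕ+) :
    ∫ y in Ioi (0 : ℝ), (y : ℂ) ^ (s - 1) * cexp (-((l : ℕ) * y)) * expSum s y
      = Gamma s * shiftSum s l := by
  have h := (hasSum_shift_integral h1 l).tsum_eq
  have e : Gamma s * shiftSum s l =
      ∑' n : ℕ+, ((n : ℕ) : ℂ) ^ (-s) * (((n + l : ℕ) : ℂ) ^ (-s) * Gamma s) := by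
    rw [shiftSum, ← tsum_mul_left]
    exact tsum_congr fun n => by ring
  rw [e, h]
  refine integral_congr_ae (ae_of_all _ fun y => ?_)
  simp only [expSum]
  rw [← tsum_mul_left]
  refine tsum_congr fun n => ?_
  have : cexp (-(((n + l : ℕ) : ℂ) * y)) = cexp (-((l : ℕ) * y)) * cexp (-(y * (n : ℕ))) := by
    rw [← Complex.exp_add]; congr 1; push_cast; ring
  rw [this]; ring

/-- The sum over `m`: the expansion `tsum_plana` is integrated term by term against
`e^{-ly} y^{s-1}`. The restriction `1 < Re s` makes the four terms separately integrable. -/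
theorem tsum_gTerm_right {s : ℂ} (h1 : 1 < s.re) (h2 : s.re < 2) (l : ℕ+) :
    ∑' m, gTerm s (l, m) = I * (shiftSum s l
      - Gamma (1 - s) * Gamma (2 * s - 1) / Gamma s * ((l : ℕ) : ℂ) ^ (-(2 * s - 1))
      - riemannZeta s * ((l : ℕ) : ℂ) ^ (-s)
      + s * riemannZeta (s - 1) * ((l : ℕ) : ℂ) ^ (-(s + 1))) := by
  have hG : Gamma s ≠ 0 := Gamma_ne_zero_of_re_pos (by linarith)
  have h := (hasSum_gTerm_right (by linarith) h2 l).tsum_eq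
  rw [tsum_mul_left] at h
  have hl : 0 < (((l : ℕ) : ℂ)).re := by simp
  have ha : 0 < (2 * s - 1).re := by simp; linarith
  have hb : 0 < s.re := by linarith
  have hc : 0 < (s + 1).re := by simp; linarith
  have i0 := integrable_mul_expSum h1 l
  have i1 := (integrableOn_cpow_mul_cexp ha hl).const_mul (Gamma (1 - s))
  have i2 := (integrableOn_cpow_mul_cexp hb hl).const_mul (riemannZeta s)
  have i3 := (integrableOn_cpow_mul_cexp hc hl).const_mul (riemannZeta (s - 1))
  have hs1 : s ≠ 1 := fun h => by simp [h] at h1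
  have e : ∫ y in Ioi (0 : ℝ), cexp (-((l : ℕ) * y)) * (y : ℂ) ^ (s - 1) * ∑' m, plana s y m
      = ∫ y in Ioi (0 : ℝ), I * (((y : ℂ) ^ (s - 1) * cexp (-((l : ℕ) * y)) * expSum s y
        - Gamma (1 - s) * ((y : ℂ) ^ (2 * s - 1 - 1) * cexp (-((l : ℕ) * y)))
        - riemannZeta s * ((y : ℂ) ^ (s - 1) * cexp (-((l : ℕ) * y)))
        + riemannZeta (s - 1) * ((y : ℂ) ^ (s + 1 - 1) * cexp (-((l : ℕ) * y))))) := by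
    refine setIntegral_congr_fun measurableSet_Ioi fun y hy => ?_
    have hy : 0 < y := hy
    have hy0 : (y : ℂ) ≠ 0 := ofReal_ne_zero.2 hy.ne'
    have p1 : (y : ℂ) ^ (2 * s - 1 - 1) = (y : ℂ) ^ (s - 1) * (y : ℂ) ^ (s - 1) := by
      rw [← cpow_add _ _ hy0]; congr 1; ring
    have p2 : (y : ℂ) ^ (s + 1 - 1) = (y : ℂ) ^ (s - 1) * y := by
      rw [show s + 1 - 1 = (s - 1) + 1 by ring, cpow_add _ _ hy0, cpow_one]
    rw [tsum_plana (by linarith) h2 hs1 hy, p1, p2, expSum]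
    ring
  have i01 : IntegrableOn (fun y : ℝ => (y : ℂ) ^ (s - 1) * cexp (-((l : ℕ) * y)) * expSum s y
      - Gamma (1 - s) * ((y : ℂ) ^ (2 * s - 1 - 1) * cexp (-((l : ℕ) * y)))) (Ioi 0) := i0.sub i1
  have i012 : IntegrableOn (fun y : ℝ => (y : ℂ) ^ (s - 1) * cexp (-((l : ℕ) * y)) * expSum s y
      - Gamma (1 - s) * ((y : ℂ) ^ (2 * s - 1 - 1) * cexp (-((l : ℕ) * y)))
      - riemannZeta s * ((y : ℂ) ^ (s - 1) * cexp (-((l : ℕ) * y)))) (Ioi 0) := i01.sub i2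
  rw [e, integral_const_mul, integral_add i012 i3, integral_sub i01 i2,
    integral_sub i0 i1, integral_const_mul, integral_const_mul, integral_const_mul,
    integral_mul_expSum h1, integral_cpow_mul_cexp ha hl, integral_cpow_mul_cexp hb hl,
    integral_cpow_mul_cexp hc hl, Gamma_add_one s (fun h => by simp [h] at hb)] at h
  apply mul_left_cancel₀ hG
  rw [h]
  field_simp

/-! ### Summation over `l` and continuation to the strip -/

theorem summable_pair {s : ℂ} (h1 : 1 < s.re) :
    Summable fun p : ℕ+ × ℕ+ => ((p.1 : ℕ) : ℂ) ^ (-s) * ((p.2 : ℕ) : ℂ) ^ (-s) := by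
  have h : Summable fun n : ℕ+ => ‖((n : ℕ) : ℂ) ^ (-s)‖ :=
    summable_norm_pnat_cpow (by simpa using h1)
  exact summable_mul_of_summable_norm (f := fun n : ℕ+ => ((n : ℕ) : ℂ) ^ (-s))
    (g := fun n : ℕ+ => ((n : ℕ) : ℂ) ^ (-s)) h h

theorem tsum_pair {s : ℂ} (h1 : 1 < s.re) :
    ∑' p : ℕ+ × ℕ+, ((p.1 : ℕ) : ℂ) ^ (-s) * ((p.2 : ℕ) : ℂ) ^ (-s) = riemannZeta s ^ 2 := by
  have h : Summable fun n : ℕ+ => ‖((n : ℕ) : ℂ) ^ (-s)‖ :=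
    summable_norm_pnat_cpow (by simpa using h1)
  rw [← tsum_mul_tsum_of_summable_norm h h, (hasSum_zeta h1).tsum_eq, sq]

/-- The pairs `(n, n + l)`: the part of the square strictly above the diagonal. -/
theorem tsum_pair_lt (f : ℕ+ × ℕ+ → ℂ) :
    ∑' p : ℕ+ × ℕ+, {p : ℕ+ × ℕ+ | p.1 < p.2}.indicator f p
      = ∑' q : ℕ+ × ℕ+, f (q.2, q.2 + q.1) := by
  have hinj : Function.Injective fun q : ℕ+ × ℕ+ => (q.2, q.2 + q.1) := by
    rintro ⟨a, b⟩ ⟨c, d⟩ h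
    simp only [Prod.mk.injEq] at h
    obtain ⟨rfl, h⟩ := h
    simpa using h
  rw [← hinj.tsum_eq]
  · refine tsum_congr fun q => ?_
    rw [Set.indicator_of_mem]
    exact PNat.lt_add_right _ _
  · intro p hp
    have hp : p ∈ {p : ℕ+ × ℕ+ | p.1 < p.2} := Set.mem_of_indicator_ne_zero hp
    have hp : p.1 < p.2 := hp
    exact ⟨(p.2 - p.1, p.1), by ext <;> simp [PNat.add_sub_of_lt hp]⟩

/-- The pairs above the diagonal make up half of `ζ(s)²` minus its diagonal `ζ(2s)`. -/
theorem tsum_shiftSum {s : ℂ} (h1 : 1 < s.re) :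
    (Summable fun q : ℕ+ × ℕ+ => ((q.2 : ℕ) : ℂ) ^ (-s) * ((q.2 + q.1 : ℕ) : ℂ) ^ (-s)) ∧
    ∑' l, shiftSum s l = (riemannZeta s ^ 2 - riemannZeta (2 * s)) / 2 := by
  set f : ℕ+ × ℕ+ → ℂ := fun p => ((p.1 : ℕ) : ℂ) ^ (-s) * ((p.2 : ℕ) : ℂ) ^ (-s) with hf
  have hs : Summable f := summable_pair h1
  have hinj : Function.Injective fun q : ℕ+ × ℕ+ => (q.2, q.2 + q.1) := by
    rintro ⟨a, b⟩ ⟨c, d⟩ h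
    simp only [Prod.mk.injEq] at h
    obtain ⟨rfl, h⟩ := h
    simpa using h
  have hsum : Summable fun q : ℕ+ × ℕ+ => f (q.2, q.2 + q.1) := hs.comp_injective hinj
  have hsum' : Summable fun q : ℕ+ × ℕ+ =>
      ((q.2 : ℕ) : ℂ) ^ (-s) * ((q.2 + q.1 : ℕ) : ℂ) ^ (-s) := by
    simpa only [hf, PNat.add_coe] using hsum
  refine ⟨hsum', ?_⟩
  have hlt := tsum_pair_lt f
  have hgt : ∑' p : ℕ+ × ℕ+, {p : ℕ+ × ℕ+ | p.2 < p.1}.indicator f p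
      = ∑' p : ℕ+ × ℕ+, {p : ℕ+ × ℕ+ | p.1 < p.2}.indicator f p := by
    rw [← (Equiv.prodComm ℕ+ ℕ+).tsum_eq]
    refine tsum_congr fun p => ?_
    simp only [Set.indicator, Equiv.prodComm_apply, Prod.fst_swap, Prod.snd_swap, hf]
    rw [mul_comm]; rfl
  have heq : ∑' p : ℕ+ × ℕ+, {p : ℕ+ × ℕ+ | p.1 = p.2}.indicator f p = riemannZeta (2 * s) := by
    have hd : Function.Injective fun n : ℕ+ => (n, n) := fun a b h => (Prod.ext_iff.1 h).1
    rw [← hd.tsum_eq, ← (hasSum_zeta (w := 2 * s) (by simp; linarith)).tsum_eq]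
    · refine tsum_congr fun n => ?_
      rw [Set.indicator_of_mem (by rfl)]
      change ((n : ℕ) : ℂ) ^ (-s) * ((n : ℕ) : ℂ) ^ (-s) = _
      rw [← cpow_add _ _ (pnat_ne_zero n)]
      congr 1; ring
    · intro p hp
      have hp : p ∈ {p : ℕ+ × ℕ+ | p.1 = p.2} := Set.mem_of_indicator_ne_zero hp
      have hp : p.1 = p.2 := hp
      exact ⟨p.1, Prod.ext rfl hp⟩
  have hsplit : f = fun p => {p : ℕ+ × ℕ+ | p.1 < p.2}.indicator f p
      + {p : ℕ+ × ℕ+ | p.1 = p.2}.indicator f p + {p : ℕ+ × ℕ+ | p.2 < p.1}.indicator f p := by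
    funext p
    rcases lt_trichotomy p.1 p.2 with h | h | h
    · simp [Set.indicator, h, h.ne, h.not_gt]
    · simp [Set.indicator, h]
    · simp [Set.indicator, h, h.ne', h.not_gt]
  have htot : ∑' p, f p = riemannZeta s ^ 2 := tsum_pair h1
  have hl : ∑' l, shiftSum s l = ∑' q : ℕ+ × ℕ+, f (q.2, q.2 + q.1) := by
    rw [hsum.tsum_prod]
    exact tsum_congr fun l => by simp only [shiftSum, hf, PNat.add_coe]
  rw [hl, ← hlt]
  have h3 : ∑' p, f p = ∑' p, {p : ℕ+ × ℕ+ | p.1 < p.2}.indicator f p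
      + ∑' p, {p : ℕ+ × ℕ+ | p.1 = p.2}.indicator f p
      + ∑' p, {p : ℕ+ × ℕ+ | p.2 < p.1}.indicator f p := by
    conv_lhs => rw [hsplit]
    rw [Summable.tsum_add ((hs.indicator _).add (hs.indicator _)) (hs.indicator _),
      Summable.tsum_add (hs.indicator _) (hs.indicator _)]
  rw [hgt, heq, htot] at h3
  linear_combination -h3 / 2

/-- The expression in braces on the right-hand side of the identity. -/
def braces (s : ℂ) : ℂ :=
  (1 / 2) * riemannZeta s ^ 2 + (1 / 2) * riemannZeta (2 * s)
    - s * riemannZeta (s - 1) * riemannZeta (s + 1)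
    + Gamma (1 - s) * Gamma (2 * s - 1) * riemannZeta (2 * s - 1) / Gamma s

theorem tsum_gTerm_of_one_lt {s : ℂ} (h1 : 1 < s.re) (h2 : s.re < 2) :
    ∑' p, gTerm s p = -I * braces s := by
  have hsg : Summable (gTerm s) := (summable_norm_gTerm (by linarith) h2).of_norm
  rw [hsg.tsum_prod]
  have z1 := (hasSum_zeta (w := 2 * s - 1) (by simp; linarith)).mul_left
    (Gamma (1 - s) * Gamma (2 * s - 1) / Gamma s)
  have z2 := (hasSum_zeta (w := s) h1).mul_left (riemannZeta s)
  have z3 := (hasSum_zeta (w := s + 1) (by simp; linarith)).mul_left (s * riemannZeta (s - 1))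
  obtain ⟨hq, hS⟩ := tsum_shiftSum h1
  have z0 : HasSum (fun l => shiftSum s l) ((riemannZeta s ^ 2 - riemannZeta (2 * s)) / 2) := by
    rw [← hS]
    exact hq.prod.hasSum
  have z := (((z0.sub z1).sub z2).add z3).mul_left I
  rw [tsum_congr (tsum_gTerm_right h1 h2), z.tsum_eq, braces]
  ring

/-- The real exceptional points of `braces`. -/
def exc : Set ℂ := {-1 / 2, 0, 1 / 2, 1}

theorem differentiableAt_braces {s : ℂ} (h1 : -1 < s.re) (h2 : s.re < 2) (hs : s ∉ exc) :
    DifferentiableAt ℂ braces s := by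
  simp only [exc, Set.mem_insert_iff, Set.mem_singleton_iff, not_or] at hs
  obtain ⟨e1, e2, e3, e4⟩ := hs
  have z1 : DifferentiableAt ℂ riemannZeta s := differentiableAt_riemannZeta e4
  have z2 : DifferentiableAt ℂ (fun s => riemannZeta (2 * s)) s :=
    DifferentiableAt.comp (f := fun s : ℂ => 2 * s) s (differentiableAt_riemannZeta fun h => e3 (by
      linear_combination h / 2)) (by fun_prop)
  have z3 : DifferentiableAt ℂ (fun s => riemannZeta (s - 1)) s :=
    DifferentiableAt.comp (f := fun s : ℂ => s - 1) s (differentiableAt_riemannZeta fun h => by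
      have : s = 2 := by linear_combination h
      simp [this] at h2) (by fun_prop)
  have z4 : DifferentiableAt ℂ (fun s => riemannZeta (s + 1)) s :=
    DifferentiableAt.comp (f := fun s : ℂ => s + 1) s (differentiableAt_riemannZeta fun h => e2 (by
      linear_combination h)) (by fun_prop)
  have z5 : DifferentiableAt ℂ (fun s => riemannZeta (2 * s - 1)) s :=
    DifferentiableAt.comp (f := fun s : ℂ => 2 * s - 1) s
      (differentiableAt_riemannZeta fun h => e4 (by linear_combination h / 2)) (by fun_prop)
  have g1 : DifferentiableAt ℂ (fun s => Gamma (1 - s)) s :=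
    DifferentiableAt.comp (f := fun s : ℂ => 1 - s) s
      (differentiableAt_Gamma_of_re (by simp; linarith) fun h => e4 (by linear_combination -h))
      (by fun_prop)
  have g2 : DifferentiableAt ℂ (fun s => Gamma (2 * s - 1)) s := by
    refine DifferentiableAt.comp (f := fun s : ℂ => 2 * s - 1) s
      (differentiableAt_Gamma _ fun m h => ?_) (by fun_prop)
    have hm : (m : ℝ) < 3 := by
      have := congrArg Complex.re h
      simp at this
      linarith
    have hm : m < 3 := by exact_mod_cast hm
    interval_cases m
    · exact e3 (by push_cast at h; linear_combination h / 2)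
    · exact e2 (by push_cast at h; linear_combination h / 2)
    · exact e1 (by push_cast at h; linear_combination h / 2)
  have g3 : DifferentiableAt ℂ (fun s => (Gamma s)⁻¹) s := differentiable_one_div_Gamma s
  have : braces = fun s => (1 / 2) * riemannZeta s ^ 2 + (1 / 2) * riemannZeta (2 * s)
      - s * riemannZeta (s - 1) * riemannZeta (s + 1)
      + Gamma (1 - s) * Gamma (2 * s - 1) * riemannZeta (2 * s - 1) * (Gamma s)⁻¹ := by
    funext s
    rw [braces, div_eq_mul_inv _ (Gamma s)]
  rw [this]
  fun_prop

/-- Both sides are holomorphic in the strip away from `exc`, so the evaluation on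
`1 < Re s < 2` persists. -/
theorem tsum_gTerm {s : ℂ} (h1 : -1 < s.re) (h2 : s.re < 2) (hs : s ∉ exc) :
    ∑' p, gTerm s p = -I * braces s := by
  refine eq_on_strip (E := exc) (c := 1) (d := 2) (f := fun s => ∑' p, gTerm s p)
    (g := fun s => -I * braces s) ?_ (by norm_num) (by norm_num) le_rfl
    (fun s a b _ => differentiableAt_tsum_gTerm a b)
    (fun s a b c => (differentiableAt_braces a b c).const_mul _)
    (fun s a b _ => tsum_gTerm_of_one_lt a b) s h1 h2 hs
  intro z hz
  simp only [exc, Set.mem_insert_iff, Set.mem_singleton_iff] at hz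
  rcases hz with rfl | rfl | rfl | rfl <;> norm_num

/-! ### The confluent hypergeometric integral `bq` -/

/-- The Laplace-type integral of the Taylor remainder of `(1 + ibt)^{-s}`. -/
def qInt (b : ℝ) (s : ℂ) : ℂ :=
  ∫ t in Ioi (0 : ℝ), cexp (-((1 : ℝ) * t)) * (t : ℂ) ^ (-s) * powTay s (b * t)

/-- The analytic continuation to `-2 < Re s < 3` of
`Γ(1-s)⁻¹ ∫₀^∞ e^{-t} t^{-s} (1 + ibt)^{-s} dt`. -/
def bq (b : ℝ) (s : ℂ) : ℂ := 1 - s * (1 - s) * (b * I) + (Gamma (1 - s))⁻¹ * qInt b s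

theorem norm_powTay_mul_le {s : ℂ} (hs : -2 ≤ s.re) (b t : ℝ) :
    ‖powTay s (b * t)‖ ≤ ‖s * (s + 1)‖ * Real.exp (Real.pi * |s.im|) * b ^ 2 * t ^ 2 := by
  have := norm_powTay_le hs (b * t)
  rwa [mul_pow, ← mul_assoc] at this

theorem continuous_powTay_mul (s : ℂ) (b : ℝ) : Continuous fun t : ℝ => powTay s (b * t) :=
  (continuous_powTay s).comp (continuous_const.mul continuous_id)

theorem integrableOn_qInt (b : ℝ) {s : ℂ} (h1 : -2 ≤ s.re) (h2 : s.re < 3) :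
    IntegrableOn (fun t : ℝ => cexp (-((1 : ℝ) * t)) * (t : ℂ) ^ (-s) * powTay s (b * t)) (Ioi 0) :=
  integrableOn_ker one_pos h2 (continuous_powTay_mul s b)
    (fun t _ => norm_powTay_mul_le h1 b t)

theorem differentiableAt_bq (b : ℝ) {s : ℂ} (h1 : -1 < s.re) (h2 : s.re < 2) :
    DifferentiableAt ℂ (bq b) s := by
  obtain ⟨α, β, R, hα, hαβ, hβ, hs⟩ := exists_box h1 h2
  have hq : DifferentiableAt ℂ (qInt b) s := by
    refine (differentiableOn_integral_ker (α := α) (β := β)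
      (C := R * (R + 1) * Real.exp (Real.pi * R) * b ^ 2)
      (isOpen_box α β R) one_pos (fun s hs => hs.1.le) (fun s hs => hs.2.1.le)
      (by linarith) (by linarith) (φ := fun s t => powTay s (b * t))
      (fun s => continuous_powTay_mul s b) (fun s hs t _ => ?_)
      (fun t => differentiable_powTay _)).differentiableAt ((isOpen_box α β R).mem_nhds hs)
    refine (norm_powTay_mul_le (by linarith [hs.1]) b t).trans ?_
    have e1 := exp_im_le_of_mem_box hs
    have e2 : ‖s‖ ≤ R := hs.2.2.le
    have e3 : ‖s + 1‖ ≤ R + 1 := (norm_add_le _ _).trans (by simpa using e2)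
    have : 0 ≤ R := (norm_nonneg s).trans e2
    rw [norm_mul]
    gcongr
  have hg : Differentiable ℂ fun s => (Gamma (1 - s))⁻¹ :=
    differentiable_one_div_Gamma.comp (f := fun s : ℂ => 1 - s) (by fun_prop)
  have hg := hg s
  unfold bq
  fun_prop

/-- Writing `(1 + iτ)^{-s}` as a Gamma integral exhibits `qInt` as a double integral in which the
roles of `t` and `y` are exchanged by `s ↦ 1 - s`. -/
theorem integral_qInt_pos {s : ℂ} (b : ℝ) (h0 : 0 < s.re) :
    Gamma s * qInt b s = ∫ t in Ioi (0 : ℝ), ∫ y in Ioi (0 : ℝ),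
      cexp (-t) * (t : ℂ) ^ (-s) * (cexp (-y) * (y : ℂ) ^ (s - 1) * expTay (b * t * y)) := by
  rw [qInt, ← integral_const_mul]
  refine integral_congr_ae (ae_of_all _ fun t => ?_)
  have := cpow_mul_powTay one_pos h0 (b * t)
  simp only [ofReal_one, one_cpow, one_mul, div_one] at this
  simp only [integral_const_mul]
  rw [← this]
  simp only [ofReal_one, one_mul]
  ring

theorem integrable_qInt_prod {s : ℂ} (b : ℝ) (h0 : 0 < s.re) (h1 : s.re < 1) :
    Integrable (Function.uncurry fun t y : ℝ =>
      cexp (-t) * (t : ℂ) ^ (-s) * (cexp (-y) * (y : ℂ) ^ (s - 1) * expTay (b * t * y)))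
      ((volume.restrict (Ioi (0 : ℝ))).prod (volume.restrict (Ioi 0))) := by
  have i1 := (integrableOn_rpow_mul_exp (a := 2 - s.re) (by linarith) one_pos).const_mul (b ^ 2)
  have i2 := integrableOn_rpow_mul_exp (a := s.re + 1) (by linarith) one_pos
  refine (i1.mul_prod i2).mono' ?_ ?_
  · rw [Measure.prod_restrict]
    refine ContinuousOn.aestronglyMeasurable (fun p hp => ?_) (measurableSet_Ioi.prod measurableSet_Ioi)
    have c1 : ContinuousAt (fun p : ℝ × ℝ => (p.1 : ℂ) ^ (-s)) p :=
      ContinuousAt.comp (f := fun p : ℝ × ℝ => p.1)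
        (continuousAt_ofReal_cpow_const _ _ (Or.inr (ne_of_gt hp.1))) continuousAt_fst
    have c2 : ContinuousAt (fun p : ℝ × ℝ => (p.2 : ℂ) ^ (s - 1)) p :=
      ContinuousAt.comp (f := fun p : ℝ × ℝ => p.2)
        (continuousAt_ofReal_cpow_const _ _ (Or.inr (ne_of_gt hp.2))) continuousAt_snd
    have c3 : Continuous (fun p : ℝ × ℝ => expTay (b * p.1 * p.2)) :=
      continuous_expTay.comp (by fun_prop)
    have c4 : Continuous (fun p : ℝ × ℝ => cexp (-p.1)) := by fun_prop
    have c5 : Continuous (fun p : ℝ × ℝ => cexp (-p.2)) := by fun_prop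
    exact ((c4.continuousAt.mul c1).mul ((c5.continuousAt.mul c2).mul
      c3.continuousAt)).continuousWithinAt
  · rw [Measure.prod_restrict]
    filter_upwards [ae_restrict_mem (measurableSet_Ioi.prod measurableSet_Ioi)] with p hp
    obtain ⟨t, y⟩ := p
    have ht : 0 < t := hp.1
    have hy : 0 < y := hp.2
    have h := norm_expTay_le (b * t * y)
    simp only [Function.uncurry_apply_pair]
    rw [norm_mul, norm_mul, norm_mul, norm_mul, norm_cpow_eq_rpow_re_of_pos ht,
      norm_cpow_eq_rpow_re_of_pos hy, norm_exp, norm_exp]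
    have t2 : t ^ (2 - s.re) = t ^ (-s.re) * t ^ 2 := by
      rw [show 2 - s.re = -s.re + (2 : ℕ) by push_cast; ring, Real.rpow_add_natCast ht.ne']
    have y2 : y ^ (s.re + 1) = y ^ (s.re - 1) * y ^ 2 := by
      rw [show s.re + 1 = s.re - 1 + (2 : ℕ) by push_cast; ring, Real.rpow_add_natCast hy.ne']
    rw [t2, y2]
    simp only [neg_re, ofReal_re, sub_re, one_re, one_mul]
    calc _ ≤ Real.exp (-t) * t ^ (-s.re) * (Real.exp (-y) * y ^ (s.re - 1) * (b * t * y) ^ 2) := by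
          gcongr
      _ = _ := by ring

/-- Symmetry under `s ↦ 1 - s`, an instance of Kummer's transformation: for `0 < Re s < 1` swap the
two integrations in `integral_qInt_pos`, then continue analytically. -/
theorem bq_symm (b : ℝ) {s : ℂ} (h1 : -1 < s.re) (h2 : s.re < 2) : bq b s = bq b (1 - s) := by
  refine eq_on_strip (E := ∅) (c := 0) (d := 1) (f := bq b) (g := fun s => bq b (1 - s)) (by simp)
    (by norm_num) (by norm_num) (by norm_num) (fun s a b' _ => differentiableAt_bq b a b')
    (fun s a b' _ => ?_) (fun s a b' _ => ?_) s h1 h2 (by simp)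
  · exact DifferentiableAt.comp (f := fun s : ℂ => 1 - s) s
      (differentiableAt_bq b (by simp; linarith) (by simp; linarith)) (by fun_prop)
  · have g1 : Gamma s ≠ 0 := Gamma_ne_zero_of_re_pos a
    have g2 : Gamma (1 - s) ≠ 0 := Gamma_ne_zero_of_re_pos (by simp; linarith)
    have e1 := integral_qInt_pos b a
    have e2 := integral_qInt_pos (s := 1 - s) b (by simp; linarith)
    rw [integral_integral_swap (integrable_qInt_prod b a b')] at e1
    have : Gamma s * qInt b s = Gamma (1 - s) * qInt b (1 - s) := by
      rw [e1, e2]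
      refine integral_congr_ae (ae_of_all _ fun t => integral_congr_ae (ae_of_all _ fun y => ?_))
      simp only
      rw [show -(1 - s) = s - 1 by ring, show 1 - s - 1 = -s by ring,
        show b * y * t = b * t * y by ring]
      ring
    simp only [bq, sub_sub_cancel]
    field_simp
    linear_combination this

/-- For `Re s < 1` the Taylor polynomial can be integrated separately, so that `bq` is the normalised
integral of `(1 + ibt)^{-s}` itself. -/
theorem Gamma_mul_bq (b : ℝ) {s : ℂ} (h1 : -2 ≤ s.re) (h2 : s.re < 1) :
    IntegrableOn (fun t : ℝ => (t : ℂ) ^ (-s) * cexp (-t) * (1 + (b * t : ℝ) * I) ^ (-s)) (Ioi 0) ∧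
    Gamma (1 - s) * bq b s
      = ∫ t in Ioi (0 : ℝ), (t : ℂ) ^ (-s) * cexp (-t) * (1 + (b * t : ℝ) * I) ^ (-s) := by
  have g2 : Gamma (1 - s) ≠ 0 := Gamma_ne_zero_of_re_pos (by simp; linarith)
  have ha : 0 < (1 - s).re := by simp; linarith
  have ha' : 0 < (1 - s + 1).re := by simp; linarith
  have i1 := integrableOn_cpow_mul_cexp ha (r := 1) (by simp)
  have i2 := (integrableOn_cpow_mul_cexp ha' (r := 1) (by simp)).const_mul (s * (b * I))
  have i3 := integrableOn_qInt b h1 (by linarith : s.re < 3)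
  have i12 : IntegrableOn (fun t : ℝ => (t : ℂ) ^ (1 - s - 1) * cexp (-(1 * t)) -
    s * (b * I) * ((t : ℂ) ^ (1 - s + 1 - 1) * cexp (-(1 * t)))) (Ioi 0) := i1.sub i2
  have e : EqOn (fun t : ℝ => (t : ℂ) ^ (-s) * cexp (-t) * (1 + (b * t : ℝ) * I) ^ (-s))
      (fun t : ℝ => (t : ℂ) ^ (1 - s - 1) * cexp (-(1 * t)) -
        s * (b * I) * ((t : ℂ) ^ (1 - s + 1 - 1) * cexp (-(1 * t)))
        + cexp (-((1 : ℝ) * t)) * (t : ℂ) ^ (-s) * powTay s (b * t)) (Ioi 0) := by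
    intro t ht
    dsimp only
    have ht : 0 < t := ht
    have ht0 : (t : ℂ) ≠ 0 := ofReal_ne_zero.2 ht.ne'
    have p2 : (t : ℂ) ^ (1 - s + 1 - 1) = (t : ℂ) ^ (-s) * t := by
      rw [show 1 - s + 1 - 1 = (-s) + 1 by ring, cpow_add _ _ ht0, cpow_one]
    rw [p2, show 1 - s - 1 = -s by ring, powTay]
    push_cast
    simp only [one_mul]
    ring
  refine ⟨IntegrableOn.congr_fun (i12.add i3) e.symm measurableSet_Ioi, ?_⟩
  rw [setIntegral_congr_fun measurableSet_Ioi e, integral_add i12 i3, integral_sub i1 i2, integral_const_mul,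
    integral_cpow_mul_cexp ha (r := 1) (by simp), integral_cpow_mul_cexp ha' (r := 1) (by simp),
    Gamma_add_one (1 - s) (fun h => by simp [h] at ha), one_cpow, one_cpow, bq, ← qInt]
  field_simp

/-! ### Poisson's integral for the Bessel function of half-shifted order -/

/-- Crude growth bound for `1/Γ` along `s + 1/2 + ℕ`, by `Γ(z+1) = z Γ(z)` and `|z| ≥ 1/2`. -/
theorem norm_inv_Gamma_le {s : ℂ} {M : ℝ} (h1 : -1 < s.re) (hM0 : ‖(Gamma (s + 1 / 2))⁻¹‖ ≤ M)
    (hM1 : ‖(Gamma (s + 1 / 2 + 1))⁻¹‖ ≤ M) (m : ℕ) :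
    ‖(Gamma ((m : ℂ) + 1 + (s - 1 / 2)))⁻¹‖ ≤ M * 2 ^ m := by
  have hM : 0 ≤ M := (norm_nonneg _).trans hM0
  rcases m with _ | m
  · rw [show ((0 : ℕ) : ℂ) + 1 + (s - 1 / 2) = s + 1 / 2 by push_cast; ring]
    simpa using hM0
  induction m with
  | zero =>
    rw [show ((0 + 1 : ℕ) : ℂ) + 1 + (s - 1 / 2) = s + 1 / 2 + 1 by push_cast; ring]
    norm_num
    norm_num at hM1
    linarith
  | succ m ih =>
    set z : ℂ := ((m + 1 : ℕ) : ℂ) + 1 + (s - 1 / 2) with hz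
    have hre : 1 / 2 ≤ z.re := by
      have : z.re = m + 1 + 1 + (s.re - 1 / 2) := by simp [hz]
      have hm : (0 : ℝ) ≤ m := Nat.cast_nonneg m
      linarith
    have hz0 : z ≠ 0 := fun h => by rw [h] at hre; norm_num at hre
    have hn : 1 / 2 ≤ ‖z‖ := hre.trans (re_le_norm z)
    rw [show ((m + 1 + 1 : ℕ) : ℂ) + 1 + (s - 1 / 2) = z + 1 by rw [hz]; push_cast; ring,
      Gamma_add_one z hz0, mul_inv, norm_mul, norm_inv]
    have : ‖z‖⁻¹ ≤ 2 := by
      rw [inv_le_comm₀ (by linarith) (by norm_num)]; linarith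
    calc _ ≤ 2 * (M * 2 ^ (m + 1)) := by gcongr
      _ = _ := by ring

theorem differentiableAt_besselJ {x : ℝ} (hx : 0 < x) {s : ℂ} (h1 : -1 < s.re) :
    DifferentiableAt ℂ (fun s => besselJ (s - 1 / 2) x) s := by
  have hx2 : ((x / 2 : ℝ) : ℂ) ≠ 0 := ofReal_ne_zero.2 (by positivity)
  have hg (a : ℂ) : Differentiable ℂ fun s : ℂ => (Gamma (s + a))⁻¹ :=
    differentiable_one_div_Gamma.comp (f := fun s : ℂ => s + a) (by fun_prop)
  have hp : Differentiable ℂ fun s : ℂ => ((x / 2 : ℝ) : ℂ) ^ (s - 1 / 2) := fun s =>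
    DifferentiableAt.const_cpow (by fun_prop) (Or.inl hx2)
  set M := ‖(Gamma (s + 1 / 2))⁻¹‖ + ‖(Gamma (s + (1 / 2 + 1)))⁻¹‖ + 1 with hM
  set B := ‖((x / 2 : ℝ) : ℂ) ^ (s - 1 / 2)‖ + 1 with hB
  set U : Set ℂ := {w | -1 < w.re ∧ ‖(Gamma (w + 1 / 2))⁻¹‖ < M ∧
    ‖(Gamma (w + (1 / 2 + 1)))⁻¹‖ < M ∧ ‖((x / 2 : ℝ) : ℂ) ^ (w - 1 / 2)‖ < B} with hU
  have hUo : IsOpen U :=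
    (isOpen_lt continuous_const continuous_re).inter
      ((isOpen_lt (hg _).continuous.norm continuous_const).inter
        ((isOpen_lt (hg _).continuous.norm continuous_const).inter
          (isOpen_lt hp.continuous.norm continuous_const)))
  have hsU : s ∈ U := by
    have := norm_nonneg (Gamma (s + 1 / 2))⁻¹
    have := norm_nonneg (Gamma (s + (1 / 2 + 1)))⁻¹
    exact ⟨h1, by linarith, by linarith, by linarith⟩
  have hsum : Summable fun m : ℕ => B * M * ((2 * (x / 2) ^ 2) ^ m / (m.factorial : ℝ)) :=
    (Real.summable_pow_div_factorial _).mul_left _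
  refine (differentiableOn_tsum_of_summable_norm hsum (fun m => ?_) hUo
    (fun m w hw => ?_)).differentiableAt (hUo.mem_nhds hsU)
  · have e1 : Differentiable ℂ fun s : ℂ => ((x / 2 : ℝ) : ℂ) ^ (2 * (m : ℂ) + (s - 1 / 2)) :=
      fun s => DifferentiableAt.const_cpow (by fun_prop) (Or.inl hx2)
    have e2 : Differentiable ℂ fun s : ℂ => (Gamma ((m : ℂ) + 1 + (s - 1 / 2)))⁻¹ :=
      differentiable_one_div_Gamma.comp (f := fun s : ℂ => (m : ℂ) + 1 + (s - 1 / 2)) (by fun_prop)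
    refine Differentiable.differentiableOn ?_
    simp only [div_eq_mul_inv _ ((m.factorial : ℂ) * _), mul_inv]
    fun_prop
  · obtain ⟨w1, w2, w3, w4⟩ := hw
    rw [← add_assoc] at w3
    have hG := norm_inv_Gamma_le w1 w2.le w3.le m
    rw [norm_div, norm_mul, norm_mul, norm_pow, norm_neg, norm_one, one_pow, one_mul,
      cpow_add _ _ hx2, norm_mul, div_eq_mul_inv, mul_inv, ← norm_inv (Gamma _), norm_natCast,
      norm_cpow_eq_rpow_re_of_pos (by positivity)]
    have : (2 * (m : ℂ)).re = ((2 * m : ℕ) : ℝ) := by simp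
    rw [this, Real.rpow_natCast, pow_mul]
    have hB0 : 0 ≤ B := (norm_nonneg _).trans w4.le
    calc _ ≤ ((x / 2) ^ 2) ^ m * B * ((m.factorial : ℝ)⁻¹ * (M * 2 ^ m)) := by gcongr
      _ = _ := by rw [mul_pow]; ring

/-- The Poisson moments `∫₀¹ (t(1-t))^{s-1} (2t-1)^{2m} dt`. -/
def moment (s : ℂ) (m : ℕ) : ℂ :=
  ∫ t in (0 : ℝ)..1, (t : ℂ) ^ (s - 1) * (1 - (t : ℂ)) ^ (s - 1) * (2 * (t : ℂ) - 1) ^ (2 * m)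

theorem intervalIntegrable_moment {s : ℂ} (hs : 0 < s.re) {g : ℝ → ℂ} (hg : Continuous g) :
    IntervalIntegrable (fun t : ℝ => (t : ℂ) ^ (s - 1) * (1 - (t : ℂ)) ^ (s - 1) * g t)
      volume 0 1 :=
  (betaIntegral_convergent hs hs).mul_continuousOn hg.continuousOn

theorem moment_succ {s : ℂ} (hs : 0 < s.re) (m : ℕ) :
    moment s (m + 1) = moment s m - 4 * moment (s + 1) m := by
  have i1 := intervalIntegrable_moment hs (g := fun t : ℝ => (2 * (t : ℂ) - 1) ^ (2 * m))
    (by fun_prop)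
  have i2 := (intervalIntegrable_moment (s := s + 1) (by simp; linarith)
    (g := fun t : ℝ => (2 * (t : ℂ) - 1) ^ (2 * m)) (by fun_prop)).const_mul 4
  rw [moment, moment, moment, ← intervalIntegral.integral_const_mul,
    ← intervalIntegral.integral_sub i1 i2]
  refine intervalIntegral.integral_congr_ae ?_
  have h1 : ∀ᵐ t : ℝ, t ≠ 1 := by simp [ae_iff, measure_singleton]
  filter_upwards [h1] with t ht1 ht
  rw [uIoc_of_le zero_le_one] at ht
  have ht0 : (t : ℂ) ≠ 0 := ofReal_ne_zero.2 ht.1.ne'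
  have ht1' : (1 - t : ℂ) ≠ 0 := fun h => ht1 (by
    have : (t : ℂ) = 1 := by linear_combination -h
    exact_mod_cast this)
  rw [show s + 1 - 1 = (s - 1) + 1 by ring, cpow_add _ _ ht0, cpow_add _ _ ht1', cpow_one,
    cpow_one, show 2 * (m + 1) = 2 * m + 2 by ring, pow_add]
  ring

/-- The moments are Beta integrals; induction on `m` uses `moment_succ`, and the case `m = 0` is
Legendre's duplication formula. -/
theorem moment_eq {s : ℂ} (hs : 0 < s.re) (m : ℕ) :
    moment s m * (4 ^ m * m.factorial) * Gamma (m + s + 1 / 2)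
      = Gamma s * (Real.sqrt Real.pi : ℝ) * (2 : ℂ) ^ (1 - 2 * s) * (2 * m).factorial := by
  induction m generalizing s with
  | zero =>
    have hb : moment s 0 = betaIntegral s s := by simp [moment, betaIntegral]
    have h := Gamma_mul_Gamma_eq_betaIntegral hs hs
    have hd := Gamma_mul_Gamma_add_half s
    have g1 : Gamma s ≠ 0 := Gamma_ne_zero_of_re_pos hs
    have g2 : Gamma (2 * s) ≠ 0 := Gamma_ne_zero_of_re_pos (by simp; linarith)
    rw [← two_mul] at h
    simp only [hb, pow_zero, Nat.factorial_zero, Nat.cast_one, mul_one, Nat.cast_zero, mul_zero,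
      zero_add]
    apply mul_left_cancel₀ g1
    apply mul_left_cancel₀ g2
    linear_combination (-Gamma s * Gamma (s + 1 / 2)) * h + Gamma s ^ 2 * hd
  | succ m ih =>
    have e1 := ih hs
    have e2 := ih (s := s + 1) (by simp; linarith)
    have hz0 : (m + s + 1 / 2 : ℂ) ≠ 0 := fun h => by
      have := congrArg Complex.re h
      have hm : (0 : ℝ) ≤ m := Nat.cast_nonneg m
      simp at this
      linarith
    have hs0 : s ≠ 0 := fun h => by simp [h] at hs
    have hG := Gamma_add_one _ hz0
    rw [Gamma_add_one s hs0, show (1 - 2 * (s + 1) : ℂ) = (1 - 2 * s) + (-2 : ℤ) by push_cast; ring,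
      cpow_add _ _ two_ne_zero, cpow_intCast,
      show (m + (s + 1) + 1 / 2 : ℂ) = m + s + 1 / 2 + 1 by ring, hG] at e2
    rw [moment_succ hs, show 2 * (m + 1) = 2 * m + 1 + 1 by ring, Nat.factorial_succ,
      Nat.factorial_succ, Nat.factorial_succ]
    push_cast
    rw [show (m + 1 + s + 1 / 2 : ℂ) = m + s + 1 / 2 + 1 by ring, hG]
    norm_num at e2
    linear_combination (4 * (m + 1) * (m + s + 1 / 2)) * e1 - 16 * (m + 1) * e2

/-- Poisson's integral for `J_{s-1/2}`, by expanding the cosine and evaluating the moments. -/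
theorem poisson {x : ℝ} (hx : 0 < x) {s : ℂ} (hs : 0 < s.re) :
    Gamma s * (Real.sqrt Real.pi : ℝ) * (2 : ℂ) ^ (1 - 2 * s) * besselJ (s - 1 / 2) x
      = ((x / 2 : ℝ) : ℂ) ^ (s - 1 / 2) * ∫ t in (0 : ℝ)..1,
        (t : ℂ) ^ (s - 1) * (1 - (t : ℂ)) ^ (s - 1) * Complex.cos (x * (2 * t - 1)) := by
  have hx2 : ((x / 2 : ℝ) : ℂ) ≠ 0 := ofReal_ne_zero.2 (by positivity)
  have hi := intervalIntegrable_moment hs (g := fun _ => 1) continuous_const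
  simp only [mul_one] at hi
  have hcosh : HasSum (fun m : ℕ => x ^ (2 * m) / ((2 * m).factorial : ℝ)) (Real.cosh x) :=
    Real.hasSum_cosh x
  have H := intervalIntegral.hasSum_integral_of_dominated_convergence (μ := volume) (a := 0) (b := 1)
    (F := fun (m : ℕ) (t : ℝ) => (t : ℂ) ^ (s - 1) * (1 - (t : ℂ)) ^ (s - 1) *
      ((-1) ^ m * (x * (2 * (t : ℂ) - 1)) ^ (2 * m) / ((2 * m).factorial : ℂ)))
    (f := fun t : ℝ => (t : ℂ) ^ (s - 1) * (1 - (t : ℂ)) ^ (s - 1) * Complex.cos (x * (2 * t - 1)))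
    (fun m t => ‖(t : ℂ) ^ (s - 1) * (1 - (t : ℂ)) ^ (s - 1)‖ *
      (x ^ (2 * m) / ((2 * m).factorial : ℝ))) ?_ ?_ ?_ ?_ ?_
  · rw [← H.tsum_eq, besselJ, ← tsum_mul_left, ← tsum_mul_left]
    refine tsum_congr fun m => ?_
    have hm : ∫ t in (0 : ℝ)..1, (t : ℂ) ^ (s - 1) * (1 - (t : ℂ)) ^ (s - 1) *
        ((-1) ^ m * (x * (2 * (t : ℂ) - 1)) ^ (2 * m) / ((2 * m).factorial : ℂ))
        = (-1) ^ m * x ^ (2 * m) / ((2 * m).factorial : ℂ) * moment s m := by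
      rw [moment, ← intervalIntegral.integral_const_mul]
      refine intervalIntegral.integral_congr fun t _ => ?_
      rw [mul_pow]; ring
    have e := moment_eq hs m
    have hG : Gamma (m + s + 1 / 2) ≠ 0 := Gamma_ne_zero_of_re_pos (by
      have hm : (0 : ℝ) ≤ m := Nat.cast_nonneg m
      simp; linarith)
    have hf1 : (m.factorial : ℂ) ≠ 0 := by exact_mod_cast m.factorial_ne_zero
    have hf2 : ((2 * m).factorial : ℂ) ≠ 0 := by exact_mod_cast (2 * m).factorial_ne_zero
    rw [hm, cpow_add _ _ hx2, show (2 * (m : ℂ)) = ((2 * m : ℕ) : ℂ) by push_cast; ring,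
      cpow_natCast, show (m : ℂ) + 1 + (s - 1 / 2) = m + s + 1 / 2 by ring]
    have hp : (((x / 2 : ℝ) : ℂ)) ^ (2 * m) * 4 ^ m = (x : ℂ) ^ (2 * m) := by
      rw [pow_mul, pow_mul, ← mul_pow]; congr 1; push_cast; ring
    rw [← hp]
    generalize Gamma (m + s + 1 / 2) = G at *
    generalize ((x / 2 : ℝ) : ℂ) ^ (s - 1 / 2) = X at *
    field_simp
    linear_combination (-1 : ℂ) * X * e
  · intro m
    have := intervalIntegrable_moment hs
      (g := fun t : ℝ => ((-1) ^ m * (x * (2 * (t : ℂ) - 1)) ^ (2 * m) / ((2 * m).factorial : ℂ)))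
      (by fun_prop)
    exact this.def'.aestronglyMeasurable
  · intro m
    refine ae_of_all _ fun t ht => ?_
    rw [uIoc_of_le zero_le_one] at ht
    rw [norm_mul]
    refine mul_le_mul_of_nonneg_left ?_ (norm_nonneg _)
    rw [norm_div, norm_mul, norm_pow, norm_neg, norm_one, one_pow, one_mul, norm_pow, norm_mul,
      norm_real, Real.norm_of_nonneg hx.le, Complex.norm_natCast]
    have : ‖2 * (t : ℂ) - 1‖ ≤ 1 := by
      rw [show (2 * (t : ℂ) - 1) = ((2 * t - 1 : ℝ) : ℂ) by push_cast; ring, norm_real,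
        Real.norm_eq_abs, abs_le]
      constructor <;> linarith [ht.1, ht.2]
    have : x * ‖2 * (t : ℂ) - 1‖ ≤ x := by nlinarith
    gcongr
  · exact ae_of_all _ fun t _ => hcosh.summable.mul_left _
  · have : (fun t : ℝ => ∑' m : ℕ, ‖(t : ℂ) ^ (s - 1) * (1 - (t : ℂ)) ^ (s - 1)‖ *
      (x ^ (2 * m) / ((2 * m).factorial : ℝ))) =
        fun t : ℝ => ‖(t : ℂ) ^ (s - 1) * (1 - (t : ℂ)) ^ (s - 1)‖ * Real.cosh x := by
      funext t
      rw [tsum_mul_left, hcosh.tsum_eq]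
    rw [this]
    exact hi.norm.mul_const _
  · exact ae_of_all _ fun t _ => (Complex.hasSum_cos _).mul_left _

/-! ### From Poisson's integral to `bq` by rotating the contour -/

/-- The integrals along the two vertical rays in terms of `bq`, by the substitution `t = 2xy` in
`Gamma_mul_bq`. The rays from `0` and from `1` correspond to `ε = -1` and `ε = 1`. -/
theorem vertical {x : ℝ} (hx : 0 < x) (ε : ℝ) {s : ℂ} (h1 : 0 < s.re) (h2 : s.re ≤ 3) :
    IntegrableOn (fun y : ℝ => (y : ℂ) ^ (s - 1) * cexp (-(2 * x * y)) *
      (1 + (ε * y : ℝ) * I) ^ (s - 1)) (Ioi 0) ∧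
    ∫ y in Ioi (0 : ℝ), (y : ℂ) ^ (s - 1) * cexp (-(2 * x * y)) * (1 + (ε * y : ℝ) * I) ^ (s - 1)
      = ((2 * x : ℝ) : ℂ) ^ (-s) * (Gamma s * bq (ε * (1 / (2 * x))) (1 - s)) := by
  obtain ⟨hi, he⟩ := Gamma_mul_bq (ε * (1 / (2 * x))) (s := 1 - s) (by simp; linarith)
    (by simp; linarith)
  rw [sub_sub_cancel, neg_sub] at he
  rw [neg_sub] at hi
  have hx2 : 0 < 2 * x := by positivity
  have hx0 : ((2 * x : ℝ) : ℂ) ≠ 0 := ofReal_ne_zero.2 hx2.ne'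
  set g : ℝ → ℂ := fun t => (t : ℂ) ^ (s - 1) * cexp (-t) *
    (1 + (ε * (1 / (2 * x)) * t : ℝ) * I) ^ (s - 1) with hg
  have e : EqOn (fun y : ℝ => ((2 * x : ℝ) : ℂ) ^ (1 - s) * g (2 * x * y))
      (fun y : ℝ => (y : ℂ) ^ (s - 1) * cexp (-(2 * x * y)) * (1 + (ε * y : ℝ) * I) ^ (s - 1))
      (Ioi 0) := by
    intro y hy
    have hy : 0 < y := hy
    have hp : ((2 * x * y : ℝ) : ℂ) ^ (s - 1) = ((2 * x : ℝ) : ℂ) ^ (s - 1) * (y : ℂ) ^ (s - 1) := by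
      rw [ofReal_mul (2 * x) y, ofReal_mul_cpow hx2 (ofReal_ne_zero.2 hy.ne')]
    have hb : ε * (1 / (2 * x)) * (2 * x * y) = ε * y := by field_simp
    have hc : ((2 * x : ℝ) : ℂ) ^ (1 - s) * ((2 * x : ℝ) : ℂ) ^ (s - 1) = 1 := by
      rw [← cpow_add _ _ hx0, show 1 - s + (s - 1) = 0 by ring, cpow_zero]
    simp only [hg, hp, hb]
    push_cast at hc ⊢
    linear_combination ((y : ℂ) ^ (s - 1) * cexp (-(2 * x * y)) * (1 + ε * y * I) ^ (s - 1)) * hc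
  have hi2 : IntegrableOn (fun y => g (2 * x * y)) (Ioi 0) := by
    rw [integrableOn_Ioi_comp_mul_left_iff g 0 hx2, mul_zero]; exact hi
  refine ⟨IntegrableOn.congr_fun (hi2.const_mul _) e measurableSet_Ioi, ?_⟩
  rw [← setIntegral_congr_fun measurableSet_Ioi e, integral_const_mul,
    integral_comp_mul_left_Ioi g 0 hx2, mul_zero, ← he, real_smul, ← mul_assoc]
  congr 1
  rw [show -s = (1 - s) + (-1) by ring, cpow_add _ _ hx0, cpow_neg_one]
  push_cast; rfl

/-- The integrand `z^{s-1} (1-z)^{s-1} e^{2ixz}`, which decays as `Im z → ∞`. -/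
def cont (x : ℝ) (s z : ℂ) : ℂ := z ^ (s - 1) * (1 - z) ^ (s - 1) * cexp (2 * x * z * I)

/-- Cauchy's theorem on the rectangle with vertices `0`, `1`, `1 + iR`, `iR`. The integrand is
continuous at the corners `0` and `1` because `1 < Re s`. -/
theorem cont_rect {x : ℝ} {s : ℂ} (h1 : 1 < s.re) (R : ℝ) :
    (∫ t in (0 : ℝ)..1, cont x s t) = (∫ t in (0 : ℝ)..1, cont x s (t + R * I))
      + I * (∫ y in (0 : ℝ)..R, cont x s (y * I)) - I * ∫ y in (0 : ℝ)..R, cont x s (1 + y * I) := by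
  have hw : 0 < (s - 1).re := by simp; linarith
  have h := integral_boundary_rect_eq_zero_of_continuousOn_of_differentiableOn (cont x s) 0
    (1 + R * I) ?_ ?_
  · simp only [zero_re, zero_im, add_re, one_re, mul_re, ofReal_re, I_re, mul_zero, ofReal_im, I_im,
      mul_one, sub_zero, add_zero, add_im, one_im, mul_im, zero_add, ofReal_zero, zero_mul,
      ofReal_one, smul_eq_mul] at h
    linear_combination h
  · intro z hz
    have hz' : z.re ∈ Icc (0 : ℝ) 1 := by
      have := hz.1
      simpa using this
    refine ContinuousAt.continuousWithinAt ?_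
    have c1 : ContinuousAt (fun z : ℂ => z ^ (s - 1)) z :=
      continuousAt_cpow_const_of_re_pos (Or.inl hz'.1) hw
    have c2 : ContinuousAt (fun z : ℂ => (1 - z) ^ (s - 1)) z :=
      ContinuousAt.comp (f := fun z : ℂ => 1 - z)
        (continuousAt_cpow_const_of_re_pos (Or.inl (by simpa using hz'.2)) hw) (by fun_prop)
    unfold cont
    fun_prop
  · intro z hz
    have hz' : z.re ∈ Ioo (0 : ℝ) 1 := by
      have := hz.1
      simpa using this
    refine DifferentiableAt.differentiableWithinAt ?_
    have c1 : DifferentiableAt ℂ (fun z : ℂ => z ^ (s - 1)) z :=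
      differentiableAt_id.cpow_const (Or.inl hz'.1)
    have c2 : DifferentiableAt ℂ (fun z : ℂ => (1 - z) ^ (s - 1)) z :=
      DifferentiableAt.cpow_const (by fun_prop) (Or.inl (by simpa using hz'.2))
    unfold cont
    fun_prop

theorem tendsto_top {x : ℝ} (hx : 0 < x) {s : ℂ} (h1 : 1 < s.re) (h2 : s.re < 2) :
    Tendsto (fun R : ℝ => ∫ t in (0 : ℝ)..1, cont x s (t + R * I)) atTop (𝓝 0) := by
  set E := Real.exp (Real.pi * |(s - 1).im|) with hE
  have hlim : Tendsto (fun R : ℝ => (4 * E ^ 2) * (R ^ (2 : ℝ) * Real.exp (-(2 * x) * R)))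
      atTop (𝓝 0) := by
    simpa using (tendsto_rpow_mul_exp_neg_mul_atTop_nhds_zero 2 (2 * x) (by positivity)).const_mul
      (4 * E ^ 2)
  refine squeeze_zero_norm' ?_ hlim
  filter_upwards [eventually_ge_atTop 1] with R hR
  have hb : ∀ z : ℂ, z ≠ 0 → ‖z‖ ≤ 2 * R → ‖z ^ (s - 1)‖ ≤ 2 * R * E := by
    intro z hz hn
    refine (norm_cpow_le_rpow_mul_exp hz _).trans ?_
    have : ‖z‖ ^ (s - 1).re ≤ 2 * R := by
      calc ‖z‖ ^ (s - 1).re ≤ (2 * R) ^ (s - 1).re :=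
            Real.rpow_le_rpow (norm_nonneg _) hn (by simp; linarith)
        _ ≤ (2 * R) ^ (1 : ℝ) :=
            Real.rpow_le_rpow_of_exponent_le (by linarith) (by simp; linarith)
        _ = 2 * R := Real.rpow_one _
    gcongr
  have key : ∀ t ∈ uIoc (0 : ℝ) 1, ‖cont x s (t + R * I)‖
      ≤ (4 * E ^ 2) * (R ^ (2 : ℝ) * Real.exp (-(2 * x) * R)) := by
    intro t ht
    rw [uIoc_of_le zero_le_one] at ht
    have n1 : ‖(t + R * I : ℂ)‖ ≤ 2 * R := by
      refine (norm_add_le _ _).trans ?_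
      rw [norm_mul, norm_I, norm_real, norm_real, Real.norm_of_nonneg ht.1.le,
        Real.norm_of_nonneg (by linarith : 0 ≤ R)]
      linarith [ht.2]
    have n2 : ‖(1 - (t + R * I) : ℂ)‖ ≤ 2 * R := by
      rw [show (1 - (t + R * I) : ℂ) = ((1 - t : ℝ) : ℂ) - R * I by push_cast; ring]
      refine (norm_sub_le _ _).trans ?_
      rw [norm_mul, norm_I, norm_real, norm_real, Real.norm_of_nonneg (by linarith [ht.2] : 0 ≤ 1 - t),
        Real.norm_of_nonneg (by linarith : 0 ≤ R)]
      linarith [ht.1]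
    have z1 : (t + R * I : ℂ) ≠ 0 := fun h => by
      have := congrArg Complex.im h
      simp at this; linarith
    have z2 : (1 - (t + R * I) : ℂ) ≠ 0 := fun h => by
      have := congrArg Complex.im h
      simp at this; linarith
    have e : ‖cexp (2 * x * (t + R * I) * I)‖ = Real.exp (-(2 * x) * R) := by
      rw [norm_exp]; congr 1; simp
    rw [cont, norm_mul, norm_mul, e]
    have b1 := hb _ z1 n1
    have b2 := hb _ z2 n2
    calc _ ≤ (2 * R * E) * (2 * R * E) * Real.exp (-(2 * x) * R) := by gcongr
      _ = _ := by rw [Real.rpow_two]; ring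
  simpa using intervalIntegral.norm_integral_le_of_norm_le_const key

theorem integral_cont {x : ℝ} (hx : 0 < x) {s : ℂ} (h1 : 1 < s.re) (h2 : s.re < 2) :
    ∫ t in (0 : ℝ)..1, cont x s t = ((2 * x : ℝ) : ℂ) ^ (-s) * Gamma s *
      (cexp (Real.pi * s / 2 * I) * bq (-(1 / (2 * x))) (1 - s)
        + cexp (2 * x * I) * cexp (-(Real.pi * s / 2 * I)) * bq (1 / (2 * x)) (1 - s)) := by
  obtain ⟨i1, e1⟩ := vertical hx (-1) (s := s) (by linarith) (by linarith)
  obtain ⟨i2, e2⟩ := vertical hx 1 (s := s) (by linarith) (by linarith)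
  have c1 : EqOn (fun y : ℝ => cexp (Real.pi / 2 * I * (s - 1)) * ((y : ℂ) ^ (s - 1) *
      cexp (-(2 * x * y)) * (1 + (-1 * y : ℝ) * I) ^ (s - 1))) (fun y : ℝ => cont x s (y * I))
      (Ioi 0) := by
    intro y hy
    have hy : 0 < y := hy
    have hp := I_mul_cpow (z := y) (by simpa using hy) (s - 1)
    simp only [cont]
    rw [mul_comm (y : ℂ) I, hp, show 2 * (x : ℂ) * (I * y) * I = -(2 * x * y) by
      linear_combination 2 * (x : ℂ) * y * I_mul_I,
      show (1 : ℂ) + (-1 * y : ℝ) * I = 1 - I * y by push_cast; ring]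
    ring
  have c2 : EqOn (fun y : ℝ => cexp (2 * x * I) * cexp (-(Real.pi / 2 * I * (s - 1))) *
      ((y : ℂ) ^ (s - 1) * cexp (-(2 * x * y)) * (1 + (1 * y : ℝ) * I) ^ (s - 1)))
      (fun y : ℝ => cont x s (1 + y * I)) (Ioi 0) := by
    intro y hy
    have hy : 0 < y := hy
    have hp := neg_I_mul_cpow (z := y) (by simpa using hy) (s - 1)
    simp only [cont]
    rw [show 1 - (1 + (y : ℂ) * I) = -I * y by ring, hp,
      show 2 * (x : ℂ) * (1 + y * I) * I = 2 * x * I + -(2 * x * y) by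
        linear_combination 2 * (x : ℂ) * y * I_mul_I, Complex.exp_add, one_mul]
    ring
  have j1 := IntegrableOn.congr_fun (i1.const_mul _) c1 measurableSet_Ioi
  have j2 := IntegrableOn.congr_fun (i2.const_mul _) c2 measurableSet_Ioi
  have t1 := intervalIntegral_tendsto_integral_Ioi 0 j1 tendsto_id
  have t2 := intervalIntegral_tendsto_integral_Ioi 0 j2 tendsto_id
  have t := ((tendsto_top hx h1 h2).add (t1.const_mul I)).sub (t2.const_mul I)
  have hev : (fun R : ℝ => (∫ t in (0 : ℝ)..1, cont x s (t + R * I))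
      + I * (∫ y in (0 : ℝ)..(id R), cont x s (y * I))
      - I * ∫ y in (0 : ℝ)..(id R), cont x s (1 + y * I))
      =ᶠ[atTop] fun _ => ∫ t in (0 : ℝ)..1, cont x s t := by
    exact Eventually.of_forall fun R => (cont_rect h1 R).symm
  have hu := tendsto_nhds_unique (tendsto_const_nhds.congr' hev.symm) t
  rw [hu, ← setIntegral_congr_fun measurableSet_Ioi c1, ← setIntegral_congr_fun measurableSet_Ioi c2,
    integral_const_mul, integral_const_mul, e1, e2]
  have hp := Complex.exp_pi_div_two_mul_I
  have f1 : cexp (Real.pi / 2 * I * (s - 1)) = -I * cexp (Real.pi * s / 2 * I) := by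
    rw [show (Real.pi / 2 * I * (s - 1) : ℂ) = Real.pi * s / 2 * I - Real.pi / 2 * I by ring,
      Complex.exp_sub, Complex.exp_pi_div_two_mul_I, div_I]
    ring
  have f2 : cexp (-(Real.pi / 2 * I * (s - 1))) = I * cexp (-(Real.pi * s / 2 * I)) := by
    rw [show (-(Real.pi / 2 * I * (s - 1)) : ℂ) = Real.pi / 2 * I + -(Real.pi * s / 2 * I) by ring,
      Complex.exp_add, Complex.exp_pi_div_two_mul_I]
  rw [f1, f2, one_mul, neg_one_mul]
  linear_combination (-(((2 * x : ℝ) : ℂ) ^ (-s) * Gamma s *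
      (cexp (Real.pi * s / 2 * I) * bq (-(1 / (2 * x))) (1 - s)
        + cexp (2 * x * I) * cexp (-(Real.pi * s / 2 * I)) * bq (1 / (2 * x)) (1 - s)))) * I_mul_I

theorem integral_cos_eq {x : ℝ} {s : ℂ} (h1 : 0 < s.re) :
    ∫ t in (0 : ℝ)..1, (t : ℂ) ^ (s - 1) * (1 - (t : ℂ)) ^ (s - 1) * Complex.cos (x * (2 * t - 1))
      = cexp (-(x * I)) * ∫ t in (0 : ℝ)..1, cont x s t := by
  have i1 := intervalIntegrable_moment h1 (g := fun t : ℝ => Complex.cos (x * (2 * t - 1)))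
    (by fun_prop)
  have i2 := (intervalIntegrable_moment h1 (g := fun t : ℝ => Complex.sin (x * (2 * t - 1)))
    (by fun_prop)).const_mul I
  have hodd : ∫ t in (0 : ℝ)..1, (t : ℂ) ^ (s - 1) * (1 - (t : ℂ)) ^ (s - 1) *
      Complex.sin (x * (2 * t - 1)) = 0 := by
    have h := intervalIntegral.integral_comp_sub_left (a := 0) (b := 1)
      (fun t : ℝ => (t : ℂ) ^ (s - 1) * (1 - (t : ℂ)) ^ (s - 1) * Complex.sin (x * (2 * t - 1))) 1
    rw [sub_self, sub_zero] at h
    have h' : ∀ t : ℝ, ((1 - t : ℝ) : ℂ) ^ (s - 1) * (1 - ((1 - t : ℝ) : ℂ)) ^ (s - 1) *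
        Complex.sin (x * (2 * (1 - t : ℝ) - 1)) = -((t : ℂ) ^ (s - 1) * (1 - (t : ℂ)) ^ (s - 1) *
        Complex.sin (x * (2 * t - 1))) := by
      intro t
      rw [show (x * (2 * (1 - t : ℝ) - 1) : ℂ) = -(x * (2 * t - 1)) by push_cast; ring,
        Complex.sin_neg, show (1 - ((1 - t : ℝ) : ℂ)) = t by push_cast; ring]
      push_cast; ring
    simp only [h', intervalIntegral.integral_neg] at h
    linear_combination -h / 2
  rw [← intervalIntegral.integral_const_mul]
  have : ∀ t : ℝ, cexp (-(x * I)) * cont x s t =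
      (t : ℂ) ^ (s - 1) * (1 - (t : ℂ)) ^ (s - 1) * Complex.cos (x * (2 * t - 1))
      + I * ((t : ℂ) ^ (s - 1) * (1 - (t : ℂ)) ^ (s - 1) * Complex.sin (x * (2 * t - 1))) := by
    intro t
    have he : cexp (-(x * I)) * cexp (2 * x * t * I) = Complex.cos (x * (2 * t - 1))
        + Complex.sin (x * (2 * t - 1)) * I := by
      rw [← Complex.exp_add, ← Complex.exp_mul_I]; congr 1; ring
    rw [cont]
    linear_combination ((t : ℂ) ^ (s - 1) * (1 - (t : ℂ)) ^ (s - 1)) * he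
  simp only [this]
  rw [intervalIntegral.integral_add i1 i2, intervalIntegral.integral_const_mul, hodd]
  ring

/-- The Bessel function of the first kind as a combination of the two functions `bq (±1/(2x))`. -/
theorem besselJ_eq {x : ℝ} (hx : 0 < x) {s : ℂ} (h1 : -1 < s.re) (h2 : s.re < 2) :
    ((Real.sqrt (2 * Real.pi * x) : ℝ) : ℂ) * besselJ (s - 1 / 2) x =
      cexp (-(x * I)) * cexp (Real.pi * s / 2 * I) * bq (-(1 / (2 * x))) (1 - s)
        + cexp (x * I) * cexp (-(Real.pi * s / 2 * I)) * bq (1 / (2 * x)) (1 - s) := by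
  have hq (b : ℝ) : ∀ s : ℂ, -1 < s.re → s.re < 2 → DifferentiableAt ℂ (fun s => bq b (1 - s)) s :=
    fun s a c => DifferentiableAt.comp (f := fun s : ℂ => 1 - s) s
      (differentiableAt_bq b (by simp; linarith) (by simp; linarith)) (by fun_prop)
  refine eq_on_strip (E := ∅) (c := 1) (d := 2)
    (f := fun s => ((Real.sqrt (2 * Real.pi * x) : ℝ) : ℂ) * besselJ (s - 1 / 2) x)
    (g := fun s => cexp (-(x * I)) * cexp (Real.pi * s / 2 * I) * bq (-(1 / (2 * x))) (1 - s)
        + cexp (x * I) * cexp (-(Real.pi * s / 2 * I)) * bq (1 / (2 * x)) (1 - s)) (by simp)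
    (by norm_num) (by norm_num) le_rfl
    (fun s a _ _ => (differentiableAt_besselJ hx a).const_mul _)
    (fun s a c _ => ?_) (fun s a c _ => ?_) s h1 h2 (by simp)
  · have := hq (-(1 / (2 * x))) s a c
    have := hq (1 / (2 * x)) s a c
    fun_prop
  · have hP := poisson hx (s := s) (by linarith)
    rw [integral_cos_eq (by linarith), integral_cont hx a c] at hP
    have g1 : Gamma s ≠ 0 := Gamma_ne_zero_of_re_pos (by linarith)
    have hx0 : (x : ℂ) ≠ 0 := ofReal_ne_zero.2 hx.ne'
    have hsq : ((Real.sqrt (2 * Real.pi * x) : ℝ) : ℂ) = (2 : ℂ) ^ (1 / 2 : ℂ) *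
        (Real.sqrt Real.pi : ℝ) * (x : ℂ) ^ (1 / 2 : ℂ) := by
      rw [Real.sqrt_mul (by positivity), Real.sqrt_mul (by positivity), Real.sqrt_eq_rpow 2,
        Real.sqrt_eq_rpow x]
      push_cast
      rw [ofReal_cpow (by norm_num), ofReal_cpow hx.le]
      push_cast; rfl
    have p1 : ((x / 2 : ℝ) : ℂ) ^ (s - 1 / 2) = (x : ℂ) ^ s * ((x : ℂ) ^ (1 / 2 : ℂ))⁻¹ *
        (2 : ℂ) ^ (1 / 2 : ℂ) * ((2 : ℂ) ^ s)⁻¹ := by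
      rw [show ((x / 2 : ℝ) : ℂ) = ((x * 2⁻¹ : ℝ) : ℂ) by push_cast; ring, ofReal_mul x 2⁻¹,
        ofReal_mul_cpow hx (by norm_num), cpow_sub _ _ hx0, ofReal_inv,
        inv_cpow _ _ (by simp [Real.pi_ne_zero.symm]), ofReal_ofNat, cpow_sub _ _ two_ne_zero]
      field_simp
    have p2 : ((2 * x : ℝ) : ℂ) ^ (-s) = ((2 : ℂ) ^ s)⁻¹ * ((x : ℂ) ^ s)⁻¹ := by
      rw [ofReal_mul 2 x, ofReal_mul_cpow two_pos hx0, cpow_neg, cpow_neg, ofReal_ofNat]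
    have p3 : (2 : ℂ) ^ (1 - 2 * s) = 2 * ((2 : ℂ) ^ s)⁻¹ * ((2 : ℂ) ^ s)⁻¹ := by
      rw [cpow_sub _ _ two_ne_zero, cpow_one, two_mul s, cpow_add _ _ two_ne_zero]
      field_simp
    have hh : (2 : ℂ) ^ (1 / 2 : ℂ) * (2 : ℂ) ^ (1 / 2 : ℂ) = 2 := by
      rw [← cpow_add _ _ two_ne_zero]; norm_num
    have n2 : (2 : ℂ) ^ s ≠ 0 := by simp [cpow_eq_zero_iff]
    have n3 : (x : ℂ) ^ s ≠ 0 := by simp [cpow_eq_zero_iff, hx0]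
    have n4 : (x : ℂ) ^ (1 / 2 : ℂ) ≠ 0 := by simp [cpow_eq_zero_iff, hx0]
    have n5 : (2 : ℂ) ^ (1 / 2 : ℂ) ≠ 0 := by simp [cpow_eq_zero_iff]
    have ex : cexp (-(x * I)) * cexp (2 * x * I) = cexp (x * I) := by
      rw [← Complex.exp_add]; congr 1; ring
    rw [p1, p2, p3] at hP
    simp only [hsq]
    rw [← ex]
    generalize (2 : ℂ) ^ s = A at *
    generalize (x : ℂ) ^ s = X at *
    generalize (x : ℂ) ^ (1 / 2 : ℂ) = H at *
    generalize (2 : ℂ) ^ (1 / 2 : ℂ) = T at *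
    generalize besselJ (s - 1 / 2) x = J at *
    generalize bq (-(1 / (2 * x))) (1 - s) = q at *
    generalize bq (1 / (2 * x)) (1 - s) = q' at *
    generalize cexp (2 * x * I) = e1 at *
    generalize cexp (-(x * I)) = e2 at *
    generalize cexp (Real.pi * s / 2 * I) = e3 at *
    generalize cexp (-(Real.pi * s / 2 * I)) = e4 at *
    field_simp at hP
    linear_combination (T / 2) * hP + (e2 * (q * e3 + q' * e1 * e4) / 2) * hh

/-! ### The summand of the Bessel series as an integral -/

/-- The definition of `Y_{s-1/2}` combines `J_{s-1/2}` and `J_{1/2-s}`; by `bq_symm` both are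
combinations of the same two functions, and at `x = πn` the oscillating factors reduce to
`(-1)^n`. -/
theorem besselY_eq {s : ℂ} (h1 : -1 < s.re) (h2 : s.re < 2) (hc : Complex.cos (Real.pi * s) ≠ 0)
    (n : ℕ+) :
    ((Real.sqrt 2 * Real.pi * Real.sqrt (n : ℕ) : ℝ) : ℂ) *
        besselY (s - 1 / 2) (Real.pi * (n : ℕ)) =
      (-1) ^ (n : ℕ) * I * (cexp (Real.pi * s / 2 * I) * bq (-(1 / (2 * (Real.pi * (n : ℕ))))) s
        - cexp (-(Real.pi * s / 2 * I)) * bq (1 / (2 * (Real.pi * (n : ℕ)))) s) := by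
  have hx : 0 < Real.pi * (n : ℕ) := mul_pos Real.pi_pos (pnat_pos n)
  have j1 := besselJ_eq hx h1 h2
  have j2 := besselJ_eq hx (s := 1 - s) (by simp; linarith) (by simp; linarith)
  rw [sub_sub_cancel] at j2
  rw [← bq_symm _ h1 h2, ← bq_symm _ h1 h2] at j1
  have hsq : Real.sqrt (2 * Real.pi * (Real.pi * (n : ℕ)))
      = Real.sqrt 2 * Real.pi * Real.sqrt (n : ℕ) := by
    rw [show 2 * Real.pi * (Real.pi * (n : ℕ)) = 2 * (Real.pi * Real.pi) * (n : ℕ) by ring,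
      Real.sqrt_mul (by positivity), Real.sqrt_mul (by positivity),
      Real.sqrt_mul_self Real.pi_pos.le]
  rw [hsq] at j1 j2
  have hn1 : cexp (((Real.pi * (n : ℕ) : ℝ) : ℂ) * I) = (-1) ^ (n : ℕ) := by
    rw [← Complex.exp_pi_mul_I, ← Complex.exp_nat_mul]; congr 1; push_cast; ring
  have hn2 : cexp (-(((Real.pi * (n : ℕ) : ℝ) : ℂ) * I)) = (-1) ^ (n : ℕ) := by
    rw [Complex.exp_neg, hn1, ← inv_pow]; norm_num
  rw [hn1, hn2] at j1 j2
  have f1 : cexp (Real.pi * (1 - s) / 2 * I) = I * cexp (-(Real.pi * s / 2 * I)) := by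
    rw [show (Real.pi * (1 - s) / 2 * I : ℂ) = Real.pi / 2 * I + -(Real.pi * s / 2 * I) by ring,
      Complex.exp_add, Complex.exp_pi_div_two_mul_I]
  have f2 : cexp (-(Real.pi * (1 - s) / 2 * I)) = -I * cexp (Real.pi * s / 2 * I) := by
    rw [show (-(Real.pi * (1 - s) / 2 * I) : ℂ) = Real.pi * s / 2 * I - Real.pi / 2 * I by ring,
      Complex.exp_sub, Complex.exp_pi_div_two_mul_I, div_I]
    ring
  rw [f1, f2, show (1 - s - 1 / 2 : ℂ) = -(s - 1 / 2) by ring] at j2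
  have hcos : Complex.cos (Real.pi * (s - 1 / 2)) = Complex.sin (Real.pi * s) := by
    rw [show (Real.pi * (s - 1 / 2) : ℂ) = Real.pi * s - Real.pi / 2 by ring,
      Complex.cos_sub_pi_div_two]
  have hsin : Complex.sin (Real.pi * (s - 1 / 2)) = -Complex.cos (Real.pi * s) := by
    rw [show (Real.pi * (s - 1 / 2) : ℂ) = Real.pi * s - Real.pi / 2 by ring,
      Complex.sin_sub_pi_div_two]
  have hE : cexp (Real.pi * s / 2 * I) * cexp (-(Real.pi * s / 2 * I)) = 1 := by
    rw [← Complex.exp_add]; simp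
  have c2 : Complex.cos (Real.pi * s) = (cexp (Real.pi * s / 2 * I) ^ 2 +
      cexp (-(Real.pi * s / 2 * I)) ^ 2) / 2 := by
    rw [Complex.cos, ← Complex.exp_nat_mul, ← Complex.exp_nat_mul]; congr 3 <;> push_cast <;> ring
  have s2 : Complex.sin (Real.pi * s) = (cexp (-(Real.pi * s / 2 * I)) ^ 2 -
      cexp (Real.pi * s / 2 * I) ^ 2) * I / 2 := by
    rw [Complex.sin, ← Complex.exp_nat_mul, ← Complex.exp_nat_mul]; congr 4 <;> push_cast <;> ring
  rw [besselY, hcos, hsin, mul_div_assoc', div_eq_iff (neg_ne_zero.2 hc), mul_sub,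
    ← mul_assoc, j1, j2, c2, s2]
  generalize cexp (Real.pi * s / 2 * I) = e at *
  generalize cexp (-(Real.pi * s / 2 * I)) = e' at *
  generalize bq (-(1 / (2 * (Real.pi * (n : ℕ))))) s = q at *
  generalize bq (1 / (2 * (Real.pi * (n : ℕ)))) s = q' at *
  generalize ((-1 : ℂ) ^ (n : ℕ)) = ε at *
  linear_combination (I * ε * (e' * q - e * q')) * hE

/-- The integral `∫₀^∞ e^{-t} t^{-s} (e^{iπs/2} p(-at) - e^{-iπs/2} p(at)) dt`, with `p` the Taylor
remainder of `(1 + iτ)^{-s}`. -/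
def wInt (a : ℝ) (s : ℂ) : ℂ :=
  cexp (Real.pi * s / 2 * I) * qInt (-a) s - cexp (-(Real.pi * s / 2 * I)) * qInt a s

/-- The terms `1/√n` and `s(1-s)/(2πn^{3/2}) cot(πs/2)` cancel exactly the Taylor polynomial
contained in `bq`, leaving only the remainder integrals. -/
theorem bracket_eq {s : ℂ} (h1 : -1 < s.re) (h2 : s.re < 2) (hc : Complex.cos (Real.pi * s) ≠ 0)
    (hs : Complex.sin (Real.pi * s / 2) ≠ 0) (n : ℕ+) :
    1 / ((Real.sqrt n : ℝ) : ℂ)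
          + (Real.pi : ℂ) / ((Real.sqrt 2 : ℝ) : ℂ) *
              ((-1 : ℂ) ^ (n : ℕ) / Complex.sin ((Real.pi : ℂ) * s / 2)) *
              besselY (s - 1 / 2) (Real.pi * (n : ℕ))
          + s * (1 - s) / (2 * (Real.pi : ℂ) * ((n : ℕ) : ℂ) ^ ((3 : ℂ) / 2)) *
              (Complex.cos ((Real.pi : ℂ) * s / 2) / Complex.sin ((Real.pi : ℂ) * s / 2))
      = 1 / ((Real.sqrt n : ℝ) : ℂ) * (I / (2 * Complex.sin (Real.pi * s / 2)) *
          (Gamma (1 - s))⁻¹ * wInt (1 / (2 * (Real.pi * (n : ℕ)))) s) := by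
  have hY := besselY_eq h1 h2 hc n
  have hn0 : ((n : ℕ) : ℂ) ≠ 0 := pnat_ne_zero n
  have hpi : (Real.pi : ℂ) ≠ 0 := ofReal_ne_zero.2 Real.pi_ne_zero
  have hr : ((Real.sqrt (n : ℕ) : ℝ) : ℂ) ≠ 0 :=
    ofReal_ne_zero.2 (Real.sqrt_pos.2 (pnat_pos n)).ne'
  have ht : ((Real.sqrt 2 : ℝ) : ℂ) ≠ 0 := ofReal_ne_zero.2 (Real.sqrt_pos.2 two_pos).ne'
  have ht2 : ((Real.sqrt 2 : ℝ) : ℂ) * ((Real.sqrt 2 : ℝ) : ℂ) = 2 := by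
    rw [← ofReal_mul, Real.mul_self_sqrt (by norm_num)]; norm_num
  have hr3 : ((n : ℕ) : ℂ) ^ ((3 : ℂ) / 2) = (n : ℕ) * ((Real.sqrt (n : ℕ) : ℝ) : ℂ) := by
    rw [show (3 : ℂ) / 2 = 1 + 1 / 2 by norm_num, cpow_add _ _ hn0, cpow_one, Real.sqrt_eq_rpow,
      ofReal_cpow (pnat_pos n).le]
    push_cast; rfl
  have hε : ((-1 : ℂ) ^ (n : ℕ)) * (-1) ^ (n : ℕ) = 1 := by rw [← mul_pow]; norm_num
  have hsinE : 2 * Complex.sin (Real.pi * s / 2) =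
      (cexp (-(Real.pi * s / 2 * I)) - cexp (Real.pi * s / 2 * I)) * I := by
    rw [Complex.two_sin, neg_mul]
  have hcosE : 2 * Complex.cos (Real.pi * s / 2) =
      cexp (Real.pi * s / 2 * I) + cexp (-(Real.pi * s / 2 * I)) := by
    rw [Complex.two_cos, neg_mul]
  simp only [bq, ofReal_neg] at hY
  rw [hr3, wInt]
  have hYs : besselY (s - 1 / 2) (Real.pi * (n : ℕ)) = _ :=
    eq_div_of_mul_eq (by push_cast; exact mul_ne_zero (mul_ne_zero ht hpi) hr)
      ((mul_comm _ _).trans hY)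
  rw [hYs]
  push_cast
  generalize cexp (Real.pi * s / 2 * I) = e at *
  generalize cexp (-(Real.pi * s / 2 * I)) = e' at *
  generalize qInt (-(1 / (2 * (Real.pi * (n : ℕ))))) s = q at *
  generalize qInt (1 / (2 * (Real.pi * (n : ℕ)))) s = q' at *
  generalize ((-1 : ℂ) ^ (n : ℕ)) = ε at *
  generalize (Gamma (1 - s))⁻¹ = G at *
  generalize Complex.sin (Real.pi * s / 2) = S at *
  generalize Complex.cos (Real.pi * s / 2) = C at *
  generalize ((Real.sqrt 2 : ℝ) : ℂ) = T at *
  generalize ((Real.sqrt (n : ℕ) : ℝ) : ℂ) = r at *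
  field_simp
  rw [pow_two T, ht2, pow_two ε, hε]
  linear_combination 2 * Real.pi * (n : ℕ) * hsinE + s * (1 - s) * hcosE +
    s * (1 - s) * (e + e') * I_mul_I

/-- The substitution `t ↦ t/(2πm)`: up to powers, `g(l, m)` depends only on the product `l m`. -/
theorem gTerm_eq_wInt {s : ℂ} (h1 : -1 < s.re) (h2 : s.re < 2) (l m : ℕ+) :
    gTerm s (l, m) = ((l : ℕ) : ℂ) ^ (-s) * ((2 * Real.pi * (m : ℕ) : ℝ) : ℂ) ^ (s - 1) *
      wInt (1 / (2 * (Real.pi * (l * m : ℕ)))) s := by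
  have hc : 0 < 2 * Real.pi * (m : ℕ) := two_pi_mul_pos m
  have hc0 : ((2 * Real.pi * (m : ℕ) : ℝ) : ℂ) ≠ 0 := ofReal_ne_zero.2 hc.ne'
  set a : ℝ := 1 / (2 * (Real.pi * (l * m : ℕ))) with ha
  set c : ℝ := 2 * Real.pi * (m : ℕ) with hcdef
  have i1 := (integrableOn_qInt (-a) (by linarith : -2 ≤ s.re) (by linarith : s.re < 3)).const_mul
    (cexp (Real.pi * s / 2 * I))
  have i2 := (integrableOn_qInt a (by linarith : -2 ≤ s.re) (by linarith : s.re < 3)).const_mul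
    (cexp (-(Real.pi * s / 2 * I)))
  set g : ℝ → ℂ := fun t => cexp (Real.pi * s / 2 * I) *
      (cexp (-((1 : ℝ) * t)) * (t : ℂ) ^ (-s) * powTay s (-a * t)) -
      cexp (-(Real.pi * s / 2 * I)) *
      (cexp (-((1 : ℝ) * t)) * (t : ℂ) ^ (-s) * powTay s (a * t)) with hg
  have hw : wInt a s = ∫ t in Ioi (0 : ℝ), g t := by
    rw [hg, integral_sub i1 i2, integral_const_mul, integral_const_mul, wInt, qInt, qInt]
  have hsub := integral_comp_mul_left_Ioi g 0 hc
  rw [mul_zero, ← hw, real_smul] at hsub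
  have e : EqOn (fun t : ℝ => cexp (-(c * t)) * (t : ℂ) ^ (-s) *
      (((l : ℕ) : ℂ) ^ (-s) * twist s (powTay s) ((1 / (l : ℕ)) * t)))
      (fun t : ℝ => ((l : ℕ) : ℂ) ^ (-s) * (c : ℂ) ^ s * g (c * t)) (Ioi 0) := by
    intro t ht
    have ht : 0 < t := ht
    have hp : ((c * t : ℝ) : ℂ) ^ (-s) = (c : ℂ) ^ (-s) * (t : ℂ) ^ (-s) := by
      rw [ofReal_mul, ofReal_mul_cpow hc (ofReal_ne_zero.2 ht.ne')]
    have hcc : (c : ℂ) ^ s * (c : ℂ) ^ (-s) = 1 := by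
      rw [← cpow_add _ _ hc0, add_neg_cancel, cpow_zero]
    have hl : ((l : ℕ) : ℝ) ≠ 0 := (pnat_pos l).ne'
    have hm : ((m : ℕ) : ℝ) ≠ 0 := (pnat_pos m).ne'
    have hb : a * (c * t) = 1 / (l : ℕ) * t := by
      rw [ha, hcdef]; push_cast; field_simp
    simp only [hg, hp, neg_mul, hb, twist]
    push_cast
    simp only [one_mul]
    generalize (t : ℂ) ^ (-s) = T at *
    linear_combination (-cexp (-(c * t)) * T * ((l : ℕ) : ℂ) ^ (-s) *
      (cexp (Real.pi * s / 2 * I) * powTay s (-(1 / (l : ℕ) * t)) -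
        cexp (-(Real.pi * s / 2 * I)) * powTay s (1 / (l : ℕ) * t))) * hcc
  have : gTerm s (l, m) = _ := setIntegral_congr_fun measurableSet_Ioi e
  rw [this, integral_const_mul, hsub, cpow_sub _ _ hc0, cpow_one, ofReal_inv]
  ring

/-! ### Regrouping along hyperbolas and the constant factor -/

theorem cos_pi_mul_ne_zero {s : ℂ} (hs1 : -1 < s.re) (hs2 : s.re < 2)
    (h1 : s ≠ -1 / 2) (h3 : s ≠ 1 / 2) (h5 : s ≠ 3 / 2) : Complex.cos (Real.pi * s) ≠ 0 := by
  intro h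
  obtain ⟨k, hk⟩ := Complex.cos_eq_zero_iff.1 h
  have hpi : (Real.pi : ℂ) ≠ 0 := ofReal_ne_zero.2 Real.pi_ne_zero
  have hsk : s = (2 * k + 1) / 2 := by
    apply mul_left_cancel₀ hpi
    rw [hk]; ring
  have hre : s.re = (2 * k + 1) / 2 := by
    rw [hsk, show ((2 * k + 1) / 2 : ℂ) = (((2 * k + 1) / 2 : ℝ) : ℂ) by push_cast; ring, ofReal_re]
  rw [hre] at hs1 hs2
  have k1 : -2 < k := by exact_mod_cast (by linarith : (-2 : ℝ) < k)
  have k2 : k < 2 := by exact_mod_cast (by linarith : (k : ℝ) < 2)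
  interval_cases k
  · exact h1 (by rw [hsk]; norm_num)
  · exact h3 (by rw [hsk]; norm_num)
  · exact h5 (by rw [hsk]; norm_num)

theorem sin_half_ne_zero {s : ℂ} (hs1 : -1 < s.re) (hs2 : s.re < 2) (h2 : s ≠ 0) :
    Complex.sin (Real.pi * s / 2) ≠ 0 := by
  intro h
  obtain ⟨k, hk⟩ := Complex.sin_eq_zero_iff.1 h
  have hpi : (Real.pi : ℂ) ≠ 0 := ofReal_ne_zero.2 Real.pi_ne_zero
  have hsk : s = 2 * k := by
    apply mul_left_cancel₀ hpi
    linear_combination 2 * hk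
  have hre : s.re = 2 * k := by
    rw [hsk, show (2 * k : ℂ) = ((2 * k : ℝ) : ℂ) by push_cast; ring, ofReal_re]
  rw [hre] at hs1 hs2
  have k1 : -1 < k := by exact_mod_cast (by linarith : (-1 : ℝ) < k)
  have k2 : k < 1 := by exact_mod_cast (by linarith : (k : ℝ) < 1)
  obtain rfl : k = 0 := by omega
  exact h2 (by rw [hsk]; norm_num)

/-- Regrouping a sum over pairs `(l, m)` along the hyperbolas `l m = n`. -/
theorem hasSum_hyperbola {f : ℕ+ × ℕ+ → ℂ} {F : ℕ → ℕ → ℂ} (hF : ∀ l m : ℕ+, f (l, m) = F l m)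
    {a : ℂ} (h : HasSum f a) :
    HasSum (fun n : ℕ+ => ∑ p ∈ (n : ℕ).divisorsAntidiagonal, F p.1 p.2) a := by
  have h' := (sigmaAntidiagonalEquivProd.hasSum_iff (f := f)).2 h
  refine h'.sigma fun n => ?_
  rw [← Finset.sum_coe_sort]
  have := hasSum_fintype fun b : (n : ℕ).divisorsAntidiagonal =>
    (f ∘ sigmaAntidiagonalEquivProd) ⟨n, b⟩
  convert this using 1
  exact Finset.sum_congr rfl fun b _ => (hF (sigmaAntidiagonalEquivProd ⟨n, b⟩).1
    (sigmaAntidiagonalEquivProd ⟨n, b⟩).2).symm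

/-- `σ_{2s-1}(n) n^{-s}` as the Dirichlet convolution of `l^{-s}` and `m^{s-1}`. -/
theorem csigma_mul {s : ℂ} (n : ℕ+) :
    csigma (2 * s - 1) n / ((n : ℕ) : ℂ) ^ (s - 1 / 2) * (1 / ((Real.sqrt n : ℝ) : ℂ)) =
      ∑ p ∈ (n : ℕ).divisorsAntidiagonal, (p.1 : ℂ) ^ (-s) * (p.2 : ℂ) ^ (s - 1) := by
  have hn0 : ((n : ℕ) : ℂ) ≠ 0 := pnat_ne_zero n
  have hr : ((Real.sqrt (n : ℕ) : ℝ) : ℂ) = ((n : ℕ) : ℂ) ^ ((1 : ℂ) / 2) := by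
    rw [Real.sqrt_eq_rpow, ofReal_cpow (pnat_pos n).le]
    push_cast; rfl
  have hd : csigma (2 * s - 1) n =
      ∑ p ∈ (n : ℕ).divisorsAntidiagonal, (p.2 : ℂ) ^ (2 * s - 1) := by
    rw [Nat.sum_divisorsAntidiagonal' (f := fun _ j => (j : ℂ) ^ (2 * s - 1)), csigma]
  rw [hr, div_mul_div_comm, mul_one, ← cpow_add _ _ hn0, sub_add_cancel, hd, Finset.sum_div]
  refine Finset.sum_congr rfl fun p hp => ?_
  obtain ⟨hmul, -⟩ := Nat.mem_divisorsAntidiagonal.1 hp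
  have hp1 : (p.1 : ℂ) ≠ 0 := by
    rintro h; apply hn0; rw [← hmul]; push_cast; rw [h, zero_mul]
  have hp2 : (p.2 : ℂ) ≠ 0 := by
    rintro h; apply hn0; rw [← hmul]; push_cast; rw [h, mul_zero]
  rw [← hmul, Nat.cast_mul, natCast_mul_natCast_cpow, cpow_neg,
    show 2 * s - 1 = s + (s - 1) by ring, cpow_add _ _ hp2]
  have a1 : (p.1 : ℂ) ^ s ≠ 0 := by simp [cpow_eq_zero_iff, hp1]
  have a2 : (p.2 : ℂ) ^ s ≠ 0 := by simp [cpow_eq_zero_iff, hp2]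
  generalize (p.1 : ℂ) ^ s = A at *
  generalize (p.2 : ℂ) ^ s = B at *
  field_simp

/-- The constant factor, by the reflection formula for `Γ` and `sin πs = 2 sin(πs/2) cos(πs/2)`. -/
theorem const_eq {s : ℂ} (hs1 : -1 < s.re) (hs2 : s.re < 2) (h4 : s ≠ 1)
    (hs : Complex.sin (Real.pi * s / 2) ≠ 0) :
    (I / (2 * Complex.sin (Real.pi * s / 2)) * (Gamma (1 - s))⁻¹ *
      (((2 * Real.pi : ℝ) : ℂ) ^ (s - 1))⁻¹) * -I =
    2 * Gamma s * Complex.cos (Real.pi * s / 2) / ((2 * Real.pi : ℝ) : ℂ) ^ s := by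
  have hcs : Complex.cos (Real.pi * s / 2) ≠ 0 := by
    intro h
    obtain ⟨k, hk⟩ := Complex.cos_eq_zero_iff.1 h
    have hpi : (Real.pi : ℂ) ≠ 0 := ofReal_ne_zero.2 Real.pi_ne_zero
    have hsk : s = 2 * k + 1 := by
      apply mul_left_cancel₀ hpi
      linear_combination 2 * hk
    have hre : s.re = 2 * k + 1 := by
      rw [hsk, show (2 * k + 1 : ℂ) = ((2 * k + 1 : ℝ) : ℂ) by push_cast; ring, ofReal_re]
    rw [hre] at hs1 hs2
    have k1 : -1 < k := by exact_mod_cast (by linarith : (-1 : ℝ) < k)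
    have k2 : k < 1 := by exact_mod_cast (by linarith : (k : ℝ) < 1)
    obtain rfl : k = 0 := by omega
    exact h4 (by rw [hsk]; norm_num)
  have hG := Complex.Gamma_mul_Gamma_one_sub s
  have hpi : (Real.pi : ℂ) ≠ 0 := ofReal_ne_zero.2 Real.pi_ne_zero
  have h2pi : ((2 * Real.pi : ℝ) : ℂ) ≠ 0 := ofReal_ne_zero.2 (by positivity)
  rw [show (Real.pi : ℂ) * s = 2 * (Real.pi * s / 2) by ring, Complex.sin_two_mul] at hG
  have hG1 : Gamma (1 - s) ≠ 0 := by
    intro h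
    rw [h, mul_zero] at hG
    exact div_ne_zero hpi (mul_ne_zero (mul_ne_zero two_ne_zero hs) hcs) hG.symm
  have hp : ((2 * Real.pi : ℝ) : ℂ) ^ s ≠ 0 := by simp [cpow_eq_zero_iff]
  rw [cpow_sub _ _ h2pi, cpow_one]
  push_cast at hp ⊢
  generalize Complex.sin (Real.pi * s / 2) = S at *
  generalize Complex.cos (Real.pi * s / 2) = C at *
  generalize Gamma (1 - s) = G at *
  generalize Gamma s = G' at *
  generalize (2 * (Real.pi : ℂ)) ^ s = P at *
  field_simp at hG ⊢
  linear_combination -hG - Real.pi * I_mul_I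

theorem hasSum_terms {s : ℂ} (hs1 : -1 < s.re) (hs2 : s.re < 2)
    (h1 : s ≠ -1 / 2) (h2 : s ≠ 0) (h3 : s ≠ 1 / 2) (h4 : s ≠ 1) (h5 : s ≠ 3 / 2) :
    HasSum (fun n : ℕ+ =>
      csigma (2 * s - 1) n / ((n : ℕ) : ℂ) ^ (s - 1 / 2) *
        (1 / ((Real.sqrt n : ℝ) : ℂ)
          + (Real.pi : ℂ) / ((Real.sqrt 2 : ℝ) : ℂ) *
              ((-1 : ℂ) ^ (n : ℕ) / Complex.sin ((Real.pi : ℂ) * s / 2)) *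
              besselY (s - 1 / 2) (Real.pi * (n : ℕ))
          + s * (1 - s) / (2 * (Real.pi : ℂ) * ((n : ℕ) : ℂ) ^ ((3 : ℂ) / 2)) *
              (Complex.cos ((Real.pi : ℂ) * s / 2) / Complex.sin ((Real.pi : ℂ) * s / 2))))
      (2 * Gamma s * Complex.cos (Real.pi * s / 2) / ((2 * Real.pi : ℝ) : ℂ) ^ s * braces s) := by
  have hc := cos_pi_mul_ne_zero hs1 hs2 h1 h3 h5
  have hs := sin_half_ne_zero hs1 hs2 h2
  have hexc : s ∉ exc := by simp [exc, h1, h2, h4, show s ≠ 2⁻¹ by simpa using h3]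
  have hsum : HasSum (gTerm s) (-I * braces s) := by
    rw [← tsum_gTerm hs1 hs2 hexc]
    exact (summable_norm_gTerm hs1 hs2).of_norm.hasSum
  have hyp := (hasSum_hyperbola (F := fun l m => (l : ℂ) ^ (-s) *
    ((2 * Real.pi * m : ℝ) : ℂ) ^ (s - 1) * wInt (1 / (2 * (Real.pi * (l * m : ℕ)))) s)
    (fun l m => gTerm_eq_wInt hs1 hs2 l m) hsum).mul_left
    (I / (2 * Complex.sin (Real.pi * s / 2)) * (Gamma (1 - s))⁻¹ *
      (((2 * Real.pi : ℝ) : ℂ) ^ (s - 1))⁻¹)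
  rw [← mul_assoc, const_eq hs1 hs2 h4 hs] at hyp
  refine (congrArg (HasSum · _) (funext fun n => ?_)).mpr hyp
  rw [bracket_eq hs1 hs2 hc hs n, ← mul_assoc, csigma_mul, Finset.sum_mul, Finset.mul_sum]
  refine Finset.sum_congr rfl fun p hp => ?_
  obtain ⟨hmul, -⟩ := Nat.mem_divisorsAntidiagonal.1 hp
  have hP : ((2 * Real.pi : ℝ) : ℂ) ^ (s - 1) ≠ 0 := by
    rw [Ne, cpow_eq_zero_iff]
    exact fun h => Real.two_pi_pos.ne' (ofReal_eq_zero.1 h.1)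
  have hsplit : ((2 * Real.pi * p.2 : ℝ) : ℂ) ^ (s - 1) =
      ((2 * Real.pi : ℝ) : ℂ) ^ (s - 1) * (p.2 : ℂ) ^ (s - 1) := by
    rw [ofReal_mul, mul_cpow_ofReal_nonneg Real.two_pi_pos.le (Nat.cast_nonneg _), ofReal_natCast]
  rw [hsplit, hmul]
  linear_combination (-(I / (2 * Complex.sin (Real.pi * s / 2)) * (Gamma (1 - s))⁻¹ *
    (p.1 : ℂ) ^ (-s) * (p.2 : ℂ) ^ (s - 1) * wInt (1 / (2 * (Real.pi * (n : ℕ)))) s)) *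
    inv_mul_cancel₀ hP

end AtkinsonAux

theorem bessel_series_identity_atkinson_type (s : ℂ) (hs1 : -1 < s.re) (hs2 : s.re < 2)
    (h1 : s ≠ -1 / 2) (h2 : s ≠ 0) (h3 : s ≠ 1 / 2) (h4 : s ≠ 1) (h5 : s ≠ 3 / 2) :
    Summable (fun n : ℕ+ =>
      csigma (2 * s - 1) n / ((n : ℕ) : ℂ) ^ (s - 1 / 2) *
        (1 / ((Real.sqrt n : ℝ) : ℂ)
          + (Real.pi : ℂ) / ((Real.sqrt 2 : ℝ) : ℂ) *
              ((-1 : ℂ) ^ (n : ℕ) / Complex.sin ((Real.pi : ℂ) * s / 2)) *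
              besselY (s - 1 / 2) (Real.pi * (n : ℕ))
          + s * (1 - s) / (2 * (Real.pi : ℂ) * ((n : ℕ) : ℂ) ^ ((3 : ℂ) / 2)) *
              (Complex.cos ((Real.pi : ℂ) * s / 2) / Complex.sin ((Real.pi : ℂ) * s / 2)))) ∧
    ∑' n : ℕ+,
        csigma (2 * s - 1) n / ((n : ℕ) : ℂ) ^ (s - 1 / 2) *
          (1 / ((Real.sqrt n : ℝ) : ℂ)
            + (Real.pi : ℂ) / ((Real.sqrt 2 : ℝ) : ℂ) *
                ((-1 : ℂ) ^ (n : ℕ) / Complex.sin ((Real.pi : ℂ) * s / 2)) *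
                besselY (s - 1 / 2) (Real.pi * (n : ℕ))
            + s * (1 - s) / (2 * (Real.pi : ℂ) * ((n : ℕ) : ℂ) ^ ((3 : ℂ) / 2)) *
                (Complex.cos ((Real.pi : ℂ) * s / 2) / Complex.sin ((Real.pi : ℂ) * s / 2)))
      = 2 * Complex.Gamma s * Complex.cos ((Real.pi : ℂ) * s / 2) / ((2 * Real.pi : ℝ) : ℂ) ^ s *
          ((1 / 2) * riemannZeta s ^ 2 + (1 / 2) * riemannZeta (2 * s)
            - s * riemannZeta (s - 1) * riemannZeta (s + 1)
            + Complex.Gamma (1 - s) * Complex.Gamma (2 * s - 1) * riemannZeta (2 * s - 1) /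
                Complex.Gamma s) := by
  have h := AtkinsonAux.hasSum_terms hs1 hs2 h1 h2 h3 h4 h5
  exact ⟨h.summable, h.tsum_eq⟩
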